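/- arXiv:1812.01671 — 2 statements merged into one kernel-verified Lean document; each statement's English description precedes it below -/
import Mathlib

section
/- There exist absolute constants c > 0 and C such that for every finite set A ⊆ R and each choice of sign ε ∈ {+1, −1}: #{(a,b,d,a',b',d') ∈ A⁶ : a·(b + ε·d) = a'·(b' + ε·d')} ≤ C·|A|^(9/2 − c), and #{(a,b,d,a',b',d') ∈ A⁶ : a·b + ε·d = a'·b' + ε·d'} ≤ C·|A|^(9/2 − c). -/
/-!
Both expressions are values `g • b` of an affine map `g` of slope `a`: in `a b + ε d` the intercept
of `g` is `ε d`, in `a (b + ε d)` its root is `-ε d`. So the energies count the solutions of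
`g • b = g' • b'` with `b, b' ∈ A` and `g, g'` in a family `L` of at most `|A|²` lines. Write
`|A| = n²`, so that the claim is a saving of a small power `K` of `n` over `n⁹`.

The Szemerédi–Trotter bound for grids, as a bound on the third moment of the richness of lines, is
all the incidence geometry needed. It gives the exponent `n⁹` up to logarithms. If the energy were
at least `n⁹ / K`, then up to powers of `K` there would be a set `X` of at most `n³` popular points
and a subset `L'` of `L` whose lines are `n²`-rich in `A × X`, and by Cauchy–Schwarz and
Szemerédi–Trotter the multiplicative energy of `L'` in the affine group would be at least `n¹¹`.

Each quotient counted by that energy is weighted by the incidences `g • b ∈ X`, about `n²` for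
each `g ∈ L'`. Regrouping the weighted count according to `h = g' g⁻¹` bounds it by the sum over
`h` of `r(h)`, the number of `g ∈ L` with `h g ∈ L`, times the number of incidences of these lines
with `A × (X ∩ h⁻¹X)`. By Szemerédi–Trotter the incidence count is negligible unless `h` is very
rich in `X × X`, which few `h` are, or `r(h)` is close to `n⁴`, so that `h` nearly preserves `L`.
The product structure of `L` in slopes and intercepts (or roots) allows only about `n²` such `h`
and bounds the second moment of `r` by `n¹¹`; together these contradict the lower bound. The
exponents of `K` below are not optimised.
-/

noncomputable section

open Finset
open scoped Classical Pointwise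

section RepCount

variable {ι κ : Type*} (s : Finset ι) (f : ι → κ)

/-- The representation function `r_f(k)` of `f` on `s`: the number of `x ∈ s` with `f x = k`. -/
def repCount (k : κ) : ℕ := #{x ∈ s | f x = k}

/-- The energy of `f` on `s`: the number of ordered collisions `f x = f y`. -/
def energy : ℕ := #{p ∈ s ×ˢ s | f p.1 = f p.2}

variable {s f} in
lemma repCount_le_card_of_injOn {τ : Type*} {t : Finset τ} {k : κ} (g : ι → τ)
    (maps : ∀ x ∈ s, f x = k → g x ∈ t)
    (inj : ∀ x ∈ s, f x = k → ∀ y ∈ s, f y = k → g x = g y → x = y) : repCount s f k ≤ #t := by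
  refine card_le_card_of_injOn g (fun x hx ↦ ?_) (fun x hx y hy ↦ ?_)
  · exact maps x (mem_filter.1 hx).1 (mem_filter.1 hx).2
  · exact inj x (mem_filter.1 hx).1 (mem_filter.1 hx).2 y (mem_filter.1 hy).1 (mem_filter.1 hy).2

lemma sum_image_repCount_mul (w : κ → ℝ) :
    ∑ k ∈ s.image f, repCount s f k * w k = ∑ x ∈ s, w (f x) := by
  simp only [sum_comp w f, nsmul_eq_mul, repCount]

lemma sum_repCount_mul_le {w : κ → ℝ} (hw : ∀ k, 0 ≤ w k) (t : Finset κ) :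
    ∑ k ∈ t, repCount s f k * w k ≤ ∑ x ∈ s, w (f x) := by
  have fiber_sum (k : κ) : ∑ x ∈ s with f x = k, w (f x) = repCount s f k * w k := by
    rw [sum_congr rfl (fun x hx ↦ by rw [(mem_filter.1 hx).2]), sum_const, nsmul_eq_mul, repCount]
  simp only [← fiber_sum]
  exact sum_fiberwise_le_sum_of_sum_fiber_nonneg fun k _ ↦ sum_nonneg fun x _ ↦ hw _

lemma sum_repCount_le_card (t : Finset κ) : ∑ k ∈ t, (repCount s f k : ℝ) ≤ #s := by
  simpa using sum_repCount_mul_le s f (w := 1) (fun _ ↦ zero_le_one) t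

lemma energy_eq_sum_repCount : energy s f = ∑ x ∈ s, repCount s f (f x) := by
  simp only [energy, repCount, card_filter, sum_product, eq_comm]

lemma energy_eq_sum_repCount_sq : (energy s f : ℝ) = ∑ k ∈ s.image f, (repCount s f k : ℝ) ^ 2 := by
  simp only [energy_eq_sum_repCount, Nat.cast_sum, sq, sum_image_repCount_mul]

lemma sum_repCount_sq_le_energy (t : Finset κ) :
    ∑ k ∈ t, (repCount s f k : ℝ) ^ 2 ≤ energy s f := by
  simpa only [energy_eq_sum_repCount, Nat.cast_sum, sq] using
    sum_repCount_mul_le s f (fun k ↦ Nat.cast_nonneg (repCount s f k)) t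

variable {s f} in
lemma energy_le_card_mul {q : ℕ} (h : ∀ k, repCount s f k ≤ q) : energy s f ≤ #s * q :=
  (energy_eq_sum_repCount s f).trans_le <| sum_le_card_nsmul _ _ _ fun _ _ ↦ h _

variable {s f} in
lemma card_sq_le_card_mul_energy {t : Finset κ} (hf : ∀ x ∈ s, f x ∈ t) :
    #s ^ 2 ≤ #t * energy s f := by
  have : (#s : ℝ) ^ 2 ≤ #t * energy s f := by
    rw [card_eq_sum_card_fiberwise hf, Nat.cast_sum]
    exact sq_sum_le_card_mul_sum_sq.trans
      (mul_le_mul_of_nonneg_left (sum_repCount_sq_le_energy s f t) (Nat.cast_nonneg _))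
  exact_mod_cast this

/-- The ordered collisions `f x = f y` with `x ≠ y`. -/
def offDiagCollisions : Finset (ι × ι) := {p ∈ s.offDiag | f p.1 = f p.2}

variable {s f} in
lemma mem_offDiagCollisions {p : ι × ι} :
    p ∈ offDiagCollisions s f ↔ (p.1 ∈ s ∧ p.2 ∈ s ∧ p.1 ≠ p.2) ∧ f p.1 = f p.2 := by
  rw [offDiagCollisions, mem_filter, mem_offDiag]

lemma energy_eq_card_add_card_offDiagCollisions :
    energy s f = #s + #(offDiagCollisions s f) := by
  have hdiag : {p ∈ s.diag | f p.1 = f p.2} = s.diag :=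
    filter_true_of_mem fun p hp ↦ by rw [(mem_diag.1 hp).2]
  rw [energy, ← diag_union_offDiag, filter_union,
    card_union_of_disjoint (disjoint_filter_filter (disjoint_diag_offDiag s)), hdiag, diag_card,
    offDiagCollisions]

variable {s f} in
lemma card_le_card_offDiagCollisions {t : Finset κ} (hf : ∀ x ∈ s, f x ∈ t) (ht : 2 * #t ≤ #s) :
    #s ≤ #(offDiagCollisions s f) := by
  have hcs := card_sq_le_card_mul_energy hf
  rw [energy_eq_card_add_card_offDiagCollisions] at hcs
  rcases (#s).eq_zero_or_pos with h0 | hpos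
  · omega
  · nlinarith

end RepCount

section LayerCake

lemma pow_three_le_sum_Icc (m : ℕ) : (m : ℝ) ^ 3 ≤ ∑ t ∈ Icc 1 m, 3 * (t : ℝ) ^ 2 := by
  induction m with
  | zero => simp
  | succ k ih =>
    rw [sum_Icc_succ_top (by omega)]
    push_cast
    nlinarith [k.cast_nonneg (α := ℝ)]

lemma sum_pow_three_le_of_card_mul_pow_three_le {ι : Type*} {s : Finset ι} {f : ι → ℕ} {n : ℕ}
    {M : ℝ} (hf : ∀ i ∈ s, f i ≤ n)
    (hM : ∀ t : ℕ, 1 ≤ t → (#{i ∈ s | t ≤ f i} : ℝ) * (t : ℝ) ^ 3 ≤ M) :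
    ∑ i ∈ s, (f i : ℝ) ^ 3 ≤ 3 * M * (1 + Real.log n) := by
  have hM0 : 0 ≤ M := le_trans (by positivity) (hM 1 le_rfl)
  have layers (i) (hi : i ∈ s) : (f i : ℝ) ^ 3 ≤ ∑ t ∈ Icc 1 n with t ≤ f i, 3 * (t : ℝ) ^ 2 := by
    have : {t ∈ Icc 1 n | t ≤ f i} = Icc 1 (f i) := by
      ext t
      have := hf i hi
      simp only [mem_filter, mem_Icc]
      omega
    rw [this]
    exact pow_three_le_sum_Icc _
  have layer_le (t) (ht : t ∈ Icc 1 n) :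
      (#{i ∈ s | t ≤ f i} : ℝ) * (3 * (t : ℝ) ^ 2) ≤ 3 * M * (t : ℝ)⁻¹ := by
    have ht1 : 1 ≤ t := (mem_Icc.1 ht).1
    rw [← div_eq_mul_inv, le_div_iff₀ (by exact_mod_cast ht1)]
    linarith [hM t ht1]
  calc ∑ i ∈ s, (f i : ℝ) ^ 3
      ≤ ∑ i ∈ s, ∑ t ∈ Icc 1 n with t ≤ f i, 3 * (t : ℝ) ^ 2 := sum_le_sum layers
    _ = ∑ t ∈ Icc 1 n, (#{i ∈ s | t ≤ f i} : ℝ) * (3 * (t : ℝ) ^ 2) := by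
        simp only [sum_filter, sum_comm (s := s), ← nsmul_eq_mul, ← sum_const]
    _ ≤ ∑ t ∈ Icc 1 n, 3 * M * (t : ℝ)⁻¹ := sum_le_sum layer_le
    _ = 3 * M * (harmonic n : ℚ) := by
        rw [← mul_sum, harmonic_eq_sum_Icc]
        push_cast
        rfl
    _ ≤ 3 * M * (1 + Real.log n) := by gcongr; exact harmonic_le_one_add_log n

lemma log_natCast_le_log {m : ℕ} {x : ℝ} (hx : 1 ≤ x) (hm : (m : ℝ) ≤ x) :
    Real.log m ≤ Real.log x := by
  rcases m.eq_zero_or_pos with rfl | hpos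
  · simpa using Real.log_nonneg hx
  · exact Real.log_le_log (by exact_mod_cast hpos) hm

end LayerCake

section Rich

variable {G Ω : Type*}

/-- The points of `U` that `g` maps into `V`. For an affine map of the line these are the abscissas
of the points of the grid `U × V` on the graph of `g`. -/
def richSet [SMul G Ω] (U V : Finset Ω) (g : G) : Finset Ω := {u ∈ U | g • u ∈ V}

/-- The richness of the graph of `g` in the grid `U × V`. -/
def rich [SMul G Ω] (U V : Finset Ω) (g : G) : ℕ := #(richSet U V g)

lemma mem_richSet [SMul G Ω] {U V : Finset Ω} {g : G} {u : Ω} :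
    u ∈ richSet U V g ↔ u ∈ U ∧ g • u ∈ V :=
  mem_filter

lemma rich_le_card_left [SMul G Ω] (U V : Finset Ω) (g : G) : rich U V g ≤ #U :=
  card_filter_le _ _

lemma rich_le_card_right [Group G] [MulAction G Ω] (U V : Finset Ω) (g : G) : rich U V g ≤ #V :=
  card_le_card_of_injOn (g • ·) (fun _ hu ↦ (mem_richSet.1 hu).2) (MulAction.injective g).injOn

/-- The conclusion of the Szemerédi–Trotter theorem as a third-moment bound, up to the factor `K`,
for grids whose first side has at most `N` elements. -/
def CubicRichnessBound (G Ω : Type*) [SMul G Ω] (N K : ℝ) : Prop :=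
  ∀ U V : Finset Ω, (#U : ℝ) ≤ N → ∀ H : Finset G,
    ∑ h ∈ H with 2 ≤ rich U V h, (rich U V h : ℝ) ^ 3 ≤ K * (#U : ℝ) ^ 2 * (#V : ℝ) ^ 2

end Rich

section RankBlock

variable {Ω : Type*} [LinearOrder Ω] (U : Finset Ω)

/-- The index of `u` when `U` is cut, in increasing order, into blocks of `q` elements. -/
def rankBlock (q : ℕ) (u : Ω) : ℕ := #{x ∈ U | x < u} / q

lemma monotone_rankBlock (q : ℕ) : Monotone (rankBlock U q) := fun _ _ huv ↦
  Nat.div_le_div_right <| card_le_card <| monotone_filter_right _ fun _ _ hx ↦ hx.trans_le huv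

lemma strictMonoOn_card_filter_lt : StrictMonoOn (fun u ↦ #{x ∈ U | x < u}) U := by
  intro u hu v _ huv
  refine card_lt_card ((ssubset_iff_of_subset ?_).2 ⟨u, ?_, ?_⟩)
  · exact monotone_filter_right _ fun _ _ hx ↦ hx.trans huv
  · exact mem_filter.2 ⟨hu, huv⟩
  · simp

variable {U} in
lemma rankBlock_lt {r : ℕ} (hr : 1 ≤ r) {u : Ω} (hu : u ∈ U) :
    rankBlock U (#U / r + 1) u < r := by
  have rank_lt : #{x ∈ U | x < u} < #U := card_lt_card (filter_ssubset.2 ⟨u, hu, lt_irrefl u⟩)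
  exact (Nat.div_lt_iff_lt_mul (Nat.succ_pos _)).2 (rank_lt.trans (Nat.lt_mul_div_succ _ hr))

lemma repCount_rankBlock_le {q : ℕ} (hq : 0 < q) (j : ℕ) : repCount U (rankBlock U q) j ≤ q := by
  have : repCount U (rankBlock U q) j ≤ #(Ico (j * q) (j * q + q)) := by
    refine repCount_le_card_of_injOn (fun u ↦ #{x ∈ U | x < u}) (fun u _ hj ↦ ?_)
      fun u hu _ v hv _ huv ↦ (strictMonoOn_card_filter_lt U).injOn hu hv huv
    have := (Nat.div_eq_iff hq).1 hj
    rw [mem_Ico]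
    omega
  simpa using this

lemma energy_rankBlock_le {q : ℕ} (hq : 0 < q) : energy U (rankBlock U q) ≤ #U * q :=
  energy_le_card_mul (repCount_rankBlock_le U hq)

end RankBlock

section Staircase

variable {Ω : Type*} [LinearOrder Ω] {S : Finset Ω} {φ χ : Ω → ℕ} {r : ℕ}

lemma card_image_prodMk_le_of_monotoneOn (hφ : ∀ u ∈ S, φ u < r) (hχ : ∀ u ∈ S, χ u < r)
    (mφ : MonotoneOn φ S) (mχ : MonotoneOn χ S) :
    #(S.image fun u ↦ (φ u, χ u)) ≤ 2 * r - 1 := by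
  rw [← card_range (2 * r - 1)]
  refine card_le_card_of_injOn (fun p ↦ p.1 + p.2) ?_ ?_
  · simp only [Set.MapsTo, mem_coe, forall_mem_image, mem_range]
    intro u hu
    have := hφ u hu
    have := hχ u hu
    omega
  · simp only [Set.InjOn, mem_coe, forall_mem_image, Prod.mk.injEq]
    intro u hu v hv huv
    rcases le_total u v with h | h
    · have := mφ hu hv h
      have := mχ hu hv h
      omega
    · have := mφ hv hu h
      have := mχ hv hu h
      omega

lemma card_image_prodMk_le (hφ : ∀ u ∈ S, φ u < r) (hχ : ∀ u ∈ S, χ u < r)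
    (mφ : MonotoneOn φ S) (mχ : MonotoneOn χ S ∨ AntitoneOn χ S) :
    #(S.image fun u ↦ (φ u, χ u)) ≤ 2 * r - 1 := by
  rcases mχ with mono | anti
  · exact card_image_prodMk_le_of_monotoneOn hφ hχ mφ mono
  have reflect : S.image (fun u ↦ (φ u, χ u)) =
      (S.image fun u ↦ (φ u, r - 1 - χ u)).image fun p ↦ (p.1, r - 1 - p.2) := by
    rw [image_image]
    refine image_congr fun u hu ↦ Prod.ext rfl ?_
    have := hχ u hu
    simp only [Function.comp_apply]
    omega
  rw [reflect]
  refine card_image_le.trans (card_image_prodMk_le_of_monotoneOn hφ (fun u hu ↦ ?_) mφ ?_)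
  · have := hχ u hu
    omega
  · exact fun u hu v hv huv ↦ Nat.sub_le_sub_left (anti hu hv huv) _

end Staircase

section SzemerediTrotter

lemma card_mul_le_energy_mul_energy {G Ω κ₁ κ₂ : Type*} [SMul G Ω]
    (determined : ∀ ⦃g h : G⦄ ⦃x y : Ω⦄, x ≠ y → g • x = h • x → g • y = h • y → g = h)
    {U V : Finset Ω} {φ : Ω → κ₁} {ψ : Ω → κ₂} {H : Finset G} {t : ℕ}
    (ht : ∀ h ∈ H, t ≤ #(offDiagCollisions (richSet U V h) fun u ↦ (φ u, ψ (h • u)))) :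
    #H * t ≤ energy U φ * energy V ψ := by
  set T : G → Finset (Ω × Ω) := fun h ↦
    offDiagCollisions (richSet U V h) fun u ↦ (φ u, ψ (h • u))
  have mem_T {h p} (hp : p ∈ T h) : (p.1 ∈ U ∧ h • p.1 ∈ V) ∧ (p.2 ∈ U ∧ h • p.2 ∈ V) ∧ p.1 ≠ p.2 ∧
      φ p.1 = φ p.2 ∧ ψ (h • p.1) = ψ (h • p.2) := by
    simpa only [T, mem_offDiagCollisions, mem_richSet, Prod.mk.injEq, and_assoc] using hp
  calc #H * t ≤ ∑ h ∈ H, #(T h) := card_nsmul_le_sum _ _ _ ht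
    _ = #(H.sigma T) := (card_sigma _ _).symm
    _ ≤ #({p ∈ U ×ˢ U | φ p.1 = φ p.2} ×ˢ {p ∈ V ×ˢ V | ψ p.1 = ψ p.2}) := by
        refine card_le_card_of_injOn (fun x ↦ (x.2, x.1 • x.2.1, x.1 • x.2.2)) ?_ ?_
        · rintro ⟨h, p⟩ hx
          have := mem_T (mem_sigma.1 hx).2
          simp only [coe_product, coe_filter, mem_product, Set.mem_prod, Set.mem_ofPred_eq]
          tauto
        · rintro ⟨h, p⟩ hx ⟨h', p'⟩ _ heq
          simp only [Prod.mk.injEq] at heq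
          obtain ⟨rfl, h₁, h₂⟩ := heq
          rw [determined (mem_T (mem_sigma.1 hx).2).2.2.1 h₁ h₂]
    _ = energy U φ * energy V ψ := card_product _ _

variable {G Ω : Type*} [Group G] [LinearOrder Ω] [MulAction G Ω] {U V : Finset Ω} {t : ℕ}
  (hmono : ∀ g : G, Monotone (g • · : Ω → Ω) ∨ Antitone (g • · : Ω → Ω))

include hmono in
-- A monotone graph meets only `2r - 1` of the `r²` cells cut out by the blocks.
lemma le_card_offDiagCollisions_rankBlock {r : ℕ} (hr : 1 ≤ r) (hrt : 4 * r ≤ t + 2) {h : G}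
    (hh : t ≤ rich U V h) :
    t ≤ #(offDiagCollisions (richSet U V h) fun u ↦
      (rankBlock U (#U / r + 1) u, rankBlock V (#V / r + 1) (h • u))) := by
  have staircase : #((richSet U V h).image fun u ↦
      (rankBlock U (#U / r + 1) u, rankBlock V (#V / r + 1) (h • u))) ≤ 2 * r - 1 :=
    card_image_prodMk_le (fun u hu ↦ rankBlock_lt hr (mem_richSet.1 hu).1)
      (fun u hu ↦ rankBlock_lt hr (mem_richSet.1 hu).2) ((monotone_rankBlock U _).monotoneOn _)
      ((hmono h).imp (fun m ↦ ((monotone_rankBlock V _).comp m).monotoneOn _)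
        (fun m ↦ ((monotone_rankBlock V _).comp_antitone m).antitoneOn _))
  refine hh.trans (card_le_card_offDiagCollisions (fun u hu ↦ mem_image_of_mem _ hu) ?_)
  have : t ≤ #(richSet U V h) := hh
  omega

lemma cast_div_add_one_le {m r : ℕ} (hr : 1 ≤ r) (hrm : r ≤ m) :
    ((m / r + 1 : ℕ) : ℝ) ≤ 2 * m / r := by
  have hr0 : (0 : ℝ) < r := by exact_mod_cast hr
  have one_le : (1 : ℝ) ≤ m / r := by rw [one_le_div hr0]; exact_mod_cast hrm
  have := Nat.cast_div_le (α := ℝ) (m := m) (n := r)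
  push_cast
  rw [mul_div_assoc]
  linarith

variable (determined : ∀ ⦃g h : G⦄ ⦃x y : Ω⦄, x ≠ y → g • x = h • x → g • y = h • y → g = h)

include hmono determined in
lemma card_rich_mul_pow_three_le (H : Finset G) (ht : 2 ≤ t) :
    (#{h ∈ H | t ≤ rich U V h} : ℝ) * (t : ℝ) ^ 3 ≤ 256 * (#U : ℝ) ^ 2 * (#V : ℝ) ^ 2 := by
  rcases {h ∈ H | t ≤ rich U V h}.eq_empty_or_nonempty with hempty | ⟨h₀, hh₀⟩
  · rw [hempty, card_empty, Nat.cast_zero, zero_mul]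
    positivity
  have rich_h₀ : t ≤ rich U V h₀ := (mem_filter.1 hh₀).2
  set r := (t + 2) / 4 with hr
  have hr0 : (0 : ℝ) < r := by exact_mod_cast (show 0 < r by omega)
  have blocks_U : ((#U / r + 1 : ℕ) : ℝ) ≤ 2 * #U / r :=
    cast_div_add_one_le (by omega) (by have := rich_h₀.trans (rich_le_card_left _ _ _); omega)
  have blocks_V : ((#V / r + 1 : ℕ) : ℝ) ≤ 2 * #V / r :=
    cast_div_add_one_le (by omega) (by have := rich_h₀.trans (rich_le_card_right _ _ _); omega)
  have count : #{h ∈ H | t ≤ rich U V h} * t ≤ (#U * (#U / r + 1)) * (#V * (#V / r + 1)) :=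
    (card_mul_le_energy_mul_energy determined fun h hh ↦
      le_card_offDiagCollisions_rankBlock hmono (by omega) (by omega) (mem_filter.1 hh).2).trans
      (Nat.mul_le_mul (energy_rankBlock_le U (Nat.succ_pos _))
        (energy_rankBlock_le V (Nat.succ_pos _)))
  have ht8 : (t : ℝ) ≤ 8 * r := by exact_mod_cast (show t ≤ 8 * r by omega)
  calc (#{h ∈ H | t ≤ rich U V h} : ℝ) * (t : ℝ) ^ 3
      = (#{h ∈ H | t ≤ rich U V h} * t : ℕ) * (t : ℝ) ^ 2 := by push_cast; ring
    _ ≤ ((#U * (#U / r + 1)) * (#V * (#V / r + 1)) : ℕ) * (t : ℝ) ^ 2 := by gcongr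
    _ = (#U * (#U / r + 1 : ℕ)) * (#V * (#V / r + 1 : ℕ)) * (t : ℝ) ^ 2 := by push_cast; ring
    _ ≤ (#U * (2 * #U / r)) * (#V * (2 * #V / r)) * (8 * r) ^ 2 := by gcongr
    _ = 256 * (#U : ℝ) ^ 2 * (#V : ℝ) ^ 2 := by field_simp; ring

include hmono determined in
lemma sum_rich_pow_three_le (U V : Finset Ω) (H : Finset G) :
    ∑ h ∈ H with 2 ≤ rich U V h, (rich U V h : ℝ) ^ 3 ≤
      768 * (1 + Real.log #U) * (#U : ℝ) ^ 2 * (#V : ℝ) ^ 2 := by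
  refine (sum_pow_three_le_of_card_mul_pow_three_le (M := 256 * (#U : ℝ) ^ 2 * (#V : ℝ) ^ 2)
    (fun h _ ↦ rich_le_card_left U V h) fun t _ ↦ ?_).trans_eq (by ring)
  have weak := card_rich_mul_pow_three_le hmono determined (U := U) (V := V) H (le_max_left 2 t)
  simp only [filter_filter, ← max_le_iff]
  refine le_trans ?_ weak
  gcongr
  exact le_max_right 2 t

include hmono determined in
theorem cubicRichnessBound_of_monotone_or_antitone {N K : ℝ} (hN : 1 ≤ N)
    (hK : 768 * (1 + Real.log N) ≤ K) : CubicRichnessBound G Ω N K := by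
  intro U V hU H
  have hlog : Real.log #U ≤ Real.log N := log_natCast_le_log hN hU
  refine (sum_rich_pow_three_le hmono determined U V H).trans ?_
  gcongr
  linarith

end SzemerediTrotter

section Sums

variable {ι : Type*} {s : Finset ι}

lemma sum_mul_le_sum_filter_mul_add {w f : ι → ℝ} {t : ℝ} (hw : ∀ i ∈ s, 0 ≤ w i) (ht : 0 ≤ t) :
    ∑ i ∈ s, w i * f i ≤ ∑ i ∈ s with t ≤ f i, w i * f i + t * ∑ i ∈ s, w i := by
  rw [sum_filter, mul_sum, ← sum_add_distrib]
  refine sum_le_sum fun i hi ↦ ?_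
  have := hw i hi
  split_ifs with h
  · nlinarith
  · nlinarith

lemma pow_three_sum_le {f : ι → ℝ} (hf : ∀ i ∈ s, 0 ≤ f i) :
    (∑ i ∈ s, f i) ^ 3 ≤ (#s : ℝ) ^ 2 * ∑ i ∈ s, f i ^ 3 := by
  rcases s.eq_empty_or_nonempty with rfl | hs
  · simp
  · rw [← div_le_iff₀' (by have := hs.card_pos; positivity)]
    exact pow_sum_div_card_le_sum_pow hf 2

lemma sq_sum_sq_le_sum_mul_sum_pow_three {f : ι → ℝ} (hf : ∀ i ∈ s, 0 ≤ f i) :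
    (∑ i ∈ s, f i ^ 2) ^ 2 ≤ (∑ i ∈ s, f i) * ∑ i ∈ s, f i ^ 3 :=
  sum_sq_le_sum_mul_sum_of_sq_le_mul s hf (fun i hi ↦ pow_nonneg (hf i hi) 3) fun _ _ ↦
    le_of_eq (by ring)

lemma energy_le_sum_filter_repCount_sq_add {κ : Type*} (s : Finset ι) (f : ι → κ) {t : ℝ}
    (ht : 0 ≤ t) :
    (energy s f : ℝ) ≤
      ∑ k ∈ s.image f with t ≤ repCount s f k, (repCount s f k : ℝ) ^ 2 + t * #s := by
  have truncate := sum_mul_le_sum_filter_mul_add (s := s.image f) (f := fun k ↦ repCount s f k)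
    (fun k _ ↦ (repCount s f k).cast_nonneg) ht
  have mass := mul_le_mul_of_nonneg_left (sum_repCount_le_card s f (s.image f)) ht
  simp only [energy_eq_sum_repCount_sq, sq]
  linarith

end Sums

section Action

variable {G Ω : Type*} [Group G] [MulAction G Ω] {N K : ℝ}

/-- The action as a map on pairs, so that `energy (L ×ˢ B) act` counts solutions of
`g • b = g' • b'`. -/
def act (p : G × Ω) : Ω := p.1 • p.2

/-- The map `(g, g') ↦ g⁻¹ g'`, whose energy is the multiplicative energy of a subset of `G`. -/
def leftQuot (p : G × G) : G := p.1⁻¹ * p.2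

lemma sum_rich_eq_sum_repCount_act (L : Finset G) (B X : Finset Ω) :
    ∑ g ∈ L, rich B X g = ∑ x ∈ X, repCount (L ×ˢ B) act x := by
  calc ∑ g ∈ L, rich B X g = ∑ p ∈ L ×ˢ B, if act p ∈ X then 1 else 0 := by
        simp only [rich, richSet, card_filter, sum_product (s := L), act]
        rfl
    _ = ∑ p ∈ L ×ˢ B, ∑ x ∈ X, if act p = x then 1 else 0 := by simp only [sum_ite_eq]
    _ = ∑ x ∈ X, repCount (L ×ˢ B) act x := by
        rw [sum_comm]
        simp only [repCount, card_filter]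

lemma repCount_act_le_card (L : Finset G) (B : Finset Ω) (x : Ω) :
    repCount (L ×ˢ B) act x ≤ #L := by
  refine repCount_le_card_of_injOn Prod.fst (fun p hp _ ↦ (mem_product.1 hp).1) ?_
  rintro ⟨g, u⟩ - hu ⟨g', u'⟩ - hu' (rfl : g = g')
  obtain rfl : u = u' := MulAction.injective g (hu.trans hu'.symm)
  rfl

lemma sq_sum_rich_le_card_mul_energy (L : Finset G) (B X : Finset Ω) :
    (∑ g ∈ L, (rich B X g : ℝ)) ^ 2 ≤ #X * energy (L ×ˢ B) act := by
  have swap : ∑ g ∈ L, (rich B X g : ℝ) = ∑ x ∈ X, (repCount (L ×ˢ B) act x : ℝ) := by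
    exact_mod_cast sum_rich_eq_sum_repCount_act L B X
  rw [swap]
  exact sq_sum_le_card_mul_sum_sq.trans (by gcongr; exact sum_repCount_sq_le_energy _ _ _)

lemma energy_act_le_sum_rich_leftQuot (L : Finset G) (B : Finset Ω) :
    energy (L ×ˢ B) act ≤ ∑ p ∈ L ×ˢ L, rich B B (leftQuot p) := by
  simp only [energy, rich]
  rw [← card_sigma]
  refine card_le_card_of_injOn (fun q ↦ (⟨(q.1.1, q.2.1), q.2.2⟩ : (_ : G × G) × Ω)) ?_ ?_
  · rintro ⟨⟨g, b⟩, g', b'⟩ hq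
    simp only [mem_coe, mem_filter, mem_product, mem_sigma, mem_richSet] at hq ⊢
    obtain ⟨⟨⟨hg, hb⟩, hg', hb'⟩, heq⟩ := hq
    have : leftQuot (g, g') • b' = b := by
      rw [leftQuot, mul_smul, inv_smul_eq_iff]
      exact heq.symm
    exact ⟨⟨hg, hg'⟩, hb', this.symm ▸ hb⟩
  · rintro ⟨⟨g, b⟩, g', b'⟩ hq ⟨⟨g₁, b₁⟩, g₁', b₁'⟩ hq₁ heq
    simp only [Sigma.mk.injEq, Prod.mk.injEq, heq_eq_eq] at heq
    obtain ⟨⟨rfl, rfl⟩, rfl⟩ := heq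
    obtain rfl : b = b₁ :=
      MulAction.injective g ((mem_filter.1 hq).2.trans (mem_filter.1 hq₁).2.symm)
    rfl

lemma sum_rich_self_le_card_sq (Q : Finset G) (S : Finset G) :
    ∑ q ∈ Q, (rich S S q : ℝ) ≤ (#S : ℝ) ^ 2 := by
  have : ∑ q ∈ Q, rich S S q ≤ #(S ×ˢ S) := by
    simp only [rich]
    rw [← card_sigma]
    refine card_le_card_of_injOn (fun x ↦ (x.2, x.1 * x.2)) (fun x hx ↦ ?_) ?_
    · exact mem_product.2 (mem_richSet.1 (mem_sigma.1 hx).2)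
    · rintro ⟨q, s⟩ _ ⟨q', s'⟩ _ heq
      obtain ⟨rfl, h⟩ := Prod.mk.inj heq
      obtain rfl := mul_right_cancel h
      rfl
  rw [sq]
  exact_mod_cast this.trans_eq (card_product S S)

lemma sum_rich_self_sq_le_energy_leftQuot (H L : Finset G) :
    ∑ h ∈ H, (rich L L h : ℝ) ^ 2 ≤ energy (L ×ˢ L) leftQuot := by
  have : ∑ h ∈ H, #(richSet L L h ×ˢ richSet L L h) ≤ energy (L ×ˢ L) leftQuot := by
    rw [← card_sigma, energy]
    refine card_le_card_of_injOn
      (fun x ↦ ((x.2.1, x.2.2), (x.1 * x.2.1, x.1 * x.2.2))) (fun x hx ↦ ?_) ?_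
    · simp only [coe_sigma, Set.mem_sigma_iff, mem_coe, mem_product, mem_richSet,
        smul_eq_mul] at hx
      obtain ⟨-, ⟨h₁, h₂⟩, h₃, h₄⟩ := hx
      refine mem_filter.2 ⟨mem_product.2 ⟨mk_mem_product h₁ h₃, mk_mem_product h₂ h₄⟩, ?_⟩
      simp only [leftQuot]
      group
    · rintro ⟨h, g, g'⟩ _ ⟨h', g₁, g₁'⟩ _ heq
      simp only [Prod.mk.injEq] at heq
      obtain ⟨⟨rfl, rfl⟩, hh, -⟩ := heq
      obtain rfl := mul_right_cancel hh
      rfl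
  simp only [card_product, ← sq] at this
  exact_mod_cast this

lemma sum_pow_three_rich_le_of_two_le (hST : CubicRichnessBound G Ω N K) {U V : Finset Ω}
    (hU : (#U : ℝ) ≤ N) {H : Finset G} (hH : ∀ h ∈ H, 2 ≤ rich U V h) :
    ∑ h ∈ H, (rich U V h : ℝ) ^ 3 ≤ K * (#U : ℝ) ^ 2 * (#V : ℝ) ^ 2 := by
  simpa only [filter_true_of_mem hH] using hST U V hU H

lemma pow_three_sum_rich_le (hST : CubicRichnessBound G Ω N K) {U : Finset Ω} (hU : (#U : ℝ) ≤ N)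
    (R : Finset G) (V : Finset Ω) :
    (∑ g ∈ R, (rich U V g : ℝ)) ^ 3 ≤
      4 * ((#R : ℝ) ^ 3 + K * (#R : ℝ) ^ 2 * (#U : ℝ) ^ 2 * (#V : ℝ) ^ 2) := by
  have split : ∑ g ∈ R, (rich U V g : ℝ) ≤ #R + ∑ g ∈ R with 2 ≤ rich U V g, (rich U V g : ℝ) := by
    rw [card_eq_sum_ones, sum_filter, Nat.cast_sum, ← sum_add_distrib]
    refine sum_le_sum fun g _ ↦ ?_
    split_ifs with h
    · simp
    · simpa using (show rich U V g ≤ 1 by omega)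
  have rich_part : (∑ g ∈ R with 2 ≤ rich U V g, (rich U V g : ℝ)) ^ 3 ≤
      (#R : ℝ) ^ 2 * (K * (#U : ℝ) ^ 2 * (#V : ℝ) ^ 2) := by
    refine (pow_three_sum_le fun _ _ ↦ by positivity).trans ?_
    gcongr
    · exact filter_subset _ _
    · exact hST U V hU R
  calc (∑ g ∈ R, (rich U V g : ℝ)) ^ 3
      ≤ (#R + ∑ g ∈ R with 2 ≤ rich U V g, (rich U V g : ℝ)) ^ 3 := by gcongr
    _ ≤ 2 ^ (3 - 1) * ((#R : ℝ) ^ 3 + (∑ g ∈ R with 2 ≤ rich U V g, (rich U V g : ℝ)) ^ 3) :=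
        add_pow_le (by positivity) (by positivity) 3
    _ ≤ 4 * ((#R : ℝ) ^ 3 + (#R : ℝ) ^ 2 * (K * (#U : ℝ) ^ 2 * (#V : ℝ) ^ 2)) := by
        norm_num
        exact rich_part
    _ = _ := by ring

lemma card_mul_pow_three_le_of_le_repCount_act (hST : CubicRichnessBound G Ω N K) (hK : 0 ≤ K)
    {L : Finset G} {B X : Finset Ω} (hB : (#B : ℝ) ≤ N) {t : ℝ} (ht : 0 ≤ t)
    (hX : ∀ x ∈ X, t ≤ repCount (L ×ˢ B) act x) :
    #X * t ^ 3 ≤ 4 * ((#L : ℝ) ^ 3 + K * (#L : ℝ) ^ 2 * (#B : ℝ) ^ 2) := by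
  rcases X.eq_empty_or_nonempty with rfl | hne
  · rw [card_empty, Nat.cast_zero, zero_mul]
    positivity
  have hX1 : (1 : ℝ) ≤ #X := by exact_mod_cast hne.card_pos
  have incidences : #X * t ≤ ∑ g ∈ L, (rich B X g : ℝ) := by
    have swap : ∑ g ∈ L, (rich B X g : ℝ) = ∑ x ∈ X, (repCount (L ×ˢ B) act x : ℝ) := by
      exact_mod_cast sum_rich_eq_sum_repCount_act L B X
    rw [swap, ← nsmul_eq_mul]
    exact card_nsmul_le_sum _ _ _ hX
  refine le_of_mul_le_mul_left ?_ (show (0 : ℝ) < (#X : ℝ) ^ 2 by positivity)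
  calc (#X : ℝ) ^ 2 * (#X * t ^ 3) = (#X * t) ^ 3 := by ring
    _ ≤ (∑ g ∈ L, (rich B X g : ℝ)) ^ 3 := by gcongr
    _ ≤ 4 * ((#L : ℝ) ^ 3 + K * (#L : ℝ) ^ 2 * (#B : ℝ) ^ 2 * (#X : ℝ) ^ 2) :=
        pow_three_sum_rich_le hST hB L X
    _ ≤ 4 * ((#X : ℝ) ^ 2 * (#L : ℝ) ^ 3 +
          K * (#L : ℝ) ^ 2 * (#B : ℝ) ^ 2 * (#X : ℝ) ^ 2) := by
        gcongr
        exact le_mul_of_one_le_left (by positivity) (one_le_pow₀ hX1)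
    _ = _ := by ring

lemma sum_repCount_act_pow_three_le (hST : CubicRichnessBound G Ω N K) (hK : 0 ≤ K)
    (L : Finset G) {B : Finset Ω} (hB : (#B : ℝ) ≤ N) (X : Finset Ω) :
    ∑ x ∈ X, (repCount (L ×ˢ B) act x : ℝ) ^ 3 ≤
      3 * (4 * ((#L : ℝ) ^ 3 + K * (#L : ℝ) ^ 2 * (#B : ℝ) ^ 2)) * (1 + Real.log #L) :=
  sum_pow_three_le_of_card_mul_pow_three_le (fun x _ ↦ repCount_act_le_card L B x) fun _ _ ↦
    card_mul_pow_three_le_of_le_repCount_act hST hK hB (Nat.cast_nonneg _) fun _ hx ↦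
      Nat.cast_le.2 (mem_filter.1 hx).2

lemma energy_act_le_sum_filter_add (L : Finset G) (B : Finset Ω) {t : ℝ} (ht : 0 ≤ t) :
    (energy (L ×ˢ B) act : ℝ) ≤
      ∑ w ∈ (L ×ˢ L).image leftQuot with t ≤ rich B B w,
        (repCount (L ×ˢ L) leftQuot w * rich B B w : ℝ) + t * (#L : ℝ) ^ 2 := by
  calc (energy (L ×ˢ B) act : ℝ) ≤ ∑ p ∈ L ×ˢ L, (rich B B (leftQuot p) : ℝ) := by
        exact_mod_cast energy_act_le_sum_rich_leftQuot L B
    _ = ∑ w ∈ (L ×ˢ L).image leftQuot, (repCount (L ×ˢ L) leftQuot w * rich B B w : ℝ) :=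
        (sum_image_repCount_mul _ _ fun w ↦ (rich B B w : ℝ)).symm
    _ ≤ _ + t * ∑ w ∈ (L ×ˢ L).image leftQuot, (repCount (L ×ˢ L) leftQuot w : ℝ) :=
        sum_mul_le_sum_filter_mul_add (fun _ _ ↦ Nat.cast_nonneg _) ht
    _ ≤ _ := by
        gcongr
        refine (sum_repCount_le_card _ _ _).trans_eq ?_
        rw [card_product]
        push_cast
        ring

lemma pow_three_energy_act_le (hST : CubicRichnessBound G Ω N K) {L : Finset G} {B : Finset Ω}
    (hB : (#B : ℝ) ≤ N) (hE : 4 * (#L : ℝ) ^ 2 ≤ energy (L ×ˢ B) act) :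
    (energy (L ×ˢ B) act : ℝ) ^ 3 ≤
      8 * K * (#B : ℝ) ^ 4 * (#L : ℝ) ^ 2 * energy (L ×ˢ L) leftQuot := by
  rcases L.eq_empty_or_nonempty with rfl | hne
  · simp [energy]
  have hL : (0 : ℝ) < #L := by exact_mod_cast hne.card_pos
  set E : ℝ := (energy (L ×ˢ B) act : ℝ)
  set t : ℝ := E / (2 * (#L : ℝ) ^ 2) with ht_def
  have ht : 2 ≤ t := by
    rw [ht_def, le_div_iff₀ (mul_pos two_pos (pow_pos hL 2))]
    linarith
  set W := {w ∈ (L ×ˢ L).image leftQuot | t ≤ rich B B w}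
  have half : E / 2 ≤ ∑ w ∈ W, (repCount (L ×ˢ L) leftQuot w * rich B B w : ℝ) := by
    have truncate := energy_act_le_sum_filter_add L B (show 0 ≤ t by linarith)
    have : t * (#L : ℝ) ^ 2 = E / 2 := by rw [ht_def]; field_simp
    linarith
  have rich_sq : t * ∑ w ∈ W, (rich B B w : ℝ) ^ 2 ≤ K * (#B : ℝ) ^ 2 * (#B : ℝ) ^ 2 := by
    refine le_trans ?_ (sum_pow_three_rich_le_of_two_le hST hB (H := W) fun w hw ↦ ?_)
    · rw [mul_sum]
      refine sum_le_sum fun w hw ↦ ?_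
      rw [pow_succ' _ 2]
      gcongr
      exact (mem_filter.1 hw).2
    · exact_mod_cast ht.trans (mem_filter.1 hw).2
  calc E ^ 3 = 8 * (#L : ℝ) ^ 2 * (t * (E / 2) ^ 2) := by rw [ht_def]; field_simp; ring
    _ ≤ 8 * (#L : ℝ) ^ 2 * (t * ((∑ w ∈ W, (repCount (L ×ˢ L) leftQuot w : ℝ) ^ 2) *
          ∑ w ∈ W, (rich B B w : ℝ) ^ 2)) := by
        gcongr
        exact (pow_le_pow_left₀ (by positivity) half 2).trans (sum_mul_sq_le_sq_mul_sq W _ _)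
    _ = 8 * (#L : ℝ) ^ 2 * (∑ w ∈ W, (repCount (L ×ˢ L) leftQuot w : ℝ) ^ 2) *
          (t * ∑ w ∈ W, (rich B B w : ℝ) ^ 2) := by ring
    _ ≤ 8 * (#L : ℝ) ^ 2 * energy (L ×ˢ L) leftQuot * (K * (#B : ℝ) ^ 2 * (#B : ℝ) ^ 2) := by
        gcongr
        exact sum_repCount_sq_le_energy _ _ _
    _ = _ := by ring

end Action

section Popularity

variable {G Ω : Type*} [Group G] [MulAction G Ω] {n K : ℝ} {L : Finset G} {B : Finset Ω}

lemma incidence_bound_le {l b : ℝ} (hl : 0 ≤ l) (hb : 0 ≤ b) (hK : 1 ≤ K) (hln : l ≤ n ^ 4)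
    (hbn : b ≤ n ^ 2) : 4 * (l ^ 3 + K * l ^ 2 * b ^ 2) ≤ 8 * K * n ^ 12 := by
  calc 4 * (l ^ 3 + K * l ^ 2 * b ^ 2)
      ≤ 4 * ((n ^ 4) ^ 3 + K * (n ^ 4) ^ 2 * (n ^ 2) ^ 2) := by gcongr
    _ = 4 * (1 + K) * (n ^ 6) ^ 2 := by ring
    _ ≤ 4 * (2 * K) * (n ^ 6) ^ 2 := by gcongr; linarith
    _ = 8 * K * n ^ 12 := by ring

lemma card_popular_points_le (hST : CubicRichnessBound G Ω (n ^ 4) K) (hn : 1 ≤ n) (hK : 2 ≤ K)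
    (hL : (#L : ℝ) ≤ n ^ 4) (hB : (#B : ℝ) ≤ n ^ 2) {X : Finset Ω}
    (hX : ∀ x ∈ X, n ^ 3 / (2 * K) ≤ repCount (L ×ˢ B) act x) : (#X : ℝ) ≤ K ^ 10 * n ^ 3 := by
  have hBN : (#B : ℝ) ≤ n ^ 4 := hB.trans (pow_le_pow_right₀ hn (by norm_num))
  have popular : #X * (n ^ 3 / (2 * K)) ^ 3 ≤ 8 * K * n ^ 12 :=
    (card_mul_pow_three_le_of_le_repCount_act hST (by linarith) hBN (by positivity) hX).trans
      (incidence_bound_le (Nat.cast_nonneg _) (Nat.cast_nonneg _) (by linarith) hL hB)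
  calc (#X : ℝ) = #X * (n ^ 3 / (2 * K)) ^ 3 * (8 * K ^ 3 / n ^ 9) := by field_simp; norm_num
    _ ≤ 8 * K * n ^ 12 * (8 * K ^ 3 / n ^ 9) := by gcongr
    _ = 2 ^ 6 * K ^ 4 * n ^ 3 := by field_simp; norm_num
    _ ≤ K ^ 6 * K ^ 4 * n ^ 3 := by gcongr
    _ = K ^ 10 * n ^ 3 := by ring

lemma sum_repCount_act_pow_three_le_of_card_le (hST : CubicRichnessBound G Ω (n ^ 4) K)
    (hn : 1 ≤ n) (hK : 1 ≤ K) (hlog : 3 * (1 + Real.log (n ^ 4)) ≤ K) (hL : (#L : ℝ) ≤ n ^ 4)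
    (hB : (#B : ℝ) ≤ n ^ 2) (X : Finset Ω) :
    ∑ x ∈ X, (repCount (L ×ˢ B) act x : ℝ) ^ 3 ≤ 8 * K ^ 2 * n ^ 12 := by
  have hlogL := log_natCast_le_log (one_le_pow₀ hn) hL
  calc ∑ x ∈ X, (repCount (L ×ˢ B) act x : ℝ) ^ 3
      ≤ 3 * (4 * ((#L : ℝ) ^ 3 + K * (#L : ℝ) ^ 2 * (#B : ℝ) ^ 2)) * (1 + Real.log #L) :=
        sum_repCount_act_pow_three_le hST (by linarith) L
          (hB.trans (pow_le_pow_right₀ hn (by norm_num))) X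
    _ = 4 * ((#L : ℝ) ^ 3 + K * (#L : ℝ) ^ 2 * (#B : ℝ) ^ 2) * (3 * (1 + Real.log #L)) := by ring
    _ ≤ 8 * K * n ^ 12 * K := by
        have : 0 ≤ Real.log #L := Real.log_natCast_nonneg _
        exact mul_le_mul
          (incidence_bound_le (Nat.cast_nonneg _) (Nat.cast_nonneg _) hK hL hB)
          (by linarith) (by positivity) (by positivity)
    _ = 8 * K ^ 2 * n ^ 12 := by ring

lemma exists_popular_points (hST : CubicRichnessBound G Ω (n ^ 4) K) (hn : 1 ≤ n) (hK : 2 ≤ K)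
    (hlog : 3 * (1 + Real.log (n ^ 4)) ≤ K) (hL : (#L : ℝ) ≤ n ^ 4) (hB : (#B : ℝ) ≤ n ^ 2)
    (hE : n ^ 9 / K ≤ energy (L ×ˢ B) act) :
    ∃ X : Finset Ω, (#X : ℝ) ≤ K ^ 10 * n ^ 3 ∧ n ^ 6 / K ^ 9 ≤ ∑ g ∈ L, (rich B X g : ℝ) := by
  set r : Ω → ℝ := fun x ↦ repCount (L ×ˢ B) act x
  set X := {x ∈ (L ×ˢ B).image act | n ^ 3 / (2 * K) ≤ r x}
  refine ⟨X, card_popular_points_le hST hn hK hL hB fun x hx ↦ (mem_filter.1 hx).2, ?_⟩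
  have squares : n ^ 9 / (2 * K) ≤ ∑ x ∈ X, r x ^ 2 := by
    have truncate := energy_le_sum_filter_repCount_sq_add (L ×ˢ B) (act (G := G))
      (show 0 ≤ n ^ 3 / (2 * K) by positivity)
    have mass : n ^ 3 / (2 * K) * #(L ×ˢ B) ≤ n ^ 9 / (2 * K) := by
      calc n ^ 3 / (2 * K) * #(L ×ˢ B) ≤ n ^ 3 / (2 * K) * (n ^ 4 * n ^ 2) := by
            rw [card_product, Nat.cast_mul]
            gcongr
        _ = n ^ 9 / (2 * K) := by ring
    have : n ^ 9 / K = n ^ 9 / (2 * K) + n ^ 9 / (2 * K) := by field_simp; norm_num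
    linarith
  have swap : ∑ g ∈ L, (rich B X g : ℝ) = ∑ x ∈ X, r x := by
    simp only [r]
    exact_mod_cast sum_rich_eq_sum_repCount_act L B X
  rw [swap]
  refine le_of_mul_le_mul_right ?_ (show 0 < 8 * K ^ 2 * n ^ 12 by positivity)
  calc n ^ 6 / K ^ 9 * (8 * K ^ 2 * n ^ 12) = 2 ^ 5 / K ^ 5 * (n ^ 9 / (2 * K)) ^ 2 := by
        field_simp; norm_num
    _ ≤ 1 * (n ^ 9 / (2 * K)) ^ 2 := by
        gcongr
        rw [div_le_one (by positivity)]
        gcongr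
    _ ≤ (∑ x ∈ X, r x ^ 2) ^ 2 := by rw [one_mul]; gcongr
    _ ≤ (∑ x ∈ X, r x) * ∑ x ∈ X, r x ^ 3 :=
        sq_sum_sq_le_sum_mul_sum_pow_three fun _ _ ↦ Nat.cast_nonneg _
    _ ≤ (∑ x ∈ X, r x) * (8 * K ^ 2 * n ^ 12) := by
        gcongr
        exact sum_repCount_act_pow_three_le_of_card_le hST hn (by linarith) hlog hL hB X

lemma le_energy_leftQuot_of_le_energy_act (hST : CubicRichnessBound G Ω (n ^ 4) K) (hn : 1 ≤ n)
    (hK : 2 ≤ K) (hKn : 4 * K ^ 30 ≤ n) (hL : (#L : ℝ) ≤ n ^ 4) (hB : (#B : ℝ) ≤ n ^ 2)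
    (hE : n ^ 9 / K ^ 30 ≤ energy (L ×ˢ B) act) :
    n ^ 11 / K ^ 94 ≤ energy (L ×ˢ L) leftQuot := by
  have large : 4 * (#L : ℝ) ^ 2 ≤ energy (L ×ˢ B) act := by
    calc 4 * (#L : ℝ) ^ 2 ≤ 4 * (n ^ 4) ^ 2 := by gcongr
      _ = 4 * K ^ 30 * n ^ 8 / K ^ 30 := by field_simp
      _ ≤ n * n ^ 8 / K ^ 30 := by gcongr
      _ = n ^ 9 / K ^ 30 := by ring
      _ ≤ _ := hE
  refine le_of_mul_le_mul_left ?_ (show 0 < 8 * K * n ^ 16 by positivity)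
  calc 8 * K * n ^ 16 * (n ^ 11 / K ^ 94) = 2 ^ 3 / K ^ 3 * (n ^ 9 / K ^ 30) ^ 3 := by
        field_simp; norm_num
    _ ≤ 1 * (n ^ 9 / K ^ 30) ^ 3 := by
        gcongr
        rw [div_le_one (by positivity)]
        gcongr
    _ ≤ (energy (L ×ˢ B) act : ℝ) ^ 3 := by rw [one_mul]; gcongr
    _ ≤ 8 * K * (#B : ℝ) ^ 4 * (#L : ℝ) ^ 2 * energy (L ×ˢ L) leftQuot :=
        pow_three_energy_act_le hST (hB.trans (pow_le_pow_right₀ hn (by norm_num))) large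
    _ ≤ 8 * K * (n ^ 2) ^ 4 * (n ^ 4) ^ 2 * energy (L ×ˢ L) leftQuot := by gcongr
    _ = _ := by ring

lemma exists_popular_points_and_lines (hST : CubicRichnessBound G Ω (n ^ 4) K) (hK : 2 ≤ K)
    (hKn : 4 * K ^ 30 ≤ n) (hlog : 3 * (1 + Real.log (n ^ 4)) ≤ K) (hL : (#L : ℝ) ≤ n ^ 4)
    (hB : (#B : ℝ) ≤ n ^ 2) (hE : n ^ 9 / K ≤ energy (L ×ˢ B) act) :
    ∃ X : Finset Ω, ∃ L' ⊆ L, (#X : ℝ) ≤ K ^ 10 * n ^ 3 ∧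
      (∀ g ∈ L', n ^ 2 / K ^ 10 ≤ rich B X g) ∧ n ^ 11 / K ^ 94 ≤ energy (L' ×ˢ L') leftQuot := by
  have hn : 1 ≤ n := by nlinarith [one_le_pow₀ (n := 30) (show 1 ≤ K by linarith)]
  obtain ⟨X, hX, hLX⟩ := exists_popular_points hST hn hK hlog hL hB hE
  set L' := {g ∈ L | n ^ 2 / K ^ 10 ≤ rich B X g}
  have hL'L : L' ⊆ L := filter_subset _ _
  have hL' : (#L' : ℝ) ≤ n ^ 4 := (Nat.cast_le.2 (card_le_card hL'L)).trans hL
  refine ⟨X, L', hL'L, hX, fun g hg ↦ (mem_filter.1 hg).2, ?_⟩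
  have incidences : n ^ 6 / K ^ 10 ≤ ∑ g ∈ L', (rich B X g : ℝ) := by
    have truncate := sum_mul_le_sum_filter_mul_add (s := L) (w := 1) (f := fun g ↦ (rich B X g : ℝ))
      (fun _ _ ↦ zero_le_one) (show 0 ≤ n ^ 2 / K ^ 10 by positivity)
    have poor : n ^ 2 / K ^ 10 * #L ≤ n ^ 6 / K ^ 10 := by
      calc n ^ 2 / K ^ 10 * #L ≤ n ^ 2 / K ^ 10 * n ^ 4 := by gcongr
        _ = n ^ 6 / K ^ 10 := by ring
    have : 2 * (n ^ 6 / K ^ 10) ≤ n ^ 6 / K ^ 9 := by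
      calc 2 * (n ^ 6 / K ^ 10) ≤ K * (n ^ 6 / K ^ 10) := by gcongr
        _ = n ^ 6 / K ^ 9 := by field_simp
    simp only [Pi.one_apply, one_mul, sum_const, nsmul_eq_mul, mul_one] at truncate
    linarith
  have energy_act_ge : n ^ 9 / K ^ 30 ≤ energy (L' ×ˢ B) act := by
    refine le_of_mul_le_mul_left ?_ (show 0 < K ^ 10 * n ^ 3 by positivity)
    calc K ^ 10 * n ^ 3 * (n ^ 9 / K ^ 30) = (n ^ 6 / K ^ 10) ^ 2 := by field_simp
      _ ≤ (∑ g ∈ L', (rich B X g : ℝ)) ^ 2 := by gcongr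
      _ ≤ #X * energy (L' ×ˢ B) act := sq_sum_rich_le_card_mul_energy L' B X
      _ ≤ _ := by gcongr
  exact le_energy_leftQuot_of_le_energy_act hST hn hK hKn hL' hB energy_act_ge

end Popularity

section PopularEnergy

variable {G Ω : Type*} [Group G] [MulAction G Ω] {L L' : Finset G} {B X : Finset Ω}

lemma sum_energy_filter_smul_mem_le (hL' : L' ⊆ L) :
    ∑ b ∈ B, energy {p ∈ L' ×ˢ L' | p.1 • b ∈ X} leftQuot ≤
      ∑ h ∈ L / L, rich L L h * ∑ g ∈ richSet L L h, rich B (richSet X X h) g := by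
  have count : ∑ h ∈ L / L, rich L L h * ∑ g ∈ richSet L L h, rich B (richSet X X h) g =
      #((L / L).sigma fun h ↦
        richSet L L h ×ˢ (richSet L L h).sigma fun g ↦ richSet B (richSet X X h) g) := by
    simp only [rich, card_sigma, card_product]
  rw [count]
  simp only [energy, ← card_sigma]
  refine card_le_card_of_injOn
    (fun q ↦ ⟨q.2.2.1 * q.2.1.1⁻¹, q.2.1.2, q.2.1.1, q.1⟩) ?_ ?_
  · rintro ⟨b, ⟨g₁, g₂⟩, g₃, g₄⟩ hq
    simp only [coe_sigma, Set.mem_sigma_iff, mem_coe, mem_filter, mem_product, leftQuot] at hq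
    obtain ⟨hb, ⟨⟨⟨h₁, h₂⟩, hx₁⟩, ⟨h₃, h₄⟩, hx₃⟩, heq⟩ := hq
    have h_mul_g₂ : g₃ * g₁⁻¹ * g₂ = g₄ := by rw [mul_assoc, heq, mul_inv_cancel_left]
    have h_smul : (g₃ * g₁⁻¹) • g₁ • b = g₃ • b := by rw [smul_smul, inv_mul_cancel_right]
    simp only [coe_sigma, coe_product, Set.mem_sigma_iff, Set.mem_prod, mem_coe, mem_richSet,
      smul_eq_mul, h_mul_g₂, h_smul, inv_mul_cancel_right]
    exact ⟨div_eq_mul_inv g₃ g₁ ▸ div_mem_div (hL' h₃) (hL' h₁), ⟨hL' h₂, hL' h₄⟩,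
      ⟨hL' h₁, hL' h₃⟩, hb, hx₁, hx₃⟩
  · rintro ⟨b, ⟨g₁, g₂⟩, g₃, g₄⟩ hq ⟨b', ⟨g₁', g₂'⟩, g₃', g₄'⟩ hq' heq
    simp only [coe_sigma, Set.mem_sigma_iff, mem_coe, mem_filter, leftQuot] at hq hq'
    simp only [Sigma.mk.injEq, Prod.mk.injEq, heq_eq_eq] at heq
    obtain ⟨hh, rfl, rfl, rfl⟩ := heq
    obtain rfl := mul_right_cancel hh
    obtain rfl := mul_left_cancel (hq.2.2.symm.trans hq'.2.2)
    rfl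

lemma sq_mul_repCount_leftQuot_sq_le {δ : ℝ} (hδ : 0 ≤ δ) (hrich : ∀ g ∈ L, δ ≤ rich B X g)
    (w : G) :
    δ ^ 2 * (repCount (L ×ˢ L) leftQuot w : ℝ) ^ 2 ≤
      #B * ∑ b ∈ B, (repCount {p ∈ L ×ˢ L | p.1 • b ∈ X} leftQuot w : ℝ) ^ 2 := by
  have double_count : ∑ b ∈ B, (repCount {p ∈ L ×ˢ L | p.1 • b ∈ X} leftQuot w : ℝ) =
      ∑ p ∈ L ×ˢ L with leftQuot p = w, (rich B X p.1 : ℝ) := by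
    norm_cast
    simp only [repCount, rich, richSet, filter_filter, and_comm, card_filter, sum_filter, ite_and]
    rw [sum_comm]
    exact sum_congr rfl fun p _ ↦ by split_ifs <;> simp
  have mass : δ * repCount (L ×ˢ L) leftQuot w ≤
      ∑ b ∈ B, (repCount {p ∈ L ×ˢ L | p.1 • b ∈ X} leftQuot w : ℝ) := by
    rw [double_count, mul_comm, repCount, ← nsmul_eq_mul]
    exact card_nsmul_le_sum _ _ _ fun p hp ↦ hrich _ (mem_product.1 (mem_filter.1 hp).1).1
  rw [← mul_pow]
  exact (pow_le_pow_left₀ (by positivity) mass 2).trans sq_sum_le_card_mul_sum_sq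

lemma sq_mul_energy_leftQuot_le (hL' : L' ⊆ L) {δ : ℝ} (hδ : 0 ≤ δ)
    (hrich : ∀ g ∈ L', δ ≤ rich B X g) :
    δ ^ 2 * energy (L' ×ˢ L') leftQuot ≤
      #B * ∑ h ∈ L / L, rich L L h * ∑ g ∈ richSet L L h, (rich B (richSet X X h) g : ℝ) := by
  set W := (L' ×ˢ L').image leftQuot
  calc δ ^ 2 * energy (L' ×ˢ L') leftQuot
      = ∑ w ∈ W, δ ^ 2 * (repCount (L' ×ˢ L') leftQuot w : ℝ) ^ 2 := by
        rw [energy_eq_sum_repCount_sq, mul_sum]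
    _ ≤ ∑ w ∈ W, #B * ∑ b ∈ B, (repCount {p ∈ L' ×ˢ L' | p.1 • b ∈ X} leftQuot w : ℝ) ^ 2 :=
        sum_le_sum fun w _ ↦ sq_mul_repCount_leftQuot_sq_le hδ hrich w
    _ = #B * ∑ b ∈ B, ∑ w ∈ W, (repCount {p ∈ L' ×ˢ L' | p.1 • b ∈ X} leftQuot w : ℝ) ^ 2 := by
        rw [← mul_sum, sum_comm]
    _ ≤ #B * ∑ b ∈ B, (energy {p ∈ L' ×ˢ L' | p.1 • b ∈ X} leftQuot : ℝ) := by
        gcongr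
        exact sum_repCount_sq_le_energy _ _ _
    _ ≤ _ := by
        gcongr
        exact_mod_cast sum_energy_filter_smul_mem_le (B := B) (X := X) hL'

end PopularEnergy

section RichPairs

lemma le_mul_or_pow_three_mul_le {m ρ a t : ℝ} (hρ : 0 < ρ) (ht : 2 ≤ t)
    (hm : m ^ 3 ≤ 4 * (ρ ^ 3 + ρ ^ 2 * a)) : m ≤ t * ρ ∨ t ^ 3 * ρ ≤ 8 * a := by
  refine or_iff_not_imp_left.2 fun hlt ↦ ?_
  have cubes : (t * ρ) ^ 3 ≤ m ^ 3 := by gcongr; linarith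
  have eight_le : 8 ≤ t ^ 3 := by
    calc (8 : ℝ) = 2 ^ 3 := by norm_num
      _ ≤ t ^ 3 := by gcongr
  refine le_of_mul_le_mul_left ?_ (show 0 < ρ ^ 2 by positivity)
  nlinarith [pow_pos hρ 3]

lemma sq_le_mul_pow_three {ρ σ y : ℝ} (hρ : 0 ≤ ρ) (hσ : 0 ≤ σ) (hy : 0 ≤ y) (hρσ : ρ ≤ σ ^ 2)
    (hρy : ρ ≤ y ^ 2) : ρ ^ 2 ≤ σ * y ^ 3 := by
  refine (pow_le_pow_iff_left₀ (by positivity) (by positivity) two_ne_zero).1 ?_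
  calc (ρ ^ 2) ^ 2 = ρ * ρ ^ 3 := by ring
    _ ≤ σ ^ 2 * (y ^ 2) ^ 3 := by gcongr
    _ = (σ * y ^ 3) ^ 2 := by ring

lemma mul_le_or_sq_le_or_lt_and_mul_le {m ρ k a β t lam σ : ℝ} (hρ : 1 ≤ ρ) (hk : 0 ≤ k)
    (hβ : 0 ≤ β) (ht : 2 ≤ t) (hlam : 0 ≤ lam) (hlam1 : lam < 1) (hσ : 0 ≤ σ)
    (ha : 8 * a ≤ lam ^ 2 * t ^ 3) (hmρ : m ≤ β * ρ)
    (hm : m ^ 3 ≤ 4 * (ρ ^ 3 + ρ ^ 2 * (a * k ^ 2))) :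
    ρ * m ≤ t * ρ ^ 2 ∨ σ ^ 2 ≤ ρ ∨ 1 < k ∧ ρ * m ≤ β * σ * lam ^ 3 * k ^ 3 := by
  rcases le_mul_or_pow_three_mul_le (by linarith) ht hm with hmt | hρk
  · exact .inl (by nlinarith)
  rcases le_or_gt (σ ^ 2) ρ with hσρ | hσρ
  · exact .inr (.inl hσρ)
  have hρ_le : ρ ≤ (lam * k) ^ 2 := by
    refine le_of_mul_le_mul_left ?_ (show 0 < t ^ 3 by positivity)
    nlinarith [mul_le_mul_of_nonneg_right ha (sq_nonneg k)]
  refine .inr (.inr ⟨?_, ?_⟩)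
  · have one_le : 1 ≤ lam * k := (one_le_sq_iff₀ (by positivity)).1 (hρ.trans hρ_le)
    nlinarith
  · calc ρ * m ≤ ρ * (β * ρ) := by gcongr
      _ = β * ρ ^ 2 := by ring
      _ ≤ β * (σ * (lam * k) ^ 3) := by
          gcongr
          exact sq_le_mul_pow_three (by positivity) hσ (by positivity) hσρ.le hρ_le
      _ = _ := by ring

variable {G Ω : Type*} [Group G] [MulAction G Ω] {N K : ℝ} {L : Finset G} {B X : Finset Ω}

lemma rich_mul_sum_rich_le (hST : CubicRichnessBound G Ω N K) (hB : (#B : ℝ) ≤ N) {t lam σ : ℝ}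
    (ht : 2 ≤ t) (hlam : 0 ≤ lam) (hlam1 : lam < 1) (hσ : 0 ≤ σ)
    (htlam : 8 * (K * (#B : ℝ) ^ 2) ≤ lam ^ 2 * t ^ 3) (h : G) :
    rich L L h * ∑ g ∈ richSet L L h, (rich B (richSet X X h) g : ℝ) ≤
      t * (rich L L h : ℝ) ^ 2 +
      (if 2 ≤ rich X X h then #B * σ * lam ^ 3 * (rich X X h : ℝ) ^ 3 else 0) +
      if σ ^ 2 ≤ rich L L h then #B * (#L : ℝ) ^ 2 else 0 := by
  have m_le : ∑ g ∈ richSet L L h, (rich B (richSet X X h) g : ℝ) ≤ #B * rich L L h := by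
    refine (sum_le_card_nsmul _ _ (#B : ℝ) fun g _ ↦ ?_).trans_eq ?_
    · exact Nat.cast_le.2 (rich_le_card_left _ _ _)
    · rw [nsmul_eq_mul, mul_comm, rich]
  have m_cube_le := (pow_three_sum_rich_le hST hB (richSet L L h) (richSet X X h)).trans_eq
    (show _ = 4 * ((rich L L h : ℝ) ^ 3 + (rich L L h : ℝ) ^ 2 *
      (K * (#B : ℝ) ^ 2 * (rich X X h : ℝ) ^ 2)) by rw [rich, rich]; ring)
  have rich_le : (rich L L h : ℝ) ≤ #L := Nat.cast_le.2 (rich_le_card_left _ _ _)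
  set m := ∑ g ∈ richSet L L h, (rich B (richSet X X h) g : ℝ)
  have first_nonneg : 0 ≤ t * (rich L L h : ℝ) ^ 2 := by positivity
  have second_nonneg :
      0 ≤ if 2 ≤ rich X X h then #B * σ * lam ^ 3 * (rich X X h : ℝ) ^ 3 else 0 := by positivity
  have third_nonneg : 0 ≤ if σ ^ 2 ≤ rich L L h then #B * (#L : ℝ) ^ 2 else 0 := by positivity
  rcases (rich L L h).eq_zero_or_pos with hρ0 | hρpos
  · have : rich L L h * m = 0 := by rw [hρ0, Nat.cast_zero, zero_mul]
    linarith
  rcases mul_le_or_sq_le_or_lt_and_mul_le (k := rich X X h) (by exact_mod_cast hρpos)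
    (Nat.cast_nonneg _) (Nat.cast_nonneg _) ht hlam hlam1 hσ htlam m_le m_cube_le
    with hmt | hσρ | ⟨hk, hmk⟩
  · linarith
  · rw [if_pos hσρ] at *
    have : rich L L h * m ≤ #B * (#L : ℝ) ^ 2 := by
      calc rich L L h * m ≤ rich L L h * (#B * rich L L h) := by gcongr
        _ = #B * (rich L L h : ℝ) ^ 2 := by ring
        _ ≤ #B * (#L : ℝ) ^ 2 := by gcongr
    linarith
  · rw [if_pos (show 2 ≤ rich X X h by exact_mod_cast hk)] at *
    linarith

lemma sum_rich_mul_sum_rich_le (hST : CubicRichnessBound G Ω N K) (hB : (#B : ℝ) ≤ N)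
    (hX : (#X : ℝ) ≤ N) {t lam σ : ℝ} (ht : 2 ≤ t) (hlam : 0 ≤ lam) (hlam1 : lam < 1)
    (hσ : 0 ≤ σ) (htlam : 8 * (K * (#B : ℝ) ^ 2) ≤ lam ^ 2 * t ^ 3) (H : Finset G) :
    ∑ h ∈ H, rich L L h * ∑ g ∈ richSet L L h, (rich B (richSet X X h) g : ℝ) ≤
      t * ∑ h ∈ H, (rich L L h : ℝ) ^ 2 + #B * σ * lam ^ 3 * (K * (#X : ℝ) ^ 2 * (#X : ℝ) ^ 2) +
      #{h ∈ H | σ ^ 2 ≤ rich L L h} * (#B * (#L : ℝ) ^ 2) := by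
  refine (sum_le_sum fun h _ ↦ rich_mul_sum_rich_le hST hB ht hlam hlam1 hσ htlam h).trans ?_
  rw [sum_add_distrib, sum_add_distrib, ← mul_sum, ← sum_filter, ← sum_filter, ← mul_sum,
    sum_const, nsmul_eq_mul]
  gcongr
  exact hST X X hX H

end RichPairs

section EnergyCriterion

lemma truncation_terms_lt {n K : ℝ} (hK : 2 ≤ K) (hKn : K ^ 6000 ≤ n) :
    n ^ 2 / K ^ 119 * (K ^ 2 * n ^ 11) +
      n ^ 2 * (n ^ 2 / K ^ 700) * (K ^ 181 / n) ^ 3 *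
        (K * (K ^ 10 * n ^ 3) ^ 2 * (K ^ 10 * n ^ 3) ^ 2) +
      K ^ 5700 * n ^ 2 * (n ^ 2 * (n ^ 4) ^ 2) < n ^ 13 / K ^ 114 := by
  have hn : 0 < n := lt_of_lt_of_le (by positivity) hKn
  calc n ^ 2 / K ^ 119 * (K ^ 2 * n ^ 11) +
      n ^ 2 * (n ^ 2 / K ^ 700) * (K ^ 181 / n) ^ 3 *
        (K * (K ^ 10 * n ^ 3) ^ 2 * (K ^ 10 * n ^ 3) ^ 2) +
      K ^ 5700 * n ^ 2 * (n ^ 2 * (n ^ 4) ^ 2)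
      = n ^ 13 / K ^ 117 + n ^ 13 / K ^ 116 + K ^ 5816 * n ^ 12 / K ^ 116 := by field_simp
    _ ≤ n ^ 13 / K ^ 116 + n ^ 13 / K ^ 116 + n * n ^ 12 / K ^ 116 := by
        gcongr
        · linarith
        · norm_num
        · exact (pow_le_pow_right₀ (by linarith) (by norm_num)).trans hKn
    _ = 3 / K ^ 2 * (n ^ 13 / K ^ 114) := by field_simp; norm_num
    _ < 1 * (n ^ 13 / K ^ 114) := by
        gcongr
        rw [div_lt_one (by positivity)]
        nlinarith
    _ = n ^ 13 / K ^ 114 := one_mul _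

variable {G Ω : Type*} [Group G] [MulAction G Ω] {n K : ℝ} {L : Finset G} {B X : Finset Ω}

lemma sum_rich_mul_sum_rich_lt (hST : CubicRichnessBound G Ω (n ^ 4) K) (hK : 2 ≤ K)
    (hKn : K ^ 6000 ≤ n) (hL : (#L : ℝ) ≤ n ^ 4) (hB : (#B : ℝ) ≤ n ^ 2)
    (hX : (#X : ℝ) ≤ K ^ 10 * n ^ 3)
    (second_moment : ∀ H : Finset G, ∑ h ∈ H, (rich L L h : ℝ) ^ 2 ≤ K ^ 2 * n ^ 11)
    (few_symmetries : ∀ H : Finset G, (∀ h ∈ H, n ^ 4 / K ^ 1400 ≤ rich L L h) →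
      (#H : ℝ) ≤ K ^ 5700 * n ^ 2) (H : Finset G) :
    ∑ h ∈ H, rich L L h * ∑ g ∈ richSet L L h, (rich B (richSet X X h) g : ℝ) <
      n ^ 13 / K ^ 114 := by
  have pow_le {i : ℕ} (hi : i ≤ 6000) : K ^ i ≤ n :=
    (pow_le_pow_right₀ (by linarith) hi).trans hKn
  have hn : 1 ≤ n := by simpa using pow_le (Nat.zero_le _)
  have ht : 2 ≤ n ^ 2 / K ^ 119 := by
    rw [le_div_iff₀ (by positivity)]
    nlinarith [pow_le (i := 119) (by norm_num), pow_le (i := 1) (by norm_num)]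
  have hlam : K ^ 181 / n < 1 := by
    rw [div_lt_one (by positivity)]
    exact (pow_lt_pow_right₀ (by linarith) (by norm_num)).trans_le (pow_le (i := 182) (by norm_num))
  have htlam : 8 * (K * (#B : ℝ) ^ 2) ≤ (K ^ 181 / n) ^ 2 * (n ^ 2 / K ^ 119) ^ 3 := by
    calc 8 * (K * (#B : ℝ) ^ 2) ≤ 2 ^ 4 * (K * (n ^ 2) ^ 2) := by gcongr; norm_num
      _ ≤ K ^ 4 * (K * (n ^ 2) ^ 2) := by gcongr
      _ = (K ^ 181 / n) ^ 2 * (n ^ 2 / K ^ 119) ^ 3 := by field_simp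
  have hXN : (#X : ℝ) ≤ n ^ 4 := by
    calc (#X : ℝ) ≤ K ^ 10 * n ^ 3 := hX
      _ ≤ n * n ^ 3 := by gcongr; exact pow_le (by norm_num)
      _ = n ^ 4 := by ring
  have symmetries : (#{h ∈ H | (n ^ 2 / K ^ 700) ^ 2 ≤ rich L L h} : ℝ) ≤ K ^ 5700 * n ^ 2 :=
    few_symmetries _ fun h hh ↦ le_trans (by rw [div_pow]; norm_num [← pow_mul]) (mem_filter.1 hh).2
  calc ∑ h ∈ H, rich L L h * ∑ g ∈ richSet L L h, (rich B (richSet X X h) g : ℝ)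
      ≤ n ^ 2 / K ^ 119 * ∑ h ∈ H, (rich L L h : ℝ) ^ 2 +
        #B * (n ^ 2 / K ^ 700) * (K ^ 181 / n) ^ 3 * (K * (#X : ℝ) ^ 2 * (#X : ℝ) ^ 2) +
        #{h ∈ H | (n ^ 2 / K ^ 700) ^ 2 ≤ rich L L h} * (#B * (#L : ℝ) ^ 2) :=
        sum_rich_mul_sum_rich_le hST (hB.trans (pow_le_pow_right₀ hn (by norm_num))) hXN ht
          (by positivity) hlam (by positivity) htlam H
    _ ≤ n ^ 2 / K ^ 119 * (K ^ 2 * n ^ 11) +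
        n ^ 2 * (n ^ 2 / K ^ 700) * (K ^ 181 / n) ^ 3 *
          (K * (K ^ 10 * n ^ 3) ^ 2 * (K ^ 10 * n ^ 3) ^ 2) +
        K ^ 5700 * n ^ 2 * (n ^ 2 * (n ^ 4) ^ 2) := by
        gcongr
        exact second_moment H
    _ < n ^ 13 / K ^ 114 := truncation_terms_lt hK hKn

theorem energy_act_lt (hST : CubicRichnessBound G Ω (n ^ 4) K) (hK : 2 ≤ K)
    (hKn : K ^ 6000 ≤ n) (hlog : 3 * (1 + Real.log (n ^ 4)) ≤ K) (hL : (#L : ℝ) ≤ n ^ 4)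
    (hB : (#B : ℝ) ≤ n ^ 2)
    (second_moment : ∀ H : Finset G, ∑ h ∈ H, (rich L L h : ℝ) ^ 2 ≤ K ^ 2 * n ^ 11)
    (few_symmetries : ∀ H : Finset G, (∀ h ∈ H, n ^ 4 / K ^ 1400 ≤ rich L L h) →
      (#H : ℝ) ≤ K ^ 5700 * n ^ 2) :
    (energy (L ×ˢ B) act : ℝ) < n ^ 9 / K := by
  by_contra! hE
  have hn : 0 < n := lt_of_lt_of_le (by positivity) hKn
  have hKn' : 4 * K ^ 30 ≤ n := by
    calc 4 * K ^ 30 = 2 ^ 2 * K ^ 30 := by norm_num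
      _ ≤ K ^ 2 * K ^ 30 := by gcongr
      _ = K ^ 32 := by ring
      _ ≤ n := (pow_le_pow_right₀ (by linarith) (by norm_num)).trans hKn
  obtain ⟨X, L', hL', hX, hrich, hE'⟩ :=
    exists_popular_points_and_lines hST hK hKn' hlog hL hB hE
  have upper := sum_rich_mul_sum_rich_lt hST hK hKn hL hB hX second_moment few_symmetries (L / L)
  set S := ∑ h ∈ L / L, rich L L h * ∑ g ∈ richSet L L h, (rich B (richSet X X h) g : ℝ)
  have lower : n ^ 2 * (n ^ 13 / K ^ 114) ≤ n ^ 2 * S := by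
    calc n ^ 2 * (n ^ 13 / K ^ 114) = (n ^ 2 / K ^ 10) ^ 2 * (n ^ 11 / K ^ 94) := by field_simp
      _ ≤ (n ^ 2 / K ^ 10) ^ 2 * energy (L' ×ˢ L') leftQuot := by gcongr
      _ ≤ #B * S := sq_mul_energy_leftQuot_le hL' (by positivity) hrich
      _ ≤ n ^ 2 * S := by gcongr
  exact upper.not_ge (le_of_mul_le_mul_left lower (by positivity))

end EnergyCriterion

section SecondMoment

variable {G Ω : Type*} [Group G] [MulAction G Ω] {U : Finset Ω}

lemma mul_sum_sq_le_of_le_mul_rich {N K : ℝ} (hST : CubicRichnessBound G Ω N K)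
    (hU : (#U : ℝ) ≤ N) {W : Finset G} {r : G → ℝ} {b c : ℝ} (hr : ∀ w, 0 ≤ r w)
    (hb : 0 ≤ b) (hc : 1 ≤ c) (hrich : ∀ w, r w ≤ b * rich U U w) :
    c * ∑ w ∈ W, r w ^ 2 ≤
      b * c ^ 2 * ∑ w ∈ W, r w + b ^ 2 * (K * (#U : ℝ) ^ 2 * (#U : ℝ) ^ 2) := by
  have pointwise (w : G) : c * r w ^ 2 ≤
      b * c ^ 2 * r w + if 2 ≤ rich U U w then b ^ 2 * (rich U U w : ℝ) ^ 3 else 0 := by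
    have hw := hr w
    have hwb := hrich w
    rcases le_or_gt (rich U U w : ℝ) c with hle | hlt
    · calc c * r w ^ 2 ≤ c * (b * c * r w) := by rw [sq]; gcongr; exact hwb.trans (by gcongr)
        _ = b * c ^ 2 * r w := by ring
        _ ≤ _ := le_add_of_nonneg_right (by positivity)
    · have two_le : 2 ≤ rich U U w := by
        have : (1 : ℝ) < rich U U w := hc.trans_lt hlt
        exact_mod_cast this
      rw [if_pos two_le]
      calc c * r w ^ 2 ≤ rich U U w * (b * rich U U w) ^ 2 := by gcongr
        _ = b ^ 2 * (rich U U w : ℝ) ^ 3 := by ring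
        _ ≤ _ := le_add_of_nonneg_left (by positivity)
  calc c * ∑ w ∈ W, r w ^ 2
      ≤ ∑ w ∈ W, (b * c ^ 2 * r w +
          if 2 ≤ rich U U w then b ^ 2 * (rich U U w : ℝ) ^ 3 else 0) := by
        rw [mul_sum]
        exact sum_le_sum fun w _ ↦ pointwise w
    _ = b * c ^ 2 * ∑ w ∈ W, r w +
          b ^ 2 * ∑ w ∈ W with 2 ≤ rich U U w, (rich U U w : ℝ) ^ 3 := by
        rw [sum_add_distrib, ← sum_filter, mul_sum, mul_sum]
    _ ≤ _ := by
        gcongr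
        exact hST U U hU W

lemma sum_sq_le_of_le_sq_mul_rich {n K : ℝ} (hST : CubicRichnessBound G Ω (n ^ 4) K) (hn : 1 ≤ n)
    (hK : 2 ≤ K) (hU : (#U : ℝ) ≤ n ^ 2) {W : Finset G} {r : G → ℝ} (hr : ∀ w, 0 ≤ r w)
    (hrich : ∀ w, r w ≤ n ^ 2 * rich U U w) (hsum : ∑ w ∈ W, r w ≤ n ^ 8) :
    ∑ w ∈ W, r w ^ 2 ≤ K ^ 2 * n ^ 11 := by
  refine le_of_mul_le_mul_left ?_ (show 0 < n by positivity)
  calc n * ∑ w ∈ W, r w ^ 2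
      ≤ n ^ 2 * n ^ 2 * ∑ w ∈ W, r w + (n ^ 2) ^ 2 * (K * (#U : ℝ) ^ 2 * (#U : ℝ) ^ 2) :=
        mul_sum_sq_le_of_le_mul_rich hST (hU.trans (pow_le_pow_right₀ hn (by norm_num))) hr
          (by positivity) hn hrich
    _ ≤ n ^ 2 * n ^ 2 * n ^ 8 + (n ^ 2) ^ 2 * (K * (n ^ 2) ^ 2 * (n ^ 2) ^ 2) := by gcongr
    _ = (1 + K) * n ^ 12 := by ring
    _ ≤ K ^ 2 * n ^ 12 := by gcongr; nlinarith
    _ = n * (K ^ 2 * n ^ 11) := by ring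

lemma card_mul_pow_three_le_of_le_rich {N K x : ℝ} (hST : CubicRichnessBound G Ω N K)
    {V : Finset Ω} (hU : (#U : ℝ) ≤ N) (hx : 2 ≤ x) {H : Finset G}
    (hH : ∀ h ∈ H, x ≤ rich U V h) : #H * x ^ 3 ≤ K * (#U : ℝ) ^ 2 * (#V : ℝ) ^ 2 := by
  have two_le (h) (hh : h ∈ H) : 2 ≤ rich U V h := by exact_mod_cast hx.trans (hH h hh)
  refine le_trans ?_ (sum_pow_three_rich_le_of_two_le hST hU two_le)
  rw [← nsmul_eq_mul]
  exact card_nsmul_le_sum _ _ _ fun h hh ↦ by gcongr; exact hH h hh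

end SecondMoment

section AffGroup

/-- The group of affine bijections `x ↦ slope * x + intercept` of the line over `F`, that is, of
the non-vertical, non-horizontal lines of the plane. -/
@[ext]
structure AffGroup (F : Type*) [Field F] where
  slope : Fˣ
  intercept : F

namespace AffGroup

variable {F : Type*} [Field F]

instance : Group (AffGroup F) where
  mul g h := ⟨g.slope * h.slope, g.slope * h.intercept + g.intercept⟩
  one := ⟨1, 0⟩
  inv g := ⟨g.slope⁻¹, -(↑g.slope⁻¹ * g.intercept)⟩
  mul_assoc g h k := AffGroup.ext (mul_assoc _ _ _) <| by
    change ((g.slope * h.slope : Fˣ) : F) * k.intercept + (g.slope * h.intercept + g.intercept) =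
      g.slope * (h.slope * k.intercept + h.intercept) + g.intercept
    push_cast
    ring
  one_mul g := AffGroup.ext (one_mul _) <| by
    change ((1 : Fˣ) : F) * g.intercept + 0 = g.intercept
    simp
  mul_one g := AffGroup.ext (mul_one _) <| by
    change g.slope * (0 : F) + g.intercept = g.intercept
    simp
  inv_mul_cancel g := AffGroup.ext (inv_mul_cancel _) <| by
    change ↑g.slope⁻¹ * g.intercept + -(↑g.slope⁻¹ * g.intercept) = 0
    simp

instance : MulAction (AffGroup F) F where
  smul g x := g.slope * x + g.intercept
  one_smul x := by
    change ((1 : Fˣ) : F) * x + 0 = x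
    simp
  mul_smul g h x := by
    change ((g.slope * h.slope : Fˣ) : F) * x + (g.slope * h.intercept + g.intercept) =
      g.slope * (h.slope * x + h.intercept) + g.intercept
    push_cast
    ring

lemma smul_eq (g : AffGroup F) (x : F) : g • x = g.slope * x + g.intercept := rfl

lemma slope_mul (g h : AffGroup F) : (g * h).slope = g.slope * h.slope := rfl

lemma smul_zero_eq_intercept (g : AffGroup F) : g • (0 : F) = g.intercept := by
  rw [smul_eq, mul_zero, zero_add]

/-- The abscissa at which the line `g` crosses the horizontal axis. -/
def root (g : AffGroup F) : F := g⁻¹ • (0 : F)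

lemma smul_root (g : AffGroup F) : g • g.root = 0 := smul_inv_smul g 0

lemma smul_eq_slope_mul_sub_root (g : AffGroup F) (x : F) : g • x = g.slope * (x - g.root) := by
  have := g.smul_root
  rw [smul_eq] at this ⊢
  linear_combination this

lemma slope_intercept_injective :
    Function.Injective fun g : AffGroup F ↦ (g.slope, g.intercept) := fun _ _ heq ↦
  AffGroup.ext (congrArg Prod.fst heq) (congrArg Prod.snd heq)

lemma slope_root_injective : Function.Injective fun g : AffGroup F ↦ (g.slope, g.root) := by
  intro g h heq
  obtain ⟨hslope, hroot⟩ := Prod.mk.inj heq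
  refine AffGroup.ext hslope ?_
  rw [← smul_zero_eq_intercept, ← smul_zero_eq_intercept, smul_eq_slope_mul_sub_root,
    smul_eq_slope_mul_sub_root, hslope, hroot]

lemma root_mul (h g : AffGroup F) :
    (h * g).root = g.root - h.intercept * ↑(h * g).slope⁻¹ := by
  have intercept_eq : h.intercept = (h * g).slope * (g.root - (h * g).root) := by
    rw [← smul_eq_slope_mul_sub_root, mul_smul, smul_root, smul_zero_eq_intercept]
  rw [intercept_eq, mul_right_comm, Units.mul_inv, one_mul, sub_sub_cancel]

lemma eq_of_smul_eq_smul {g h : AffGroup F} {x y : F} (hxy : x ≠ y) (hx : g • x = h • x)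
    (hy : g • y = h • y) : g = h := by
  simp only [smul_eq] at hx hy
  have hslope : (g.slope : F) = h.slope := by
    refine mul_right_cancel₀ (sub_ne_zero.2 hxy) ?_
    linear_combination hx - hy
  refine AffGroup.ext (Units.ext hslope) ?_
  rw [hslope] at hx
  exact add_left_cancel hx

variable [LinearOrder F] [IsStrictOrderedRing F]

lemma monotone_or_antitone_smul (g : AffGroup F) :
    Monotone (g • · : F → F) ∨ Antitone (g • · : F → F) := by
  simp only [smul_eq]
  exact (le_total 0 (g.slope : F)).imp
    (fun h ↦ (monotone_mul_left_of_nonneg h).add_const _)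
    (fun h ↦ (antitone_mul_left h).add_const _)

theorem cubicRichnessBound {N K : ℝ} (hN : 1 ≤ N) (hK : 768 * (1 + Real.log N) ≤ K) :
    CubicRichnessBound (AffGroup F) F N K :=
  cubicRichnessBound_of_monotone_or_antitone monotone_or_antitone_smul
    (fun _ _ _ _ ↦ eq_of_smul_eq_smul) hN hK

end AffGroup

end AffGroup

section UnitsFinset

variable {F : Type*} [Field F] (A : Finset F)

/-- The nonzero elements of `A`, as units of the field. -/
def unitsFinset : Finset Fˣ := A.preimage Units.val Units.val_injective.injOn

variable {A} in
lemma mem_unitsFinset {u : Fˣ} : u ∈ unitsFinset A ↔ (u : F) ∈ A := mem_preimage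

lemma card_unitsFinset_le : #(unitsFinset A) ≤ #A :=
  card_le_card_of_injOn _ (fun _ ↦ mem_unitsFinset.1) Units.val_injective.injOn

lemma card_le_card_unitsFinset_add_one : #A ≤ #(unitsFinset A) + 1 := by
  have cover : A ⊆ insert 0 ((unitsFinset A).image Units.val) := by
    intro a ha
    rcases eq_or_ne a 0 with rfl | ha0
    · exact mem_insert_self _ _
    · exact mem_insert_of_mem (mem_image.2 ⟨Units.mk0 a ha0, mem_unitsFinset.2 ha, rfl⟩)
  exact (card_le_card cover).trans ((card_insert_le _ _).trans (by gcongr; exact card_image_le))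

end UnitsFinset

section Symmetries

lemma card_le_of_le_sq_mul_rich {G Ω : Type*} [Group G] [MulAction G Ω] {H : Finset G}
    {T : Finset Ω} {n K : ℝ} (hST : CubicRichnessBound G Ω (n ^ 4) K) (hK : 2 ≤ K)
    (hKn : K ^ 6000 ≤ n) (hT : (#T : ℝ) ≤ n ^ 2)
    (hH : ∀ h ∈ H, n ^ 4 / K ^ 1400 ≤ n ^ 2 * rich T T h) : (#H : ℝ) ≤ K ^ 5700 * n ^ 2 := by
  have pow_le {i : ℕ} (hi : i ≤ 6000) : K ^ i ≤ n :=
    (pow_le_pow_right₀ (by linarith) hi).trans hKn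
  have hn : 1 ≤ n := by simpa using pow_le (Nat.zero_le _)
  have two_le : 2 ≤ n ^ 2 / K ^ 1400 := by
    rw [le_div_iff₀ (by positivity)]
    nlinarith [pow_le (i := 1400) (by norm_num), pow_le (i := 1) (by norm_num)]
  have rich_ge (h) (hh : h ∈ H) : n ^ 2 / K ^ 1400 ≤ rich T T h := by
    refine le_of_mul_le_mul_left ?_ (show 0 < n ^ 2 by positivity)
    calc n ^ 2 * (n ^ 2 / K ^ 1400) = n ^ 4 / K ^ 1400 := by ring
      _ ≤ n ^ 2 * rich T T h := hH h hh
  refine le_of_mul_le_mul_right ?_ (show 0 < (n ^ 2 / K ^ 1400) ^ 3 by positivity)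
  calc (#H : ℝ) * (n ^ 2 / K ^ 1400) ^ 3 ≤ K * (#T : ℝ) ^ 2 * (#T : ℝ) ^ 2 :=
        card_mul_pow_three_le_of_le_rich hST
          (hT.trans (pow_le_pow_right₀ hn (by norm_num))) two_le rich_ge
    _ ≤ K ^ 1500 * (n ^ 2) ^ 2 * (n ^ 2) ^ 2 := by
        gcongr
        exact le_self_pow₀ (by linarith) (by norm_num)
    _ = K ^ 5700 * n ^ 2 * (n ^ 2 / K ^ 1400) ^ 3 := by field_simp

end Symmetries

namespace AffGroup

section SlopeIntercept

variable {F : Type*} [Field F] {L : Finset (AffGroup F)} {S : Finset Fˣ} {T : Finset F}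
  (hL : ∀ g ∈ L, g.slope ∈ S ∧ g.intercept ∈ T)

include hL

lemma card_le_card_slope_mul_card_intercept : #L ≤ #S * #T := by
  rw [← card_product]
  refine card_le_card_of_injOn (fun g ↦ (g.slope, g.intercept))
    (fun g hg ↦ mem_product.2 (hL g hg)) slope_intercept_injective.injOn

lemma rich_self_le_card_slope_mul_rich (h : AffGroup F) : rich L L h ≤ #S * rich T T h := by
  rw [rich, rich, ← card_product]
  refine card_le_card_of_injOn (fun g ↦ (g.slope, g.intercept)) (fun g hg ↦ ?_)
    slope_intercept_injective.injOn
  obtain ⟨hg, hhg⟩ := mem_richSet.1 hg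
  exact mem_product.2 ⟨(hL g hg).1, mem_richSet.2 ⟨(hL g hg).2, (hL _ hhg).2⟩⟩

theorem energy_act_lt_of_slope_intercept [LinearOrder F] [IsStrictOrderedRing F] {B : Finset F}
    {n K : ℝ} (hK : 2 ≤ K) (hKn : K ^ 6000 ≤ n) (hlog : 768 * (1 + Real.log (n ^ 4)) ≤ K)
    (hS : (#S : ℝ) ≤ n ^ 2) (hT : (#T : ℝ) ≤ n ^ 2) (hB : (#B : ℝ) ≤ n ^ 2) :
    (energy (L ×ˢ B) act : ℝ) < n ^ 9 / K := by
  have hn : 1 ≤ n := (one_le_pow₀ (by linarith)).trans hKn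
  have hST : CubicRichnessBound (AffGroup F) F (n ^ 4) K :=
    cubicRichnessBound (one_le_pow₀ hn) hlog
  have hLn : (#L : ℝ) ≤ n ^ 4 := by
    calc (#L : ℝ) ≤ #S * #T := by exact_mod_cast card_le_card_slope_mul_card_intercept hL
      _ ≤ n ^ 2 * n ^ 2 := by gcongr
      _ = n ^ 4 := by ring
  have rich_le (h : AffGroup F) : (rich L L h : ℝ) ≤ n ^ 2 * rich T T h := by
    calc (rich L L h : ℝ) ≤ #S * rich T T h := by
          exact_mod_cast rich_self_le_card_slope_mul_rich hL h
      _ ≤ n ^ 2 * rich T T h := by gcongr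
  refine energy_act_lt hST hK hKn (by linarith [Real.log_nonneg (one_le_pow₀ hn (n := 4))])
    hLn hB (fun H ↦ ?second_moment) fun H hH ↦ ?few_symmetries
  case second_moment =>
    refine sum_sq_le_of_le_sq_mul_rich hST hn hK hT (fun _ ↦ Nat.cast_nonneg _) rich_le ?_
    calc ∑ h ∈ H, (rich L L h : ℝ) ≤ (#L : ℝ) ^ 2 := sum_rich_self_le_card_sq H L
      _ ≤ (n ^ 4) ^ 2 := by gcongr
      _ = n ^ 8 := by ring
  case few_symmetries =>
    exact card_le_of_le_sq_mul_rich hST hK hKn hT fun h hh ↦ (hH h hh).trans (rich_le h)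

end SlopeIntercept

section SlopeRoot

variable {F : Type*} [Field F] {L : Finset (AffGroup F)} {S : Finset Fˣ} {R : Finset F}
  (hL : ∀ g ∈ L, g.slope ∈ S ∧ g.root ∈ R)

include hL

lemma card_le_card_slope_mul_card_root : #L ≤ #S * #R := by
  rw [← card_product]
  refine card_le_card_of_injOn (fun g ↦ (g.slope, g.root))
    (fun g hg ↦ mem_product.2 (hL g hg)) slope_root_injective.injOn

lemma repCount_leftQuot_le_card_slope_mul_rich (w : AffGroup F) :
    repCount (L ×ˢ L) leftQuot w ≤ #S * rich R R w := by
  rw [rich, ← card_product]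
  refine repCount_le_card_of_injOn (fun p ↦ (p.2.slope, p.2.root)) ?_ ?_
  · rintro ⟨g, g'⟩ hp rfl
    obtain ⟨hg, hg'⟩ := mem_product.1 hp
    have quot_smul_root : leftQuot (g, g') • g'.root = g.root := by
      rw [leftQuot, mul_smul, smul_root, root]
    refine mem_product.2 ⟨(hL g' hg').1, mem_richSet.2 ⟨(hL g' hg').2, ?_⟩⟩
    rw [quot_smul_root]
    exact (hL g hg).2
  · rintro ⟨g₁, g₁'⟩ - h₁ ⟨g₂, g₂'⟩ - h₂ heq
    obtain rfl : g₁' = g₂' := slope_root_injective heq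
    obtain rfl : g₁ = g₂ := inv_injective (mul_right_cancel (h₁.trans h₂.symm))
    rfl

lemma rich_self_le_rich_slope_mul_card_root (h : AffGroup F) :
    rich L L h ≤ rich S S h.slope * #R := by
  rw [rich, rich, ← card_product]
  refine card_le_card_of_injOn (fun g ↦ (g.slope, g.root)) (fun g hg ↦ ?_)
    slope_root_injective.injOn
  obtain ⟨hg, hhg⟩ := mem_richSet.1 hg
  exact mem_product.2 ⟨mem_richSet.2 ⟨(hL g hg).1, (hL _ hhg).1⟩, (hL g hg).2⟩

lemma rich_self_le_sum_rich_root {h : AffGroup F} {z : Fˣ} (hz : h.intercept = z) :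
    rich L L h ≤ ∑ r ∈ R, rich (S.image fun u : Fˣ ↦ (↑u⁻¹ : F)) R (⟨-z, r⟩ : AffGroup F) := by
  simp only [rich]
  rw [← card_sigma]
  refine card_le_card_of_injOn (fun g ↦ (⟨g.root, ↑(h * g).slope⁻¹⟩ : (_ : F) × F)) ?_ ?_
  · intro g hg
    obtain ⟨hg, hhg⟩ := mem_richSet.1 hg
    have smul_inv_slope : (⟨-z, g.root⟩ : AffGroup F) • (↑(h * g).slope⁻¹ : F) = (h * g).root := by
      rw [root_mul, smul_eq, hz, Units.val_neg]
      ring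
    refine mem_sigma.2 ⟨(hL g hg).2, mem_richSet.2 ⟨mem_image_of_mem _ (hL _ hhg).1, ?_⟩⟩
    rw [smul_inv_slope]
    exact (hL _ hhg).2
  · intro g _ g' _ heq
    simp only [Sigma.mk.injEq, heq_eq_eq, Units.val_inj, inv_inj, slope_mul, mul_right_inj] at heq
    exact slope_root_injective (Prod.ext heq.2 heq.1)

lemma card_intercept_mul_pow_three_le {N K τ : ℝ} (hST : CubicRichnessBound (AffGroup F) F N K)
    (hK : 0 ≤ K) (hS : (#S : ℝ) ≤ N) (hτ : 2 * #R ≤ τ) {Z : Finset Fˣ}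
    (hZ : ∀ z ∈ Z, ∃ h : AffGroup F, h.intercept = z ∧ τ ≤ rich L L h) :
    #Z * τ ^ 3 ≤ 8 * K * (#R : ℝ) ^ 4 * (#S : ℝ) ^ 2 := by
  rcases Z.eq_empty_or_nonempty with rfl | hne
  · rw [card_empty, Nat.cast_zero, zero_mul]
    positivity
  have hZ0 : (0 : ℝ) < #Z := by exact_mod_cast hne.card_pos
  set S' := S.image fun u : Fˣ ↦ (↑u⁻¹ : F)
  have hS' : (#S' : ℝ) ≤ #S := by exact_mod_cast card_image_le
  have mk_injective : Function.Injective fun p : Fˣ × F ↦ (⟨-p.1, p.2⟩ : AffGroup F) := by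
    rintro ⟨z, r⟩ ⟨z', r'⟩ heq
    simpa using heq
  set P := (Z ×ˢ R).image fun p ↦ (⟨-p.1, p.2⟩ : AffGroup F)
  have hP : (#P : ℝ) = #Z * #R := by
    rw [card_image_of_injective _ mk_injective, card_product, Nat.cast_mul]
  have lower : #Z * τ ≤ ∑ g ∈ P, (rich S' R g : ℝ) := by
    rw [sum_image mk_injective.injOn, sum_product, ← nsmul_eq_mul]
    refine card_nsmul_le_sum _ _ _ fun z hz ↦ ?_
    obtain ⟨h, hint, hτh⟩ := hZ z hz
    exact hτh.trans (by exact_mod_cast rich_self_le_sum_rich_root hL hint)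
  have upper : (#Z * τ) ^ 3 ≤ 4 * ((#Z * #R : ℝ) ^ 3 +
      K * (#Z * #R : ℝ) ^ 2 * (#S : ℝ) ^ 2 * (#R : ℝ) ^ 2) := by
    have hτ0 : 0 ≤ τ := le_trans (by positivity) hτ
    calc (#Z * τ) ^ 3 ≤ (∑ g ∈ P, (rich S' R g : ℝ)) ^ 3 := by gcongr
      _ ≤ 4 * ((#P : ℝ) ^ 3 + K * (#P : ℝ) ^ 2 * (#S' : ℝ) ^ 2 * (#R : ℝ) ^ 2) :=
          pow_three_sum_rich_le hST (hS'.trans hS) P R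
      _ ≤ _ := by rw [hP]; gcongr
  have main_term_absorbed : (2 * (#Z * #R) : ℝ) ^ 3 ≤ (#Z * τ) ^ 3 := by
    refine pow_le_pow_left₀ (by positivity) ?_ 3
    linarith [mul_le_mul_of_nonneg_left hτ hZ0.le]
  refine le_of_mul_le_mul_left ?_ (show (0 : ℝ) < (#Z : ℝ) ^ 2 by positivity)
  linarith

lemma card_slope_mul_le {H : Finset (AffGroup F)} {τ : ℝ} (hH : ∀ h ∈ H, τ ≤ rich L L h) :
    #(H.image slope) * τ ≤ (#S : ℝ) ^ 2 * #R := by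
  calc #(H.image slope) * τ ≤ ∑ q ∈ H.image slope, (rich S S q * #R : ℝ) := by
        rw [← nsmul_eq_mul]
        refine card_nsmul_le_sum _ _ _ (forall_mem_image.2 fun h hh ↦ (hH h hh).trans ?_)
        exact_mod_cast rich_self_le_rich_slope_mul_card_root hL h
    _ ≤ (#S : ℝ) ^ 2 * #R := by
        rw [← sum_mul]
        gcongr
        exact sum_rich_self_le_card_sq _ S

omit hL in
lemma card_le_card_slope_mul_card_intercept_units (H : Finset (AffGroup F)) :
    #H ≤ #(H.image slope) * (#(unitsFinset (H.image intercept)) + 1) := by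
  calc #H ≤ #(H.image slope) * #(H.image intercept) :=
        card_le_card_slope_mul_card_intercept fun g hg ↦
          ⟨mem_image_of_mem _ hg, mem_image_of_mem _ hg⟩
    _ ≤ _ := by gcongr; exact card_le_card_unitsFinset_add_one _

variable {n K : ℝ} (hST : CubicRichnessBound (AffGroup F) F (n ^ 4) K) (hK : 2 ≤ K)
  (hKn : K ^ 6000 ≤ n) (hS : (#S : ℝ) ≤ n ^ 2) (hR : (#R : ℝ) ≤ n ^ 2) {H : Finset (AffGroup F)}
  (hH : ∀ h ∈ H, n ^ 4 / K ^ 1400 ≤ rich L L h)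

include hK hKn hS hR hH

lemma card_image_slope_le : (#(H.image slope) : ℝ) ≤ K ^ 1400 * n ^ 2 := by
  have hn : 0 < n := lt_of_lt_of_le (by positivity) hKn
  refine le_of_mul_le_mul_right ?_ (show 0 < n ^ 4 / K ^ 1400 by positivity)
  calc #(H.image slope) * (n ^ 4 / K ^ 1400) ≤ (#S : ℝ) ^ 2 * #R := card_slope_mul_le hL hH
    _ ≤ (n ^ 2) ^ 2 * n ^ 2 := by gcongr
    _ = K ^ 1400 * n ^ 2 * (n ^ 4 / K ^ 1400) := by field_simp

include hST

lemma card_unitsFinset_image_intercept_le :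
    (#(unitsFinset (H.image intercept)) : ℝ) ≤ 8 * K ^ 4201 := by
  have pow_le {i : ℕ} (hi : i ≤ 6000) : K ^ i ≤ n :=
    (pow_le_pow_right₀ (by linarith) hi).trans hKn
  have hn : 1 ≤ n := by simpa using pow_le (Nat.zero_le _)
  have two_card_root_le : 2 * #R ≤ n ^ 4 / K ^ 1400 := by
    rw [le_div_iff₀ (by positivity)]
    calc 2 * #R * K ^ 1400 ≤ K * n ^ 2 * K ^ 1400 := by gcongr
      _ = K ^ 1401 * n ^ 2 := by ring
      _ ≤ n ^ 2 * n ^ 2 := by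
          gcongr
          exact (pow_le (by norm_num)).trans (le_self_pow₀ hn (by norm_num))
      _ = n ^ 4 := by ring
  set Z := unitsFinset (H.image intercept)
  have attained (z) (hz : z ∈ Z) :
      ∃ h : AffGroup F, h.intercept = z ∧ n ^ 4 / K ^ 1400 ≤ rich L L h :=
    (mem_image.1 (mem_unitsFinset.1 hz)).imp fun h hh ↦ ⟨hh.2, hH h hh.1⟩
  refine le_of_mul_le_mul_right ?_ (show 0 < (n ^ 4 / K ^ 1400) ^ 3 by positivity)
  calc #Z * (n ^ 4 / K ^ 1400) ^ 3 ≤ 8 * K * (#R : ℝ) ^ 4 * (#S : ℝ) ^ 2 :=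
        card_intercept_mul_pow_three_le hL hST (by linarith)
          (hS.trans (pow_le_pow_right₀ hn (by norm_num))) two_card_root_le attained
    _ ≤ 8 * K * (n ^ 2) ^ 4 * (n ^ 2) ^ 2 := by gcongr
    _ = 8 * K ^ 4201 * (n ^ 4 / K ^ 1400) ^ 3 := by field_simp

lemma card_le_of_le_rich_of_slope_root : (#H : ℝ) ≤ K ^ 5700 * n ^ 2 := by
  have hn : 0 < n := lt_of_lt_of_le (by positivity) hKn
  calc (#H : ℝ) ≤ #(H.image slope) * (#(unitsFinset (H.image intercept)) + 1) := by
        exact_mod_cast card_le_card_slope_mul_card_intercept_units H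
    _ ≤ K ^ 1400 * n ^ 2 * (8 * K ^ 4201 + K ^ 4201) := by
        gcongr
        · exact card_image_slope_le hL hK hKn hS hR hH
        · exact card_unitsFinset_image_intercept_le hL hST hK hKn hS hR hH
        · exact one_le_pow₀ (by linarith)
    _ = 9 * (K ^ 5601 * n ^ 2) := by ring
    _ ≤ K ^ 4 * (K ^ 5601 * n ^ 2) := by
        gcongr
        exact le_trans (by norm_num) (pow_le_pow_left₀ zero_le_two hK 4)
    _ = K ^ 5605 * n ^ 2 := by ring
    _ ≤ K ^ 5700 * n ^ 2 := by gcongr <;> linarith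

omit hST hH in
theorem energy_act_lt_of_slope_root [LinearOrder F] [IsStrictOrderedRing F] {B : Finset F}
    (hlog : 768 * (1 + Real.log (n ^ 4)) ≤ K) (hB : (#B : ℝ) ≤ n ^ 2) :
    (energy (L ×ˢ B) act : ℝ) < n ^ 9 / K := by
  have hn : 1 ≤ n := (one_le_pow₀ (by linarith)).trans hKn
  have hST : CubicRichnessBound (AffGroup F) F (n ^ 4) K :=
    cubicRichnessBound (one_le_pow₀ hn) hlog
  have hLn : (#L : ℝ) ≤ n ^ 4 := by
    calc (#L : ℝ) ≤ #S * #R := by exact_mod_cast card_le_card_slope_mul_card_root hL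
      _ ≤ n ^ 2 * n ^ 2 := by gcongr
      _ = n ^ 4 := by ring
  have repCount_le (w : AffGroup F) :
      (repCount (L ×ˢ L) leftQuot w : ℝ) ≤ n ^ 2 * rich R R w := by
    calc (repCount (L ×ˢ L) leftQuot w : ℝ) ≤ #S * rich R R w := by
          exact_mod_cast repCount_leftQuot_le_card_slope_mul_rich hL w
      _ ≤ n ^ 2 * rich R R w := by gcongr
  refine energy_act_lt hST hK hKn (by linarith [Real.log_nonneg (one_le_pow₀ hn (n := 4))])
    hLn hB (fun H ↦ ?second_moment) fun H ↦
      card_le_of_le_rich_of_slope_root hL hST hK hKn hS hR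
  case second_moment =>
    refine (sum_rich_self_sq_le_energy_leftQuot H L).trans ?_
    rw [energy_eq_sum_repCount_sq]
    refine sum_sq_le_of_le_sq_mul_rich hST hn hK hR (fun _ ↦ Nat.cast_nonneg _) repCount_le ?_
    calc ∑ w ∈ (L ×ˢ L).image leftQuot, (repCount (L ×ˢ L) leftQuot w : ℝ)
        ≤ #(L ×ˢ L) := sum_repCount_le_card _ _ _
      _ = (#L : ℝ) * #L := by rw [card_product, Nat.cast_mul]
      _ ≤ n ^ 4 * n ^ 4 := by gcongr
      _ = n ^ 8 := by ring

end SlopeRoot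

end AffGroup

section Triples

lemma energy_le_card_sq {ι κ : Type*} (s : Finset ι) (f : ι → κ) : energy s f ≤ #s ^ 2 := by
  rw [sq, ← card_product]
  exact card_filter_le _ _

lemma energy_le_energy_comp_of_surjOn {ι κ τ : Type*} {s : Finset ι} {t : Finset τ} (f : ι → κ)
    {e : τ → ι} (he : Set.SurjOn e t s) : energy s f ≤ energy t (f ∘ e) := by
  refine card_le_card_of_surjOn (Prod.map e e) ?_
  rintro ⟨x, y⟩ hxy
  simp only [mem_coe, mem_filter, mem_product] at hxy
  obtain ⟨⟨hx, hy⟩, heq⟩ := hxy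
  obtain ⟨a, ha, rfl⟩ := he hx
  obtain ⟨b, hb, rfl⟩ := he hy
  exact ⟨(a, b), mem_coe.2 (mem_filter.2 ⟨mem_product.2 ⟨ha, hb⟩, heq⟩), rfl⟩

lemma energy_le_two_mul_energy_filter_add {ι κ : Type*} (s : Finset ι) (f : ι → κ)
    (p : ι → Prop) :
    (energy s f : ℝ) ≤ 2 * energy {x ∈ s | p x} f + 2 * energy {x ∈ s | ¬p x} f := by
  have split (k : κ) :
      repCount s f k = repCount {x ∈ s | p x} f k + repCount {x ∈ s | ¬p x} f k := by
    simp only [repCount, filter_comm _ (f · = k)]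
    exact (card_filter_add_card_filter_not _).symm
  calc (energy s f : ℝ) = ∑ k ∈ s.image f, (repCount s f k : ℝ) ^ 2 := energy_eq_sum_repCount_sq s f
    _ ≤ ∑ k ∈ s.image f, (2 * (repCount {x ∈ s | p x} f k : ℝ) ^ 2 +
          2 * (repCount {x ∈ s | ¬p x} f k : ℝ) ^ 2) := by
        refine sum_le_sum fun k _ ↦ ?_
        rw [split, Nat.cast_add, ← mul_add]
        exact add_sq_le
    _ ≤ _ := by
        rw [sum_add_distrib, ← mul_sum, ← mul_sum]
        gcongr <;> exact sum_repCount_sq_le_energy _ _ _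

lemma ncard_eq_energy_triples {F κ : Type*} (A : Finset F) (f : F × F × F → κ) :
    Set.ncard {x : F × F × F × F × F × F |
      x.1 ∈ A ∧ x.2.1 ∈ A ∧ x.2.2.1 ∈ A ∧ x.2.2.2.1 ∈ A ∧ x.2.2.2.2.1 ∈ A ∧ x.2.2.2.2.2 ∈ A ∧
      f (x.1, x.2.1, x.2.2.1) = f x.2.2.2} = energy (A ×ˢ A ×ˢ A) f := by
  rw [energy, ← Set.ncard_coe_finset]
  refine Set.ncard_congr (fun x _ ↦ ((x.1, x.2.1, x.2.2.1), x.2.2.2)) ?_ ?_ ?_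
  · intro x hx
    simpa [and_assoc] using hx
  · rintro ⟨a, b, d, y⟩ ⟨a', b', d', y'⟩ _ _ heq
    simp_all
  · rintro ⟨⟨a, b, d⟩, y⟩ hy
    exact ⟨(a, b, d, y), by simpa [and_assoc] using hy, rfl⟩

variable {F : Type*} [Field F] {A : Finset F}

lemma card_filter_fst_eq_zero_le (A : Finset F) : #{x ∈ A ×ˢ A ×ˢ A | x.1 = 0} ≤ #A ^ 2 := by
  rw [sq, ← card_product]
  refine card_le_card_of_injOn Prod.snd (fun x hx ↦ ?_) fun x hx y hy heq ↦ ?_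
  · exact (mem_product.1 (mem_filter.1 hx).1).2
  · exact Prod.ext ((mem_filter.1 hx).2.trans (mem_filter.1 hy).2.symm) heq

lemma energy_triples_le {κ : Type*} (A : Finset F) (f : F × F × F → κ) :
    (energy (A ×ˢ A ×ˢ A) f : ℝ) ≤
      2 * (#A : ℝ) ^ 4 + 2 * energy (unitsFinset A ×ˢ A ×ˢ A) (f ∘ Prod.map Units.val id) := by
  refine (energy_le_two_mul_energy_filter_add _ f (·.1 = 0)).trans ?_
  gcongr
  · calc (energy {x ∈ A ×ˢ A ×ˢ A | x.1 = 0} f : ℝ)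
        ≤ (#{x ∈ A ×ˢ A ×ˢ A | x.1 = 0} : ℝ) ^ 2 := by exact_mod_cast energy_le_card_sq _ _
      _ ≤ ((#A : ℝ) ^ 2) ^ 2 := by gcongr; exact_mod_cast card_filter_fst_eq_zero_le A
      _ = (#A : ℝ) ^ 4 := by ring
  · refine energy_le_energy_comp_of_surjOn f fun x hx ↦ ?_
    obtain ⟨hA, hx0⟩ := mem_filter.1 hx
    obtain ⟨ha, hbd⟩ := mem_product.1 hA
    exact ⟨(Units.mk0 x.1 hx0, x.2), mem_product.2 ⟨mem_unitsFinset.2 ha, hbd⟩, rfl⟩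

variable [LinearOrder F] [IsStrictOrderedRing F] {ε : F} (hε : ε ≠ 0) {n K : ℝ} (hK : 2 ≤ K)
  (hKn : K ^ 6000 ≤ n) (hlog : 768 * (1 + Real.log (n ^ 4)) ≤ K) (hA : (#A : ℝ) ≤ n ^ 2)

include hε hK hKn hlog hA

-- `a b + ε d` is the value at `b` of the line of slope `a` and intercept `ε d`.
lemma energy_mul_add_mul_lt :
    (energy (unitsFinset A ×ˢ A ×ˢ A) (fun x ↦ x.1 * x.2.1 + ε * x.2.2) : ℝ) < n ^ 9 / K := by
  set line : Fˣ × F → AffGroup F := fun p ↦ ⟨p.1, ε * p.2⟩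
  set L := (unitsFinset A ×ˢ A).image line
  have hL : ∀ g ∈ L, g.slope ∈ unitsFinset A ∧ g.intercept ∈ A.image (ε * ·) :=
    forall_mem_image.2 fun p hp ↦
      ⟨(mem_product.1 hp).1, mem_image_of_mem _ (mem_product.1 hp).2⟩
  set triple : AffGroup F × F → Fˣ × F × F := fun p ↦ (p.1.slope, p.2, ε⁻¹ * p.1.intercept)
  have triple_surjOn :
      Set.SurjOn triple (L ×ˢ A : Finset _) (unitsFinset A ×ˢ A ×ˢ A : Finset _) := by
    rintro ⟨u, b, d⟩ hx
    obtain ⟨hu, hb, hd⟩ : u ∈ unitsFinset A ∧ b ∈ A ∧ d ∈ A := by simpa using hx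
    refine ⟨(line (u, d), b), mem_product.2 ⟨mem_image_of_mem _ (mem_product.2 ⟨hu, hd⟩), hb⟩, ?_⟩
    simp [triple, line, hε]
  have act_eq : (fun x : Fˣ × F × F ↦ x.1 * x.2.1 + ε * x.2.2) ∘ triple = act := by
    funext p
    simp [triple, act, AffGroup.smul_eq, hε]
  calc (energy (unitsFinset A ×ˢ A ×ˢ A) (fun x ↦ x.1 * x.2.1 + ε * x.2.2) : ℝ)
      ≤ energy (L ×ˢ A) act := by
        rw [← act_eq]
        exact_mod_cast energy_le_energy_comp_of_surjOn _ triple_surjOn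
    _ < n ^ 9 / K := AffGroup.energy_act_lt_of_slope_intercept hL hK hKn hlog
        (le_trans (by exact_mod_cast card_unitsFinset_le A) hA)
        (le_trans (by exact_mod_cast card_image_le) hA) hA

-- `a (b + ε d)` is the value at `b` of the line of slope `a` and root `-ε d`.
lemma energy_mul_add_lt :
    (energy (unitsFinset A ×ˢ A ×ˢ A) (fun x ↦ x.1 * (x.2.1 + ε * x.2.2)) : ℝ) < n ^ 9 / K := by
  set line : Fˣ × F → AffGroup F := fun p ↦ ⟨p.1, p.1 * (ε * p.2)⟩
  have root_line (p) : (line p).root = -ε * p.2 := by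
    have := (line p).smul_root
    rw [AffGroup.smul_eq, ← mul_add] at this
    linear_combination (Units.mul_right_eq_zero _).1 this
  set L := (unitsFinset A ×ˢ A).image line
  have hL : ∀ g ∈ L, g.slope ∈ unitsFinset A ∧ g.root ∈ A.image (-ε * ·) :=
    forall_mem_image.2 fun p hp ↦
      ⟨(mem_product.1 hp).1, by rw [root_line]; exact mem_image_of_mem _ (mem_product.1 hp).2⟩
  set triple : AffGroup F × F → Fˣ × F × F := fun p ↦ (p.1.slope, p.2, -ε⁻¹ * p.1.root)
  have triple_surjOn :
      Set.SurjOn triple (L ×ˢ A : Finset _) (unitsFinset A ×ˢ A ×ˢ A : Finset _) := by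
    rintro ⟨u, b, d⟩ hx
    obtain ⟨hu, hb, hd⟩ : u ∈ unitsFinset A ∧ b ∈ A ∧ d ∈ A := by simpa using hx
    refine ⟨(line (u, d), b), mem_product.2 ⟨mem_image_of_mem _ (mem_product.2 ⟨hu, hd⟩), hb⟩, ?_⟩
    simp only [triple, root_line]
    simp [line, hε]
  have act_eq : (fun x : Fˣ × F × F ↦ x.1 * (x.2.1 + ε * x.2.2)) ∘ triple = act := by
    funext p
    simp [triple, act, AffGroup.smul_eq_slope_mul_sub_root, hε, sub_eq_add_neg]
  calc (energy (unitsFinset A ×ˢ A ×ˢ A) (fun x ↦ x.1 * (x.2.1 + ε * x.2.2)) : ℝ)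
      ≤ energy (L ×ˢ A) act := by
        rw [← act_eq]
        exact_mod_cast energy_le_energy_comp_of_surjOn _ triple_surjOn
    _ < n ^ 9 / K := AffGroup.energy_act_lt_of_slope_root hL hK hKn
        (le_trans (by exact_mod_cast card_unitsFinset_le A) hA)
        (le_trans (by exact_mod_cast card_image_le) hA) hlog hA

end Triples

section Parameters

lemma exists_forall_ge_log_le_rpow {c : ℝ} (hc : 0 < c) :
    ∃ x₀ : ℝ, 1 ≤ x₀ ∧ ∀ x ≥ x₀, 768 * (1 + Real.log (√x ^ 4)) ≤ x ^ c := by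
  have log_le := (isLittleO_log_rpow_atTop hc).bound (show (0 : ℝ) < 1 / 3072 by norm_num)
  have rpow_ge := (tendsto_rpow_atTop hc).eventually_ge_atTop 1536
  obtain ⟨x₀, hx₀⟩ := Filter.eventually_atTop.1 (log_le.and rpow_ge)
  refine ⟨max x₀ 1, le_max_right _ _, fun x hx ↦ ?_⟩
  obtain ⟨hlog, hrpow⟩ := hx₀ x (le_of_max_le_left hx)
  have hx0 : 0 ≤ x := zero_le_one.trans (le_of_max_le_right hx)
  rw [Real.norm_eq_abs, Real.norm_of_nonneg (by positivity)] at hlog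
  rw [show √x ^ 4 = (√x ^ 2) ^ 2 by ring, Real.sq_sqrt hx0, Real.log_pow]
  push_cast
  linarith [le_abs_self (Real.log x)]

lemma sqrt_pow_nine_div_rpow {x : ℝ} (hx : 0 < x) (c : ℝ) :
    √x ^ 9 / x ^ c = x ^ ((9 : ℝ) / 2 - c) := by
  rw [Real.sqrt_eq_rpow, ← Real.rpow_natCast, ← Real.rpow_mul hx.le, ← Real.rpow_sub hx]
  norm_num

lemma rpow_pow_six_thousand_eq_sqrt {x : ℝ} (hx : 0 ≤ x) :
    (x ^ (1 / 12000 : ℝ)) ^ 6000 = √x := by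
  rw [← Real.rpow_natCast, ← Real.rpow_mul hx, Real.sqrt_eq_rpow]
  norm_num

lemma energy_triples_le_mul_rpow {F κ : Type*} [Field F] {A : Finset F} {f : F × F × F → κ}
    {c x₀ : ℝ} (hc : c ≤ 1 / 2)
    (large : x₀ ≤ #A →
      (energy (unitsFinset A ×ˢ A ×ˢ A) (f ∘ Prod.map Units.val id) : ℝ) ≤
        (#A : ℝ) ^ ((9 : ℝ) / 2 - c)) :
    (energy (A ×ˢ A ×ˢ A) f : ℝ) ≤ (4 + x₀ ^ 6) * (#A : ℝ) ^ ((9 : ℝ) / 2 - c) := by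
  rcases A.eq_empty_or_nonempty with rfl | hne
  · simp only [empty_product, energy, filter_empty, card_empty, Nat.cast_zero]
    positivity
  have hA1 : (1 : ℝ) ≤ #A := by exact_mod_cast hne.card_pos
  rcases le_or_gt x₀ #A with hge | hlt
  · calc (energy (A ×ˢ A ×ˢ A) f : ℝ)
        ≤ 2 * (#A : ℝ) ^ 4 +
            2 * energy (unitsFinset A ×ˢ A ×ˢ A) (f ∘ Prod.map Units.val id) :=
          energy_triples_le A f
      _ ≤ 2 * (#A : ℝ) ^ ((9 : ℝ) / 2 - c) + 2 * (#A : ℝ) ^ ((9 : ℝ) / 2 - c) := by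
          gcongr
          · rw [← Real.rpow_natCast]
            exact Real.rpow_le_rpow_of_exponent_le hA1 (by norm_num; linarith)
          · exact large hge
      _ = (4 + 0) * (#A : ℝ) ^ ((9 : ℝ) / 2 - c) := by ring
      _ ≤ _ := by gcongr; positivity
  · calc (energy (A ×ˢ A ×ˢ A) f : ℝ) ≤ (#(A ×ˢ A ×ˢ A) : ℝ) ^ 2 := by
          exact_mod_cast energy_le_card_sq _ f
      _ = (#A : ℝ) ^ 6 * 1 := by
          rw [card_product, card_product]
          push_cast
          ring
      _ ≤ (4 + x₀ ^ 6) * (#A : ℝ) ^ ((9 : ℝ) / 2 - c) := by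
          gcongr
          · calc (#A : ℝ) ^ 6 ≤ x₀ ^ 6 := by gcongr
              _ ≤ 4 + x₀ ^ 6 := by linarith
          · exact Real.one_le_rpow hA1 (by linarith)

lemma exists_forall_energy_triples_le :
    ∃ C : ℝ, 0 < C ∧ ∀ {F κ : Type*} [Field F] {A : Finset F} {f : F × F × F → κ},
      (∀ {n K : ℝ}, 2 ≤ K → K ^ 6000 ≤ n → 768 * (1 + Real.log (n ^ 4)) ≤ K → (#A : ℝ) ≤ n ^ 2 →
        (energy (unitsFinset A ×ˢ A ×ˢ A) (f ∘ Prod.map Units.val id) : ℝ) < n ^ 9 / K) →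
      (energy (A ×ˢ A ×ˢ A) f : ℝ) ≤ C * (#A : ℝ) ^ ((9 : ℝ) / 2 - 1 / 12000) := by
  obtain ⟨x₀, hx₀, large⟩ := exists_forall_ge_log_le_rpow (c := 1 / 12000) (by norm_num)
  refine ⟨4 + x₀ ^ 6, by positivity, fun {F κ _ A f} hbound ↦
    energy_triples_le_mul_rpow (by norm_num) fun hA ↦ ?_⟩
  have hA0 : (0 : ℝ) < #A := by linarith
  have log_nonneg := Real.log_nonneg (one_le_pow₀ (Real.one_le_sqrt.2 (hx₀.trans hA)) (n := 4))
  have hlog := large _ hA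
  rw [← sqrt_pow_nine_div_rpow hA0]
  exact (hbound (by linarith) (rpow_pow_six_thousand_eq_sqrt hA0.le).le hlog
    (Real.sq_sqrt hA0.le).ge).le

end Parameters

theorem energy_A_mul_A_add_A_general :
    ∃ c C : ℝ, 0 < c ∧ 0 < C ∧
      ∀ (F : Type*) [Field F] [LinearOrder F] [IsStrictOrderedRing F] (A : Finset F) (ε : F),
        ε ≠ 0 →
        (Set.ncard {x : F × F × F × F × F × F |
            x.1 ∈ A ∧ x.2.1 ∈ A ∧ x.2.2.1 ∈ A ∧ x.2.2.2.1 ∈ A ∧ x.2.2.2.2.1 ∈ A ∧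
            x.2.2.2.2.2 ∈ A ∧
            x.1 * (x.2.1 + ε * x.2.2.1) = x.2.2.2.1 * (x.2.2.2.2.1 + ε * x.2.2.2.2.2)} : ℝ)
          ≤ C * (A.card : ℝ) ^ ((9 : ℝ) / 2 - c) ∧
        (Set.ncard {x : F × F × F × F × F × F |
            x.1 ∈ A ∧ x.2.1 ∈ A ∧ x.2.2.1 ∈ A ∧ x.2.2.2.1 ∈ A ∧ x.2.2.2.2.1 ∈ A ∧
            x.2.2.2.2.2 ∈ A ∧
            x.1 * x.2.1 + ε * x.2.2.1 = x.2.2.2.1 * x.2.2.2.2.1 + ε * x.2.2.2.2.2} : ℝ)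
          ≤ C * (A.card : ℝ) ^ ((9 : ℝ) / 2 - c) := by
  obtain ⟨C, hC, bound⟩ := exists_forall_energy_triples_le
  refine ⟨1 / 12000, C, by norm_num, hC, fun F _ _ _ A ε hε ↦ ⟨?_, ?_⟩⟩
  · rw [ncard_eq_energy_triples A fun x ↦ x.1 * (x.2.1 + ε * x.2.2)]
    exact bound (energy_mul_add_lt hε)
  · rw [ncard_eq_energy_triples A fun x ↦ x.1 * x.2.1 + ε * x.2.2]
    exact bound (energy_mul_add_mul_lt hε)

end

/-- **Theorem 1.10** (energy of `A(A±A)` and `AA±A`): there are absolute constants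
`c > 0` and `C` such that for every finite `A ⊆ ℝ` and each sign `ε ∈ {1, -1}`:
`#{(a,b,d,a',b',d') ∈ A⁶ : a(b+εd) = a'(b'+εd')} ≤ C|A|^{9/2−c}` and
`#{(a,b,d,a',b',d') ∈ A⁶ : ab+εd = a'b'+εd'} ≤ C|A|^{9/2−c}`. -/
theorem energy_A_mul_A_add_A :
    ∃ c C : ℝ, 0 < c ∧ 0 < C ∧
      ∀ A : Finset ℝ, ∀ ε : ℝ, (ε = 1 ∨ ε = -1) →
        (Set.ncard {x : ℝ × ℝ × ℝ × ℝ × ℝ × ℝ |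
            x.1 ∈ A ∧ x.2.1 ∈ A ∧ x.2.2.1 ∈ A ∧ x.2.2.2.1 ∈ A ∧ x.2.2.2.2.1 ∈ A ∧
            x.2.2.2.2.2 ∈ A ∧
            x.1 * (x.2.1 + ε * x.2.2.1) = x.2.2.2.1 * (x.2.2.2.2.1 + ε * x.2.2.2.2.2)} : ℝ)
          ≤ C * (A.card : ℝ) ^ ((9 : ℝ) / 2 - c) ∧
        (Set.ncard {x : ℝ × ℝ × ℝ × ℝ × ℝ × ℝ |
            x.1 ∈ A ∧ x.2.1 ∈ A ∧ x.2.2.1 ∈ A ∧ x.2.2.2.1 ∈ A ∧ x.2.2.2.2.1 ∈ A ∧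
            x.2.2.2.2.2 ∈ A ∧
            x.1 * x.2.1 + ε * x.2.2.1 = x.2.2.2.1 * x.2.2.2.2.1 + ε * x.2.2.2.2.2} : ℝ)
          ≤ C * (A.card : ℝ) ^ ((9 : ℝ) / 2 - c) := by
  obtain ⟨c, C, hc, hC, bound⟩ := energy_A_mul_A_add_A_general.{0}
  exact ⟨c, C, hc, hC, fun A ε hε ↦ bound ℝ A ε (by rcases hε with rfl | rfl <;> norm_num)⟩
end

section
/- There exist absolute constants c > 0 and C ≥ 1 such that for all M ≥ 1 and all finite nonempty sets A, B ⊆ R with |A·A| ≤ M·|A| and |A| ≤ |B|², the additive energy satisfies E⁺(A,B) ≤ C·M^C·|B|^(5/3)·|A|^(5/6 − c). -/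
open Pointwise

/-- Additive energy `E⁺(A,B) = #{(a,a',b,b') ∈ A×A×B×B : a − b = a' − b'}`. -/
noncomputable def addE (A B : Finset ℝ) : ℕ :=
  Set.ncard {x : ℝ × ℝ × ℝ × ℝ |
    x.1 ∈ A ∧ x.2.1 ∈ A ∧ x.2.2.1 ∈ B ∧ x.2.2.2 ∈ B ∧ x.1 - x.2.2.1 = x.2.1 - x.2.2.2}

/-!
Let `Q = A \ {0}`, which by Plünnecke's inequality has small iterated product sets. A set of
differences of `A` can be dilated by `Q` without growing much, and the dilates turn additive
relations into incidences between lines and a grid. The Szemerédi–Trotter bound for grids then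
shows that `A` has `O(|A|³ / t³)` differences with at least `t` representations, and that few
triples of such popular differences sum to zero.

The energy `E⁺(A, B)` is the sum of the entries of a Gram matrix `V Vᵀ = T + |A| I` indexed by `B`,
whose entry at `(b, b')` is the number of representations of `b - b'` in `A - A`. Two applications
of Cauchy–Schwarz bound the fourth power of the sum of the entries of `T` by
`|B|³ E⁺(A, B) (tr T³ + |A| tr T²)`. Here `tr T³` counts triples in `B` with popular cyclic
differences. Dilating each of them by `Q` and applying Cauchy–Schwarz once more, they are controlled
by the zero-sum triples of popular differences and by pairs of affinely equivalent triples in `B`,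
that is, by the rich lines of the grid `B × B`. The harmonic sums over the popularity levels only
cost logarithms, which the gain in the exponent of `|A|` absorbs.
-/

section

open Finset

/-! ### Lines meeting a grid -/

section Partition

variable {α β : Type*}

lemma card_le_card_image_add_card_collisions [DecidableEq β] (S : Finset α)
    (f : α → β) : #S ≤ #(S.image f) + #{p ∈ S.offDiag | f p.1 = f p.2} := by
  classical
  have fibre_le (k : ℕ) : k ≤ 1 + (k * k - k) := by
    rcases k with - | k
    · simp
    · have : k ≤ (k + 1) * k := Nat.le_mul_of_pos_left k k.succ_pos
      simp only [Nat.mul_succ]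
      omega
  have fibre_offDiag (b : β) :
      {p ∈ {p ∈ S.offDiag | f p.1 = f p.2} | f p.1 = b} = {x ∈ S | f x = b}.offDiag := by
    ext p
    simp only [mem_filter, mem_offDiag]
    grind
  calc #S = ∑ b ∈ S.image f, #{x ∈ S | f x = b} := card_eq_sum_card_image f S
    _ ≤ ∑ b ∈ S.image f, (1 + #{x ∈ S | f x = b}.offDiag) := by
        gcongr with b
        rw [offDiag_card]
        exact fibre_le _
    _ = #(S.image f) + #{p ∈ S.offDiag | f p.1 = f p.2} := by
        rw [sum_add_distrib, sum_const, smul_eq_mul, mul_one,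
          card_eq_sum_card_fiberwise (f := fun p : α × α => f p.1) (t := S.image f)]
        · simp only [fibre_offDiag]
        · intro p hp
          exact mem_image_of_mem f (mem_offDiag.1 (mem_filter.1 hp).1).1

lemma card_filter_eq_le_card_mul [DecidableEq β] {X : Finset α} {f : α → β} {u : ℕ}
    (hf : ∀ b, #{x ∈ X | f x = b} ≤ u) : #{p ∈ X ×ˢ X | f p.1 = f p.2} ≤ #X * u := by
  calc #{p ∈ X ×ˢ X | f p.1 = f p.2} = ∑ x ∈ X, #{y ∈ X | f y = f x} := by
        simp only [card_filter, sum_product, eq_comm]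
    _ ≤ #X * u := sum_le_card_nsmul _ _ _ fun x _ => hf (f x)

lemma exists_monotone_partition [LinearOrder α] {X : Finset α} {s u : ℕ} (hX : #X ≤ s * u) :
    ∃ f : α → ℕ, Monotone f ∧ (∀ x ∈ X, f x < s) ∧ ∀ i, #{x ∈ X | f x = i} ≤ u := by
  rcases u.eq_zero_or_pos with rfl | hu
  · obtain rfl : X = ∅ := by simpa using hX
    exact ⟨0, monotone_const, by simp, by simp⟩
  have rank_mono : Monotone fun x => #{y ∈ X | y < x} := fun x x' h =>
    card_le_card <| monotone_filter_right X fun _ _ hy => lt_of_lt_of_le hy h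
  have rank_strictMonoOn : StrictMonoOn (fun x => #{y ∈ X | y < x}) X := fun x hx x' _ h =>
    card_lt_card <| ssubset_iff_of_subset
      (monotone_filter_right X fun _ _ hy => lt_trans hy h) |>.2
        ⟨x, mem_filter.2 ⟨hx, h⟩, by simp⟩
  refine ⟨fun x => #{y ∈ X | y < x} / u, fun x y h => Nat.div_le_div_right (rank_mono h),
    fun x hx => Nat.div_lt_of_lt_mul ?_, fun i => ?_⟩
  · rw [mul_comm]
    refine lt_of_lt_of_le (card_lt_card ?_) hX
    exact filter_ssubset.2 ⟨x, hx, lt_irrefl x⟩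
  · calc #{x ∈ X | #{y ∈ X | y < x} / u = i} ≤ #(Ico (i * u) (i * u + u)) := by
          refine card_le_card_of_injOn (fun x => #{y ∈ X | y < x}) (fun x hx => ?_)
            (rank_strictMonoOn.injOn.mono (filter_subset _ _))
          obtain ⟨-, rfl⟩ := mem_filter.1 hx
          exact mem_Ico.2 ⟨Nat.div_mul_le_self _ _, Nat.lt_div_mul_add hu⟩
      _ = u := by simp

-- A monotone lattice path visits at most one cell on each antidiagonal of an `s × s` board.
lemma card_image_prodMk_le_of_monotone [LinearOrder α] {φ ψ : α → ℕ} {S : Finset α} {s : ℕ}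
    (hφ : Monotone φ) (hψ : Monotone ψ) (hφs : ∀ x ∈ S, φ x < s) (hψs : ∀ x ∈ S, ψ x < s) :
    #(S.image fun x => (φ x, ψ x)) ≤ 2 * s - 1 := by
  rw [← card_range (2 * s - 1)]
  refine card_le_card_of_injOn (fun c => c.1 + c.2) ?_ ?_
  · intro c hc
    obtain ⟨x, hx, rfl⟩ := mem_image.1 hc
    have := hφs x hx
    have := hψs x hx
    simp only [coe_range, Set.mem_Iio]
    omega
  · intro c hc d hd h
    obtain ⟨x, -, rfl⟩ := mem_image.1 hc
    obtain ⟨y, -, rfl⟩ := mem_image.1 hd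
    simp only at h
    rcases le_total x y with hxy | hxy <;>
    · have := hφ hxy
      have := hψ hxy
      exact Prod.ext (by grind) (by grind)

lemma card_image_prodMk_le_of_antitone [LinearOrder α] {φ ψ : α → ℕ} {S : Finset α} {s : ℕ}
    (hφ : Monotone φ) (hψ : Antitone ψ) (hφs : ∀ x ∈ S, φ x < s) (hψs : ∀ x ∈ S, ψ x < s) :
    #(S.image fun x => (φ x, ψ x)) ≤ 2 * s - 1 := by
  have image_reflect : S.image (fun x => (φ x, ψ x)) =
      (S.image fun x => (φ x, s - 1 - ψ x)).image fun c => (c.1, s - 1 - c.2) := by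
    rw [image_image]
    refine image_congr fun x hx => ?_
    have := hψs x hx
    exact Prod.ext rfl (by simp only [Function.comp_apply]; omega)
  rw [image_reflect]
  refine card_image_le.trans (card_image_prodMk_le_of_monotone hφ
    (fun x y h => Nat.sub_le_sub_left (hψ h) _) hφs fun x hx => ?_)
  have := hψs x hx
  omega

end Partition

section GridPoints

variable {F : Type*} [Field F] [DecidableEq F]

/-- The abscissas of the points of the grid `X × Y` on the line `y = l.1 * x + l.2`; lines are
encoded as pairs (slope, intercept). -/
def gridPoints (X Y : Finset F) (l : F × F) : Finset F := {x ∈ X | l.1 * x + l.2 ∈ Y}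

/-- The number of incidences between the lines in `L` and the points of the grid `X × Y`. -/
def gridIncidences (L : Finset (F × F)) (X Y : Finset F) : ℕ := ∑ l ∈ L, #(gridPoints X Y l)

lemma mem_gridPoints {X Y : Finset F} {l : F × F} {x : F} :
    x ∈ gridPoints X Y l ↔ x ∈ X ∧ l.1 * x + l.2 ∈ Y := mem_filter

lemma card_gridPoints_le_left (X Y : Finset F) (l : F × F) : #(gridPoints X Y l) ≤ #X :=
  card_filter_le _ _

lemma card_gridPoints_le_right (X Y : Finset F) {l : F × F} (hl : l.1 ≠ 0) :
    #(gridPoints X Y l) ≤ #Y :=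
  card_le_card_of_injOn (fun x => l.1 * x + l.2) (fun _ hx => (mem_gridPoints.1 hx).2)
    fun _ _ _ _ h => mul_left_cancel₀ hl (add_right_cancel h)

-- Two distinct points determine the line, so a pair of cells sees each pair of points once.
lemma sum_card_collisions_le {L : Finset (F × F)} {X Y : Finset F} {f g : F → ℕ} {u v : ℕ}
    (hf : ∀ i, #{x ∈ X | f x = i} ≤ u) (hg : ∀ j, #{y ∈ Y | g y = j} ≤ v) :
    ∑ l ∈ L, #{p ∈ (gridPoints X Y l).offDiag |
      (f p.1, g (l.1 * p.1 + l.2)) = (f p.2, g (l.1 * p.2 + l.2))} ≤ #X * u * (#Y * v) := by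
  rw [← card_sigma]
  refine le_trans ?_ (Nat.mul_le_mul (card_filter_eq_le_card_mul hf)
    (card_filter_eq_le_card_mul hg))
  rw [← card_product]
  refine card_le_card_of_injOn
    (fun q => (q.2, (q.1.1 * q.2.1 + q.1.2, q.1.1 * q.2.2 + q.1.2))) ?_ ?_
  · rintro ⟨l, x, y⟩ h
    simp only [mem_coe, mem_sigma, mem_filter, mem_offDiag, mem_gridPoints, Prod.mk.injEq] at h
    simp only [mem_coe, mem_product, mem_filter]
    tauto
  · rintro ⟨⟨a, b⟩, x, y⟩ h ⟨⟨a', b'⟩, x', y'⟩ - heq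
    simp only [mem_coe, mem_sigma, mem_filter, mem_offDiag] at h
    simp only [Prod.mk.injEq] at heq
    obtain ⟨⟨rfl, rfl⟩, hx, hy⟩ := heq
    obtain rfl : a = a' :=
      mul_right_cancel₀ (sub_ne_zero.2 h.2.1.2.2) (by linear_combination hx - hy)
    obtain rfl : b = b' := add_left_cancel hx
    rfl

end GridPoints

section GridIncidences

variable {F : Type*} [Field F] [LinearOrder F] [IsStrictOrderedRing F] {L : Finset (F × F)}
  {X Y : Finset F}

lemma gridIncidences_le_of_cells (hL : ∀ l ∈ L, l.1 ≠ 0) {s u v : ℕ} (hX : #X ≤ s * u)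
    (hY : #Y ≤ s * v) : gridIncidences L X Y ≤ (2 * s - 1) * #L + #X * u * (#Y * v) := by
  obtain ⟨f, hf, hfs, hfu⟩ := exists_monotone_partition hX
  obtain ⟨g, hg, hgs, hgv⟩ := exists_monotone_partition hY
  have cells_met {l : F × F} (hl : l ∈ L) :
      #((gridPoints X Y l).image fun x => (f x, g (l.1 * x + l.2))) ≤ 2 * s - 1 := by
    have hfs' : ∀ x ∈ gridPoints X Y l, f x < s := fun x hx => hfs x (mem_gridPoints.1 hx).1
    have hgs' : ∀ x ∈ gridPoints X Y l, g (l.1 * x + l.2) < s :=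
      fun x hx => hgs _ (mem_gridPoints.1 hx).2
    rcases (hL l hl).lt_or_gt with hneg | hpos
    · exact card_image_prodMk_le_of_antitone hf
        (fun x y h => hg (by nlinarith)) hfs' hgs'
    · exact card_image_prodMk_le_of_monotone hf
        (fun x y h => hg (by nlinarith)) hfs' hgs'
  calc gridIncidences L X Y
      ≤ ∑ l ∈ L, ((2 * s - 1) + #{p ∈ (gridPoints X Y l).offDiag |
          (f p.1, g (l.1 * p.1 + l.2)) = (f p.2, g (l.1 * p.2 + l.2))}) :=
        sum_le_sum fun l hl => (card_le_card_image_add_card_collisions _ _).trans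
          (Nat.add_le_add_right (cells_met hl) _)
    _ ≤ (2 * s - 1) * #L + #X * u * (#Y * v) := by
        rw [sum_add_distrib, sum_const, smul_eq_mul, mul_comm #L]
        exact Nat.add_le_add_left (sum_card_collisions_le hfu hgv) _

lemma exists_side_length {I l x y : ℕ} (hI : 2 * l ≤ I) (hx : I ≤ l * x) (hy : I ≤ l * y)
    (hl : 0 < l) :
    ∃ s, 0 < s ∧ s ≤ x ∧ s ≤ y ∧ I ≤ 8 * s * l ∧ 2 * ((2 * s - 1) * l) ≤ I := by
  have le_of_le_mul {k z : ℕ} (h : k * (4 * l) ≤ l * z) : k ≤ z := by nlinarith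
  have hdiv : I / (4 * l) * (4 * l) ≤ I := Nat.div_mul_le_self _ _
  have hmod : I < I / (4 * l) * (4 * l) + 4 * l := Nat.lt_div_mul_add (by omega)
  rcases (I / (4 * l)).eq_zero_or_pos with hzero | hpos
  · rw [hzero] at hmod
    exact ⟨1, one_pos, by nlinarith, by nlinarith, by omega, by omega⟩
  · refine ⟨I / (4 * l), hpos, le_of_le_mul (hdiv.trans hx), le_of_le_mul (hdiv.trans hy),
      by nlinarith, ?_⟩
    calc 2 * ((2 * (I / (4 * l)) - 1) * l) ≤ 2 * (2 * (I / (4 * l)) * l) := by gcongr; omega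
      _ ≤ I := by linarith

lemma exists_cell_width {s x : ℕ} (hs : 0 < s) (hx : s ≤ x) :
    ∃ u, x ≤ s * u ∧ s * u ≤ 2 * x := by
  have := Nat.div_mul_le_self x s
  have := Nat.lt_div_mul_add (a := x) hs
  exact ⟨x / s + 1, by linarith, by linarith⟩

-- The Szemerédi–Trotter bound for points forming a grid, by cutting the grid into `s × s` cells.
theorem gridIncidences_lt_or_pow_three_le (hL : ∀ l ∈ L, l.1 ≠ 0) :
    gridIncidences L X Y < 2 * #L ∨ gridIncidences L X Y ^ 3 ≤ 512 * (#X * #Y * #L) ^ 2 := by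
  set I := gridIncidences L X Y
  refine or_iff_not_imp_left.2 fun hmany => ?_
  rw [not_lt] at hmany
  have hIX : I ≤ #L * #X := sum_le_card_nsmul _ _ _ fun l _ => card_gridPoints_le_left X Y l
  have hIY : I ≤ #L * #Y :=
    sum_le_card_nsmul _ _ _ fun l hl => card_gridPoints_le_right X Y (hL l hl)
  rcases (#L).eq_zero_or_pos with hzero | hpos
  · have : I = 0 := by simpa [hzero] using hIX
    simp [this]
  obtain ⟨s, hs, hsX, hsY, hupper, hlower⟩ := exists_side_length hmany hIX hIY hpos
  obtain ⟨u, hXu, huX⟩ := exists_cell_width hs hsX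
  obtain ⟨v, hYv, hvY⟩ := exists_cell_width hs hsY
  have hcells : I ≤ 2 * (#X * u * (#Y * v)) := by
    have := gridIncidences_le_of_cells hL hXu hYv
    omega
  have hside : I * s ^ 2 ≤ 8 * (#X * #Y) ^ 2 := by
    calc I * s ^ 2 ≤ 2 * (#X * u * (#Y * v)) * s ^ 2 := by gcongr
      _ = 2 * (#X * #Y) * ((s * u) * (s * v)) := by ring
      _ ≤ 2 * (#X * #Y) * ((2 * #X) * (2 * #Y)) := by gcongr
      _ = 8 * (#X * #Y) ^ 2 := by ring
  calc I ^ 3 = I * I ^ 2 := by ring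
    _ ≤ I * (8 * s * #L) ^ 2 := by gcongr
    _ = 64 * #L ^ 2 * (I * s ^ 2) := by ring
    _ ≤ 64 * #L ^ 2 * (8 * (#X * #Y) ^ 2) := by gcongr
    _ = 512 * (#X * #Y * #L) ^ 2 := by ring

end GridIncidences

/-! ### Popular differences -/

section PopularDifferences

variable {G : Type*} [AddCommGroup G] [DecidableEq G]

/-- The number of representations of `x` as a difference of two elements of `S`. -/
abbrev differenceCount (S : Finset G) (x : G) : ℕ := S.addConvolution (-S) x

/-- The nonzero differences of `S` with at least `t` representations; the intended range is
`0 < t`, as for `t = 0` the set is still restricted to actual differences. -/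
def popularDifferences (S : Finset G) (t : ℕ) : Finset G :=
  {x ∈ (S - S).erase 0 | t ≤ differenceCount S x}

variable {S : Finset G} {t : ℕ} {x : G}

lemma mem_popularDifferences (ht : 0 < t) :
    x ∈ popularDifferences S t ↔ x ≠ 0 ∧ t ≤ differenceCount S x := by
  have mem_sub (h : t ≤ differenceCount S x) : x ∈ S - S := by
    rw [sub_eq_add_neg]
    exact addConvolution_pos.1 (ht.trans_le h)
  simp only [popularDifferences, mem_filter, mem_erase]
  tauto

lemma zero_notMem_popularDifferences : (0 : G) ∉ popularDifferences S t := by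
  simp [popularDifferences]

lemma mul_card_popularDifferences_le (ht : 0 < t) :
    t * #(popularDifferences S t) ≤ #{p ∈ S ×ˢ S | p.1 - p.2 ∈ popularDifferences S t} := by
  have fibre {x : G} (hx : x ∈ popularDifferences S t) :
      #{p ∈ {p ∈ S ×ˢ S | p.1 - p.2 ∈ popularDifferences S t} | p.1 - p.2 = x} =
        differenceCount S x := by
    rw [differenceCount, ← card_sub_eq, filter_filter]
    exact congrArg card (filter_congr fun p _ => and_iff_right_of_imp fun h => h ▸ hx)
  rw [card_eq_sum_card_fiberwise (s := {p ∈ S ×ˢ S | p.1 - p.2 ∈ popularDifferences S t})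
    (f := fun p => p.1 - p.2) fun p hp => (mem_filter.1 hp).2, mul_comm, ← smul_eq_mul]
  exact card_nsmul_le_sum _ _ _ fun x hx => (fibre hx).symm ▸ ((mem_popularDifferences ht).1 hx).2

/-- The pairs in `X × Y` that an element of `Z` completes to a triple with sum zero. -/
def zeroSumPairs (X Y Z : Finset G) : Finset (G × G) := {p ∈ X ×ˢ Y | -(p.1 + p.2) ∈ Z}

lemma zeroSumPairs_subset {X X' Y Y' Z Z' : Finset G} (hX : X ⊆ X') (hY : Y ⊆ Y') (hZ : Z ⊆ Z') :
    zeroSumPairs X Y Z ⊆ zeroSumPairs X' Y' Z' := fun _ hp =>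
  mem_filter.2 ⟨product_subset_product hX hY (mem_filter.1 hp).1, hZ (mem_filter.1 hp).2⟩

end PopularDifferences

section Dilates

variable {F : Type*} [Field F] [DecidableEq F] {Q S : Finset F} {t : ℕ} {q : F}

lemma differenceCount_le_differenceCount_mul (hq : q ∈ Q) (hq0 : q ≠ 0) (x : F) :
    differenceCount S x ≤ differenceCount (Q * S) (q * x) := by
  simp only [differenceCount, ← card_sub_eq]
  refine card_le_card_of_injOn (fun p => (q * p.1, q * p.2)) (fun p hp => ?_) (fun p _ p' _ h => ?_)
  · obtain ⟨hpS, rfl⟩ := mem_filter.1 hp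
    rw [mem_product] at hpS
    exact mem_filter.2 ⟨mem_product.2 ⟨mul_mem_mul hq hpS.1, mul_mem_mul hq hpS.2⟩,
      (mul_sub q p.1 p.2).symm⟩
  · rw [Prod.mk.injEq] at h
    exact Prod.ext (mul_left_cancel₀ hq0 h.1) (mul_left_cancel₀ hq0 h.2)

lemma mul_popularDifferences_subset (hQ : (0 : F) ∉ Q) (ht : 0 < t) :
    Q * popularDifferences S t ⊆ popularDifferences (Q * S) t := by
  intro y hy
  obtain ⟨q, hq, x, hx, rfl⟩ := mem_mul.1 hy
  have hq0 := ne_of_mem_of_not_mem hq hQ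
  rw [mem_popularDifferences ht] at hx ⊢
  exact ⟨mul_ne_zero hq0 hx.1, hx.2.trans (differenceCount_le_differenceCount_mul hq hq0 x)⟩

-- `a - b = x` reads `q⁻¹ * (q * a) - b = x` for every dilator `q`.
lemma card_mul_card_sub_mem_le_gridIncidences (hQ : (0 : F) ∉ Q) (S X : Finset F) :
    #Q * #{p ∈ S ×ˢ S | p.1 - p.2 ∈ X} ≤ gridIncidences (Q⁻¹ ×ˢ (-S)) (Q * S) X := by
  rw [gridIncidences, ← card_product, ← card_sigma]
  refine card_le_card_of_injOn (fun p => ⟨(p.1⁻¹, -p.2.2), p.1 * p.2.1⟩) ?_ ?_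
  · rintro ⟨q, a, b⟩ h
    simp only [mem_coe, mem_product, mem_filter] at h
    obtain ⟨hq, ⟨ha, hb⟩, hab⟩ := h
    simp only [mem_coe, mem_sigma, mem_product, mem_gridPoints]
    refine ⟨⟨inv_mem_inv hq, neg_mem_neg hb⟩, mul_mem_mul hq ha, ?_⟩
    rwa [inv_mul_cancel_left₀ (ne_of_mem_of_not_mem hq hQ), ← sub_eq_add_neg]
  · rintro ⟨q, a, b⟩ h ⟨q', a', b'⟩ - heq
    simp only [mem_coe, mem_product] at h
    simp only [Sigma.mk.injEq, Prod.mk.injEq, inv_inj, neg_inj, heq_eq_eq] at heq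
    obtain ⟨⟨rfl, rfl⟩, ha⟩ := heq
    rw [mul_left_cancel₀ (ne_of_mem_of_not_mem h.1 hQ) ha]

-- `x + y + z = 0` reads `-(q * z) * q⁻¹ - y = x` for every dilator `q`.
lemma card_mul_card_zeroSumPairs_le_gridIncidences (hQ : (0 : F) ∉ Q) (X Y Z : Finset F) :
    #Q * #(zeroSumPairs X Y Z) ≤ gridIncidences ((-(Q * Z)) ×ˢ (-Y)) Q⁻¹ X := by
  rw [gridIncidences, ← card_product, ← card_sigma]
  refine card_le_card_of_injOn (fun p => ⟨(-(p.1 * -(p.2.1 + p.2.2)), -p.2.2), p.1⁻¹⟩) ?_ ?_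
  · rintro ⟨q, x, y⟩ h
    simp only [mem_coe, mem_product, zeroSumPairs, mem_filter] at h
    obtain ⟨hq, ⟨hx, hy⟩, hz⟩ := h
    have hq0 := ne_of_mem_of_not_mem hq hQ
    simp only [mem_coe, mem_sigma, mem_product, mem_gridPoints]
    refine ⟨⟨neg_mem_neg (mul_mem_mul hq hz), neg_mem_neg hy⟩, inv_mem_inv hq, ?_⟩
    convert hx using 1
    field_simp
    ring
  · rintro ⟨q, x, y⟩ h ⟨q', x', y'⟩ - heq
    simp only [mem_coe, mem_product] at h
    simp only [Sigma.mk.injEq, Prod.mk.injEq, inv_inj, neg_inj, heq_eq_eq] at heq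
    obtain ⟨⟨hxy, rfl⟩, rfl⟩ := heq
    have := mul_left_cancel₀ (ne_of_mem_of_not_mem h.1 hQ) hxy
    rw [add_right_cancel (neg_inj.1 this)]

end Dilates

section PopularDifferencesBounds

variable {F : Type*} [Field F] [LinearOrder F] [IsStrictOrderedRing F] {Q S X Y Z : Finset F}
  {t : ℕ} {x : F} {K : ℝ}

lemma card_mul_card_zeroSumPairs_lt_or_pow_three_le (hQ : (0 : F) ∉ Q) (hZ : (0 : F) ∉ Z) :
    #Q * #(zeroSumPairs X Y Z) < 2 * (#(Q * Z) * #Y) ∨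
      (#Q * #(zeroSumPairs X Y Z)) ^ 3 ≤ 512 * (#Q * #X * (#(Q * Z) * #Y)) ^ 2 := by
  have hincidences := card_mul_card_zeroSumPairs_le_gridIncidences hQ X Y Z
  have hslopes : ∀ l ∈ (-(Q * Z)) ×ˢ (-Y), l.1 ≠ 0 := by
    intro l hl
    obtain ⟨q, hq, z, hz, hl⟩ := mem_mul.1 (mem_neg'.1 (mem_product.1 hl).1)
    have := mul_ne_zero (ne_of_mem_of_not_mem hq hQ) (ne_of_mem_of_not_mem hz hZ)
    rwa [hl, neg_ne_zero] at this
  have hst := gridIncidences_lt_or_pow_three_le (X := Q⁻¹) (Y := X) hslopes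
  simp only [card_product, card_neg, card_inv] at hst
  exact hst.imp hincidences.trans_lt (Nat.pow_le_pow_left hincidences 3).trans

theorem pow_three_mul_card_popularDifferences_le (hQ0 : (0 : F) ∉ Q) (hQ : Q.Nonempty)
    (hK : 1 ≤ K) (hS : (#S : ℝ) ≤ K * #Q) (hQS : (#(Q * S) : ℝ) ≤ K * #Q) (ht : 0 < t) :
    (t : ℝ) ^ 3 * #(popularDifferences S t) ≤ 512 * K ^ 4 * (#Q : ℝ) ^ 3 := by
  set D := popularDifferences S t
  rcases D.eq_empty_or_nonempty with hempty | ⟨x, hx⟩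
  · simp only [hempty, card_empty, Nat.cast_zero, mul_zero]
    positivity
  have hq : (0 : ℝ) < #Q := mod_cast hQ.card_pos
  have hd : (0 : ℝ) < #D := mod_cast card_pos.2 ⟨x, hx⟩
  have htK : (t : ℝ) ≤ K * #Q := by
    refine le_trans ?_ hS
    exact_mod_cast ((mem_popularDifferences ht).1 hx).2.trans addConvolution_le_card_left
  have hincidences : #Q * (t * #D) ≤ gridIncidences (Q⁻¹ ×ˢ (-S)) (Q * S) D :=
    (Nat.mul_le_mul_left _ (mul_card_popularDifferences_le ht)).trans
      (card_mul_card_sub_mem_le_gridIncidences hQ0 S D)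
  have hslopes : ∀ l ∈ Q⁻¹ ×ˢ (-S), l.1 ≠ 0 := fun l hl =>
    ne_of_mem_of_not_mem (mem_product.1 hl).1 (by simpa using hQ0)
  have hst := gridIncidences_lt_or_pow_three_le (X := Q * S) (Y := D) hslopes
  simp only [card_product, card_neg, card_inv] at hst
  rcases hst with hfew | hmany
  · have hlinear : (t : ℝ) * #D ≤ 2 * (K * #Q) := by
      refine le_trans ?_ (mul_le_mul_of_nonneg_left hS zero_le_two)
      have : #Q * (t * #D) ≤ #Q * (2 * #S) := by linarith
      exact_mod_cast Nat.le_of_mul_le_mul_left this hQ.card_pos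
    calc (t : ℝ) ^ 3 * #D = (t : ℝ) ^ 2 * (t * #D) := by ring
      _ ≤ (K * #Q) ^ 2 * (2 * (K * #Q)) := by gcongr
      _ = 2 * K ^ 3 * (#Q : ℝ) ^ 3 := by ring
      _ ≤ 512 * K ^ 4 * (#Q : ℝ) ^ 3 := by gcongr <;> norm_num [hK]
  · have hcubic : ((#Q : ℝ) * (t * #D)) ^ 3 ≤ 512 * (#(Q * S) * #D * (#Q * #S)) ^ 2 :=
      mod_cast (Nat.pow_le_pow_left hincidences 3).trans hmany
    refine le_of_mul_le_mul_right ?_ (by positivity : 0 < (#D : ℝ) ^ 2 * #Q ^ 3)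
    calc (t : ℝ) ^ 3 * #D * ((#D : ℝ) ^ 2 * #Q ^ 3) = ((#Q : ℝ) * (t * #D)) ^ 3 := by ring
      _ ≤ 512 * ((#(Q * S) : ℝ) * #D * (#Q * #S)) ^ 2 := hcubic
      _ ≤ 512 * (K * #Q * #D * (#Q * (K * #Q))) ^ 2 := by gcongr
      _ = 512 * K ^ 4 * (#Q : ℝ) ^ 3 * ((#D : ℝ) ^ 2 * #Q ^ 3) := by ring

-- All `#Q` dilates of a difference of `S` are popular in `Q * S`.
theorem differenceCount_pow_three_le (hQ0 : (0 : F) ∉ Q) (hQ : Q.Nonempty) (hK : 1 ≤ K)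
    (hQS : (#(Q * S) : ℝ) ≤ K * #Q) (hQQS : (#(Q * (Q * S)) : ℝ) ≤ K * #Q) (hx : x ≠ 0) :
    (differenceCount S x : ℝ) ^ 3 ≤ 512 * K ^ 4 * (#Q : ℝ) ^ 2 := by
  rcases (differenceCount S x).eq_zero_or_pos with hzero | hpos
  · rw [hzero, Nat.cast_zero, zero_pow three_ne_zero]
    positivity
  have hdilates : #Q ≤ #(popularDifferences (Q * S) (differenceCount S x)) := by
    rw [← card_image_of_injective Q (mul_left_injective₀ hx)]
    refine card_le_card fun y hy => mul_popularDifferences_subset hQ0 hpos ?_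
    obtain ⟨q, hq, rfl⟩ := mem_image.1 hy
    exact mul_mem_mul hq ((mem_popularDifferences hpos).2 ⟨hx, le_rfl⟩)
  refine le_of_mul_le_mul_right ?_ (mod_cast hQ.card_pos : (0 : ℝ) < #Q)
  calc (differenceCount S x : ℝ) ^ 3 * #Q
      ≤ (differenceCount S x : ℝ) ^ 3 *
          #(popularDifferences (Q * S) (differenceCount S x)) := by gcongr
    _ ≤ 512 * K ^ 4 * (#Q : ℝ) ^ 3 :=
        pow_three_mul_card_popularDifferences_le hQ0 hQ hK hQS hQQS hpos
    _ = 512 * K ^ 4 * (#Q : ℝ) ^ 2 * #Q := by ring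

-- The arithmetic of `pow_six_mul_card_zeroSumPairs_pow_three_le`; `x`, `y`, `z` are set sizes.
lemma pow_six_mul_pow_three_le {P q T x y z t₁ t₂ t₃ : ℝ} (hq : 1 ≤ q) (hT : 0 ≤ T)
    (hx : 0 ≤ x) (hy : 0 ≤ y) (hz : 0 ≤ z) (ht : 0 < t₁) (h₂ : t₁ ≤ t₂) (h₃ : t₁ ≤ t₃)
    (hxP : t₁ ^ 3 * x ≤ P * q ^ 3) (hyP : t₂ ^ 3 * y ≤ P * q ^ 3) (hzP : t₃ ^ 3 * z ≤ P * q ^ 3)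
    (h : q * T ≤ 2 * (z * y) ∨ (q * T) ^ 3 ≤ 512 * (q * x * (z * y)) ^ 2) :
    (t₁ * t₂ * t₃) ^ 6 * T ^ 3 ≤ 512 * P ^ 6 * q ^ 17 := by
  have ht₂ : 0 < t₂ := ht.trans_le h₂
  have ht₃ : 0 < t₃ := ht.trans_le h₃
  have hP : 0 ≤ P * q ^ 3 := (by positivity : 0 ≤ t₁ ^ 3 * x).trans hxP
  have hzy : (t₃ ^ 3 * z) * (t₂ ^ 3 * y) ≤ P ^ 2 * q ^ 6 := by
    calc (t₃ ^ 3 * z) * (t₂ ^ 3 * y) ≤ (P * q ^ 3) * (P * q ^ 3) := by gcongr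
      _ = P ^ 2 * q ^ 6 := by ring
  rcases h with hfew | hmany
  · have hlinear : (t₁ * t₂ * t₃) ^ 2 * T ≤ 2 * P ^ 2 * q ^ 5 := by
      refine le_of_mul_le_mul_left ?_ (by positivity : 0 < q)
      calc q * ((t₁ * t₂ * t₃) ^ 2 * T) = t₁ * t₁ * (t₂ ^ 2 * t₃ ^ 2) * (q * T) := by ring
        _ ≤ t₂ * t₃ * (t₂ ^ 2 * t₃ ^ 2) * (2 * (z * y)) := by gcongr
        _ = 2 * ((t₃ ^ 3 * z) * (t₂ ^ 3 * y)) := by ring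
        _ ≤ 2 * (P ^ 2 * q ^ 6) := by gcongr
        _ = q * (2 * P ^ 2 * q ^ 5) := by ring
    calc (t₁ * t₂ * t₃) ^ 6 * T ^ 3 = ((t₁ * t₂ * t₃) ^ 2 * T) ^ 3 := by ring
      _ ≤ (2 * P ^ 2 * q ^ 5) ^ 3 := by gcongr
      _ = 8 * P ^ 6 * q ^ 15 := by ring
      _ ≤ 512 * P ^ 6 * q ^ 17 := by gcongr <;> norm_num
  · refine le_of_mul_le_mul_left ?_ (by positivity : 0 < q ^ 3)
    calc q ^ 3 * ((t₁ * t₂ * t₃) ^ 6 * T ^ 3) = (t₁ * t₂ * t₃) ^ 6 * (q * T) ^ 3 := by ring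
      _ ≤ (t₁ * t₂ * t₃) ^ 6 * (512 * (q * x * (z * y)) ^ 2) := by gcongr
      _ = 512 * q ^ 2 * ((t₁ ^ 3 * x) ^ 2 * ((t₃ ^ 3 * z) * (t₂ ^ 3 * y)) ^ 2) := by ring
      _ ≤ 512 * q ^ 2 * ((P * q ^ 3) ^ 2 * (P ^ 2 * q ^ 6) ^ 2) := by gcongr
      _ = q ^ 3 * (512 * P ^ 6 * q ^ 17) := by ring

theorem pow_six_mul_card_zeroSumPairs_pow_three_le (hQ0 : (0 : F) ∉ Q) (hQ : Q.Nonempty)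
    (hK : 1 ≤ K) (hS : (#S : ℝ) ≤ K * #Q) (hQS : (#(Q * S) : ℝ) ≤ K * #Q)
    (hQQS : (#(Q * (Q * S)) : ℝ) ≤ K * #Q) {t₁ t₂ t₃ : ℕ} (ht : 0 < t₁) (h₂ : t₁ ≤ t₂)
    (h₃ : t₁ ≤ t₃) :
    (t₁ * t₂ * t₃ : ℝ) ^ 6 * (#(zeroSumPairs (popularDifferences S t₁)
      (popularDifferences S t₂) (popularDifferences S t₃)) : ℝ) ^ 3 ≤
        2 ^ 63 * K ^ 24 * (#Q : ℝ) ^ 17 := by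
  have hsub := card_le_card (mul_popularDifferences_subset (S := S) hQ0 (ht.trans_le h₃))
  have hst := (card_mul_card_zeroSumPairs_lt_or_pow_three_le (X := popularDifferences S t₁)
    (Y := popularDifferences S t₂) hQ0 (zero_notMem_popularDifferences (S := S) (t := t₃))).imp
      (fun h => h.le.trans (show _ ≤ 2 * (#(popularDifferences (Q * S) t₃) * _) by gcongr))
      (fun h => h.trans (show _ ≤ 512 * (_ * (#(popularDifferences (Q * S) t₃) * _)) ^ 2 by gcongr))
  calc _ ≤ 512 * (512 * K ^ 4) ^ 6 * (#Q : ℝ) ^ 17 := by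
        refine pow_six_mul_pow_three_le (mod_cast hQ.card_pos) (by positivity) (by positivity)
          (by positivity) (by positivity) (mod_cast ht) (mod_cast h₂) (mod_cast h₃)
          (pow_three_mul_card_popularDifferences_le hQ0 hQ hK hS hQS ht)
          (pow_three_mul_card_popularDifferences_le hQ0 hQ hK hS hQS (ht.trans_le h₂))
          (pow_three_mul_card_popularDifferences_le hQ0 hQ hK hQS hQQS (ht.trans_le h₃))
          (mod_cast hst)
    _ = 2 ^ 63 * K ^ 24 * (#Q : ℝ) ^ 17 := by ring

end PopularDifferencesBounds

/-! ### Affine copies of triples -/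

section RichLines

variable {F : Type*} [Field F] [LinearOrder F] [IsStrictOrderedRing F] {L : Finset (F × F)}
  {B : Finset F}

lemma pow_three_mul_card_le_of_rich (hL : ∀ l ∈ L, l.1 ≠ 0) {t : ℕ} (ht : 2 ≤ t)
    (hrich : ∀ l ∈ L, t ≤ #(gridPoints B B l)) : t ^ 3 * #L ≤ 512 * #B ^ 4 := by
  have hincidences : t * #L ≤ gridIncidences L B B := by
    rw [mul_comm]
    exact card_nsmul_le_sum _ _ _ hrich
  rcases (#L).eq_zero_or_pos with hzero | hpos
  · simp [hzero]
  rcases gridIncidences_lt_or_pow_three_le (X := B) (Y := B) hL with hfew | hmany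
  · have : 2 * #L ≤ t * #L := by gcongr
    omega
  · refine Nat.le_of_mul_le_mul_right ?_ (pow_pos hpos 2)
    calc t ^ 3 * #L * #L ^ 2 = (t * #L) ^ 3 := by ring
      _ ≤ gridIncidences L B B ^ 3 := by gcongr
      _ ≤ 512 * (#B * #B * #L) ^ 2 := hmany
      _ = 512 * #B ^ 4 * #L ^ 2 := by ring

lemma pow_three_le_four_mul_sum_sq {k : ℕ} (hk : 2 ≤ k) : k ^ 3 ≤ 4 * ∑ t ∈ Icc 2 k, t ^ 2 := by
  induction k, hk using Nat.le_induction with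
  | base => simp
  | succ k hk ih =>
    rw [sum_Icc_succ_top (by omega)]
    nlinarith

lemma sum_inv_Icc_two_le_harmonic (n : ℕ) : ∑ t ∈ Icc 2 n, (t : ℝ)⁻¹ ≤ harmonic n := by
  rw [harmonic_eq_sum_Icc]
  push_cast
  gcongr
  norm_num

theorem sum_card_gridPoints_pow_three_le (hL : ∀ l ∈ L, l.1 ≠ 0)
    (hrich : ∀ l ∈ L, 2 ≤ #(gridPoints B B l)) :
    ∑ l ∈ L, (#(gridPoints B B l) : ℝ) ^ 3 ≤ 2048 * (#B : ℝ) ^ 4 * harmonic #B := by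
  have layers {l : F × F} (hl : l ∈ L) : #(gridPoints B B l) ^ 3 ≤
      4 * ∑ t ∈ Icc 2 #B, if t ≤ #(gridPoints B B l) then t ^ 2 else 0 := by
    refine (pow_three_le_four_mul_sum_sq (hrich l hl)).trans ?_
    rw [← sum_filter]
    gcongr
    intro t ht
    rw [mem_Icc] at ht
    exact mem_filter.2
      ⟨mem_Icc.2 ⟨ht.1, ht.2.trans (card_gridPoints_le_left B B l)⟩, ht.2⟩
  have layer_le {t : ℕ} (ht : t ∈ Icc 2 #B) :
      (t : ℝ) ^ 2 * #{l ∈ L | t ≤ #(gridPoints B B l)} ≤ 512 * (#B : ℝ) ^ 4 * (t : ℝ)⁻¹ := by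
    have ht2 : 2 ≤ t := (mem_Icc.1 ht).1
    have := pow_three_mul_card_le_of_rich (L := {l ∈ L | t ≤ #(gridPoints B B l)})
      (fun l hl => hL l (mem_filter.1 hl).1) ht2 fun l hl => (mem_filter.1 hl).2
    rw [← div_eq_mul_inv, le_div_iff₀ (by positivity)]
    calc (t : ℝ) ^ 2 * #{l ∈ L | t ≤ #(gridPoints B B l)} * t
        = (t : ℝ) ^ 3 * #{l ∈ L | t ≤ #(gridPoints B B l)} := by ring
      _ ≤ 512 * (#B : ℝ) ^ 4 := mod_cast this
  calc ∑ l ∈ L, (#(gridPoints B B l) : ℝ) ^ 3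
      ≤ ∑ l ∈ L, 4 * ∑ t ∈ Icc 2 #B, if t ≤ #(gridPoints B B l) then (t : ℝ) ^ 2 else 0 := by
        gcongr with l hl
        exact_mod_cast layers hl
    _ = 4 * ∑ t ∈ Icc 2 #B, (t : ℝ) ^ 2 * #{l ∈ L | t ≤ #(gridPoints B B l)} := by
        rw [← mul_sum, sum_comm]
        simp only [← sum_filter, sum_const, nsmul_eq_mul, mul_comm]
    _ ≤ 4 * ∑ t ∈ Icc 2 #B, 512 * (#B : ℝ) ^ 4 * (t : ℝ)⁻¹ := by
        gcongr 4 * ?_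
        exact sum_le_sum fun t ht => layer_le ht
    _ = 2048 * (#B : ℝ) ^ 4 * ∑ t ∈ Icc 2 #B, (t : ℝ)⁻¹ := by rw [← mul_sum]; ring
    _ ≤ 2048 * (#B : ℝ) ^ 4 * harmonic #B := by
        gcongr
        exact sum_inv_Icc_two_le_harmonic _

end RichLines

lemma card_sq_le_card_mul_card_collisions {α β : Type*} [DecidableEq β] {Ω : Finset α}
    {T : Finset β} {φ : α → β} (h : Set.MapsTo φ Ω T) :
    #Ω ^ 2 ≤ #T * #{p ∈ Ω ×ˢ Ω | φ p.1 = φ p.2} := by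
  have hpairs : #{p ∈ Ω ×ˢ Ω | φ p.1 = φ p.2} = ∑ y ∈ T, #{w ∈ Ω | φ w = y} ^ 2 := by
    rw [card_eq_sum_card_fiberwise (s := {p ∈ Ω ×ˢ Ω | φ p.1 = φ p.2}) (f := fun p => φ p.1)
      fun p hp => h (mem_product.1 (mem_filter.1 hp).1).1]
    refine sum_congr rfl fun y _ => ?_
    rw [sq, ← card_product, ← filter_product, filter_filter]
    exact congrArg card (filter_congr fun p _ => by grind)
  rw [hpairs, card_eq_sum_card_fiberwise h]
  exact sq_sum_le_card_mul_sum_sq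

section DilatedDifferences

variable {F : Type*} [Field F]

/-- Consecutive differences of a triple `w.2`, dilated by `w.1`. -/
def dilatedDifferences (w : F × F × F × F) : F × F :=
  (w.1 * (w.2.1 - w.2.2.1), w.1 * (w.2.2.1 - w.2.2.2))

/-- The affine map, as a line, with slope `w.1 / w'.1` that sends the first entry of the triple
`w.2` to the first entry of the triple `w'.2`. -/
def connectingLine (w w' : F × F × F × F) : F × F :=
  (w.1 / w'.1, w'.2.1 - w.1 / w'.1 * w.2.1)

lemma connectingLine_apply_fst (w w' : F × F × F × F) :
    (connectingLine w w').1 * w.2.1 + (connectingLine w w').2 = w'.2.1 := by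
  simp [connectingLine]

variable {w w' : F × F × F × F}

lemma connectingLine_apply_snd (hw' : w'.1 ≠ 0)
    (h : dilatedDifferences w = dilatedDifferences w') :
    (connectingLine w w').1 * w.2.2.1 + (connectingLine w w').2 = w'.2.2.1 := by
  simp only [dilatedDifferences, Prod.mk.injEq] at h
  simp only [connectingLine]
  field_simp
  linear_combination -h.1

lemma connectingLine_apply_thd (hw' : w'.1 ≠ 0)
    (h : dilatedDifferences w = dilatedDifferences w') :
    (connectingLine w w').1 * w.2.2.2 + (connectingLine w w').2 = w'.2.2.2 := by
  simp only [dilatedDifferences, Prod.mk.injEq] at h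
  simp only [connectingLine]
  field_simp
  linear_combination -h.1 - h.2

lemma eq_of_connectingLine_eq {v v' : F × F × F × F} (hw' : w'.1 ≠ 0)
    (hw : dilatedDifferences w = dilatedDifferences w')
    (hv : dilatedDifferences v = dilatedDifferences v') (hdil : w'.1 = v'.1)
    (htriple : w.2 = v.2) (hline : connectingLine w w' = connectingLine v v') :
    w = v ∧ w' = v' := by
  have hv' : v'.1 ≠ 0 := hdil ▸ hw'
  have hslope : w.1 / w'.1 = v.1 / v'.1 := congrArg Prod.fst hline
  rw [hdil, div_left_inj' hv'] at hslope
  refine ⟨Prod.ext hslope htriple, Prod.ext hdil (Prod.ext ?_ (Prod.ext ?_ ?_))⟩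
  · rw [← connectingLine_apply_fst w w', ← connectingLine_apply_fst v v', hline, htriple]
  · rw [← connectingLine_apply_snd hw' hw, ← connectingLine_apply_snd hv' hv, hline, htriple]
  · rw [← connectingLine_apply_thd hw' hw, ← connectingLine_apply_thd hv' hv, hline, htriple]

variable [DecidableEq F] {B Q : Finset F} {N : Finset (F × F × F)}

/-- The pairs of dilated triples, with dilators in `Q` and triples in `N`, whose consecutive
differences agree. -/
def dilationCollisions (Q : Finset F) (N : Finset (F × F × F)) :
    Finset ((F × F × F × F) × (F × F × F × F)) :=
  {p ∈ (Q ×ˢ N) ×ˢ (Q ×ˢ N) | dilatedDifferences p.1 = dilatedDifferences p.2}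

lemma mem_dilationCollisions {p : (F × F × F × F) × (F × F × F × F)} :
    p ∈ dilationCollisions Q N ↔ ((p.1.1 ∈ Q ∧ p.1.2 ∈ N) ∧ p.2.1 ∈ Q ∧ p.2.2 ∈ N) ∧
      dilatedDifferences p.1 = dilatedDifferences p.2 := by
  simp only [dilationCollisions, mem_filter, mem_product]

lemma mem_gridPoints_of_mem_dilationCollisions (hQ : (0 : F) ∉ Q) (hNB : N ⊆ B ×ˢ B ×ˢ B)
    {p : (F × F × F × F) × (F × F × F × F)} (hp : p ∈ dilationCollisions Q N) :
    p.1.2 ∈ gridPoints B B (connectingLine p.1 p.2) ×ˢ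
      gridPoints B B (connectingLine p.1 p.2) ×ˢ gridPoints B B (connectingLine p.1 p.2) := by
  obtain ⟨⟨⟨-, h₁⟩, hq, h₂⟩, heq⟩ := mem_dilationCollisions.1 hp
  have hq0 := ne_of_mem_of_not_mem hq hQ
  have hB₁ := hNB h₁
  have hB₂ := hNB h₂
  simp only [mem_product] at hB₁ hB₂ ⊢
  simp only [mem_gridPoints, connectingLine_apply_fst, connectingLine_apply_snd hq0 heq,
    connectingLine_apply_thd hq0 heq]
  tauto

-- The connecting line, the first triple and the second dilator determine the collision.
lemma card_dilationCollisions_le_sum (hQ : (0 : F) ∉ Q) (hNB : N ⊆ B ×ˢ B ×ˢ B) :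
    #(dilationCollisions Q N) ≤
      #Q * ∑ l ∈ (dilationCollisions Q N).image fun p => connectingLine p.1 p.2,
        #(gridPoints B B l) ^ 3 := by
  simp only [pow_three, ← card_product, ← card_sigma]
  refine card_le_card_of_injOn (fun p => (p.2.1, ⟨connectingLine p.1 p.2, p.1.2⟩))
    (fun p hp => ?_) (fun p hp p' hp' h => ?_)
  · exact mem_product.2 ⟨(mem_dilationCollisions.1 hp).1.2.1, mem_sigma.2
      ⟨mem_image_of_mem _ hp, mem_gridPoints_of_mem_dilationCollisions hQ hNB hp⟩⟩
  · obtain ⟨⟨-, hq, -⟩, heq⟩ := mem_dilationCollisions.1 hp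
    simp only [Prod.mk.injEq, Sigma.mk.injEq, heq_eq_eq] at h
    obtain ⟨hfst, hsnd⟩ := eq_of_connectingLine_eq (ne_of_mem_of_not_mem hq hQ) heq
      (mem_dilationCollisions.1 hp').2 h.1 h.2.2 h.2.1
    exact Prod.ext hfst hsnd

end DilatedDifferences

theorem card_dilationCollisions_le {F : Type*} [Field F] [LinearOrder F] [IsStrictOrderedRing F]
    {B Q : Finset F} {N : Finset (F × F × F)} (hQ : (0 : F) ∉ Q)
    (hNB : N ⊆ B ×ˢ B ×ˢ B) (hN : ∀ p ∈ N, p.1 ≠ p.2.1) :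
    (#(dilationCollisions Q N) : ℝ) ≤ #Q * (2048 * (#B : ℝ) ^ 4 * harmonic #B) := by
  set L := (dilationCollisions Q N).image fun p => connectingLine p.1 p.2
  have hslopes : ∀ l ∈ L, l.1 ≠ 0 := by
    intro l hl
    obtain ⟨p, hp, rfl⟩ := mem_image.1 hl
    obtain ⟨⟨⟨hq, -⟩, hq', -⟩, -⟩ := mem_dilationCollisions.1 hp
    exact div_ne_zero (ne_of_mem_of_not_mem hq hQ) (ne_of_mem_of_not_mem hq' hQ)
  have hrich : ∀ l ∈ L, 2 ≤ #(gridPoints B B l) := by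
    intro l hl
    obtain ⟨p, hp, rfl⟩ := mem_image.1 hl
    obtain ⟨h₁, h₂₃⟩ := mem_product.1 (mem_gridPoints_of_mem_dilationCollisions hQ hNB hp)
    exact one_lt_card.2
      ⟨_, h₁, _, (mem_product.1 h₂₃).1, hN _ (mem_dilationCollisions.1 hp).1.1.2⟩
  calc (#(dilationCollisions Q N) : ℝ) ≤ #Q * ∑ l ∈ L, (#(gridPoints B B l) : ℝ) ^ 3 :=
        mod_cast card_dilationCollisions_le_sum hQ hNB
    _ ≤ #Q * (2048 * (#B : ℝ) ^ 4 * harmonic #B) := by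
        gcongr
        exact sum_card_gridPoints_pow_three_le hslopes hrich

section CyclicTriples

/-- The triples in `B` whose cyclic differences lie in `X`, `Y` and `Z`. -/
def cyclicTriples {G : Type*} [AddCommGroup G] [DecidableEq G] (B X Y Z : Finset G) :
    Finset (G × G × G) :=
  {p ∈ B ×ˢ B ×ˢ B | p.1 - p.2.1 ∈ X ∧ p.2.1 - p.2.2 ∈ Y ∧ p.2.2 - p.1 ∈ Z}

variable {F : Type*} [Field F] {B Q S X Y Z : Finset F}

lemma dilatedDifferences_mem_zeroSumPairs [DecidableEq F] {w : F × F × F × F}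
    (hw : w ∈ Q ×ˢ cyclicTriples B X Y Z) :
    dilatedDifferences w ∈ zeroSumPairs (Q * X) (Q * Y) (Q * Z) := by
  obtain ⟨hq, htriple⟩ := mem_product.1 hw
  obtain ⟨-, hX, hY, hZ⟩ := mem_filter.1 htriple
  refine mem_filter.2 ⟨mem_product.2 ⟨mul_mem_mul hq hX, mul_mem_mul hq hY⟩, ?_⟩
  convert mul_mem_mul hq hZ using 1
  simp only [dilatedDifferences]
  ring

variable [LinearOrder F] [IsStrictOrderedRing F]

theorem card_mul_card_cyclicTriples_sq_le (hQ0 : (0 : F) ∉ Q) (hQ : Q.Nonempty)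
    (hX : (0 : F) ∉ X) :
    (#Q : ℝ) * (#(cyclicTriples B X Y Z) : ℝ) ^ 2 ≤
      #(zeroSumPairs (Q * X) (Q * Y) (Q * Z)) * (2048 * (#B : ℝ) ^ 4 * harmonic #B) := by
  set N := cyclicTriples B X Y Z with hN
  set T := zeroSumPairs (Q * X) (Q * Y) (Q * Z)
  have hcs : (#Q * #N) ^ 2 ≤ #T * #(dilationCollisions Q N) := by
    rw [← card_product]
    exact card_sq_le_card_mul_card_collisions fun w => dilatedDifferences_mem_zeroSumPairs
  have hcollisions : (#(dilationCollisions Q N) : ℝ) ≤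
      #Q * (2048 * (#B : ℝ) ^ 4 * harmonic #B) := by
    refine card_dilationCollisions_le hQ0 (filter_subset _ _) fun p hp hdiag => hX ?_
    simpa [hdiag] using (mem_filter.1 hp).2.1
  refine le_of_mul_le_mul_left ?_ (mod_cast hQ.card_pos : (0 : ℝ) < #Q)
  calc (#Q : ℝ) * (#Q * (#N : ℝ) ^ 2) = ((#Q : ℝ) * #N) ^ 2 := by ring
    _ ≤ (#T : ℝ) * #(dilationCollisions Q N) := mod_cast hcs
    _ ≤ #T * (#Q * (2048 * (#B : ℝ) ^ 4 * harmonic #B)) := by gcongr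
    _ = #Q * (#T * (2048 * (#B : ℝ) ^ 4 * harmonic #B)) := by ring

variable {K : ℝ} {t₁ t₂ t₃ : ℕ}

lemma mul_card_cyclicTriples_pow_six_le_of_le (hQ0 : (0 : F) ∉ Q) (hQ : Q.Nonempty) (hK : 1 ≤ K)
    (hS : ∀ k ≤ 3, (#(Q ^ k * S) : ℝ) ≤ K * #Q) (ht : 0 < t₁) (h₂ : t₁ ≤ t₂) (h₃ : t₁ ≤ t₃) :
    (t₁ * t₂ * t₃ * #(cyclicTriples B (popularDifferences S t₁) (popularDifferences S t₂)
      (popularDifferences S t₃)) : ℝ) ^ 6 ≤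
        2 ^ 96 * K ^ 24 * (#Q : ℝ) ^ 14 * (#B : ℝ) ^ 12 * (harmonic #B : ℝ) ^ 3 := by
  set N := cyclicTriples B (popularDifferences S t₁) (popularDifferences S t₂)
    (popularDifferences S t₃)
  set T := zeroSumPairs (popularDifferences (Q * S) t₁) (popularDifferences (Q * S) t₂)
    (popularDifferences (Q * S) t₃)
  have hharmonic : (0 : ℝ) ≤ harmonic #B := mod_cast sum_nonneg fun _ _ => by positivity
  have htriples : (#Q : ℝ) * (#N : ℝ) ^ 2 ≤ #T * (2048 * (#B : ℝ) ^ 4 * harmonic #B) := by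
    refine (card_mul_card_cyclicTriples_sq_le hQ0 hQ zero_notMem_popularDifferences).trans ?_
    gcongr
    exact zeroSumPairs_subset (mul_popularDifferences_subset hQ0 ht)
      (mul_popularDifferences_subset hQ0 (ht.trans_le h₂))
      (mul_popularDifferences_subset hQ0 (ht.trans_le h₃))
  have hpairs : (t₁ * t₂ * t₃ : ℝ) ^ 6 * (#T : ℝ) ^ 3 ≤ 2 ^ 63 * K ^ 24 * (#Q : ℝ) ^ 17 := by
    refine pow_six_mul_card_zeroSumPairs_pow_three_le hQ0 hQ hK ?_ ?_ ?_ ht h₂ h₃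
    · simpa only [pow_one] using hS 1 (by norm_num)
    · simpa only [pow_succ', pow_zero, mul_one, mul_assoc] using hS 2 (by norm_num)
    · simpa only [pow_succ', pow_zero, mul_one, mul_assoc] using hS 3 le_rfl
  have hq : (0 : ℝ) < #Q := mod_cast hQ.card_pos
  refine le_of_mul_le_mul_left ?_ (pow_pos hq 3)
  calc (#Q : ℝ) ^ 3 * (t₁ * t₂ * t₃ * #N : ℝ) ^ 6
      = (t₁ * t₂ * t₃ : ℝ) ^ 6 * ((#Q : ℝ) * (#N : ℝ) ^ 2) ^ 3 := by ring
    _ ≤ (t₁ * t₂ * t₃ : ℝ) ^ 6 * (#T * (2048 * (#B : ℝ) ^ 4 * harmonic #B)) ^ 3 := by gcongr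
    _ = ((t₁ * t₂ * t₃ : ℝ) ^ 6 * (#T : ℝ) ^ 3) * (2048 * (#B : ℝ) ^ 4 * harmonic #B) ^ 3 := by
        ring
    _ ≤ (2 ^ 63 * K ^ 24 * (#Q : ℝ) ^ 17) * (2048 * (#B : ℝ) ^ 4 * harmonic #B) ^ 3 := by gcongr
    _ = (#Q : ℝ) ^ 3 *
        (2 ^ 96 * K ^ 24 * (#Q : ℝ) ^ 14 * (#B : ℝ) ^ 12 * (harmonic #B : ℝ) ^ 3) := by ring

end CyclicTriples

/-! ### From representation counts to cyclic triples -/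

section GramMatrix

open Matrix

variable {ι κ R : Type*} [Fintype ι] [Fintype κ] [CommRing R]

lemma dotProduct_mul_transpose_mulVec (V : Matrix ι κ R) (x y : ι → R) :
    x ⬝ᵥ (V * Vᵀ) *ᵥ y = (Vᵀ *ᵥ x) ⬝ᵥ (Vᵀ *ᵥ y) := by
  rw [← mulVec_mulVec, dotProduct_mulVec, ← mulVec_transpose]

variable [LinearOrder R] [IsStrictOrderedRing R]

lemma dotProduct_mulVec_one_self_le (N : Matrix κ ι R) :
    (N *ᵥ 1) ⬝ᵥ (N *ᵥ 1) ≤ Fintype.card ι * (Nᵀ * N).trace := by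
  calc (N *ᵥ 1) ⬝ᵥ (N *ᵥ 1) = ∑ k, (∑ i, N k i) ^ 2 := by
        simp only [dotProduct, mulVec, Pi.one_apply, mul_one, sq]
    _ ≤ ∑ k, Fintype.card ι * ∑ i, N k i ^ 2 := by
        gcongr with k
        exact sq_sum_le_card_mul_sum_sq
    _ = Fintype.card ι * (Nᵀ * N).trace := by
        rw [← mul_sum, sum_comm]
        simp only [trace, diag_apply, mul_apply, transpose_apply, sq]

theorem one_dotProduct_mulVec_one_pow_four_le {T : Matrix ι ι R} (V : Matrix ι κ R)
    (hT : T.IsSymm) (hT0 : ∀ i j, 0 ≤ T i j) (hTV : ∀ i j, T i j ≤ (V * Vᵀ) i j) :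
    (1 ⬝ᵥ T *ᵥ 1) ^ 4 ≤
      (Fintype.card ι : R) ^ 3 * (1 ⬝ᵥ (V * Vᵀ) *ᵥ 1) * (T * (V * Vᵀ) * T).trace := by
  set w := T *ᵥ (1 : ι → R) with hw
  have hw0 : 0 ≤ w := fun i => by
    simpa [hw, mulVec, dotProduct] using sum_nonneg fun j _ => hT0 i j
  have sq_sum_le : (1 ⬝ᵥ w) ^ 2 ≤ Fintype.card ι * (w ⬝ᵥ w) := by
    simpa only [dotProduct, Pi.one_apply, one_mul, card_univ, sq] using
      sq_sum_le_card_mul_sum_sq (s := univ) (f := w)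
  have dot_self_le : w ⬝ᵥ w ≤ (Vᵀ *ᵥ w) ⬝ᵥ (Vᵀ *ᵥ 1) := by
    calc w ⬝ᵥ w ≤ w ⬝ᵥ (V * Vᵀ) *ᵥ 1 := by
          refine dotProduct_le_dotProduct_of_nonneg_left (fun i => ?_) hw0
          exact sum_le_sum fun j _ => mul_le_mul_of_nonneg_right (hTV i j) zero_le_one
      _ = (Vᵀ *ᵥ w) ⬝ᵥ (Vᵀ *ᵥ 1) := dotProduct_mul_transpose_mulVec V w 1
  have gram_w : (Vᵀ *ᵥ w) ⬝ᵥ (Vᵀ *ᵥ w) ≤ Fintype.card ι * (T * (V * Vᵀ) * T).trace := by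
    have := dotProduct_mulVec_one_self_le (Vᵀ * T)
    rwa [← mulVec_mulVec, transpose_mul, transpose_transpose, hT.eq, ← Matrix.mul_assoc,
      Matrix.mul_assoc T] at this
  have cauchy_schwarz : ((Vᵀ *ᵥ w) ⬝ᵥ (Vᵀ *ᵥ 1)) ^ 2 ≤
      ((Vᵀ *ᵥ w) ⬝ᵥ (Vᵀ *ᵥ w)) * ((Vᵀ *ᵥ 1) ⬝ᵥ (Vᵀ *ᵥ 1)) := by
    simpa only [dotProduct, sq] using
      sum_mul_sq_le_sq_mul_sq univ (Vᵀ *ᵥ w) (Vᵀ *ᵥ (1 : ι → R))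
  have gram_nonneg : 0 ≤ (Vᵀ *ᵥ (1 : ι → R)) ⬝ᵥ (Vᵀ *ᵥ 1) :=
    sum_nonneg fun k _ => mul_self_nonneg _
  have : 0 ≤ w ⬝ᵥ w := sum_nonneg fun k _ => mul_self_nonneg _
  calc (1 ⬝ᵥ w) ^ 4 = ((1 ⬝ᵥ w) ^ 2) ^ 2 := by ring
    _ ≤ (Fintype.card ι * ((Vᵀ *ᵥ w) ⬝ᵥ (Vᵀ *ᵥ 1))) ^ 2 := by
        gcongr
        exact sq_sum_le.trans (by gcongr)
    _ = (Fintype.card ι : R) ^ 2 * ((Vᵀ *ᵥ w) ⬝ᵥ (Vᵀ *ᵥ 1)) ^ 2 := by ring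
    _ ≤ (Fintype.card ι : R) ^ 2 * (Fintype.card ι * (T * (V * Vᵀ) * T).trace *
          ((Vᵀ *ᵥ 1) ⬝ᵥ (Vᵀ *ᵥ 1))) := by
        gcongr
        exact cauchy_schwarz.trans (by gcongr)
    _ = _ := by rw [dotProduct_mul_transpose_mulVec]; ring

end GramMatrix

section DifferenceMatrix

open Matrix

variable {G : Type*} [AddCommGroup G] [DecidableEq G]

/-- The indicator matrix, indexed by `B`, of the pairs whose difference lies in `X`. -/
def differenceMatrix (B X : Finset G) : Matrix B B ℝ :=
  .of fun b b' => if (b - b' : G) ∈ X then 1 else 0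

lemma trace_differenceMatrix_mul_mul (B X Y Z : Finset G) :
    (differenceMatrix B X * differenceMatrix B Y * differenceMatrix B Z).trace =
      #(cyclicTriples B X Y Z) := by
  simp only [trace, diag_apply, mul_apply, differenceMatrix, of_apply, cyclicTriples, card_filter,
    Nat.cast_sum, sum_product, sum_mul, ← sum_coe_sort B]
  refine sum_congr rfl fun b _ => ?_
  rw [sum_comm]
  refine sum_congr rfl fun b' _ => sum_congr rfl fun b'' _ => ?_
  simp only [← ite_and, mul_ite, mul_one, mul_zero, Nat.cast_ite, Nat.cast_one, Nat.cast_zero]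
  exact if_congr (by tauto) rfl rfl

lemma card_cyclicTriples_rotate (B X Y Z : Finset G) :
    #(cyclicTriples B X Y Z) = #(cyclicTriples B Z X Y) := by
  have := trace_mul_cycle (differenceMatrix B X) (differenceMatrix B Y) (differenceMatrix B Z)
  simpa only [trace_differenceMatrix_mul_mul, Nat.cast_inj] using this

end DifferenceMatrix

theorem mul_card_cyclicTriples_pow_six_le {F : Type*} [Field F] [LinearOrder F]
    [IsStrictOrderedRing F] {B Q S : Finset F} {K : ℝ} (hQ0 : (0 : F) ∉ Q) (hQ : Q.Nonempty)
    (hK : 1 ≤ K) (hS : ∀ k ≤ 3, (#(Q ^ k * S) : ℝ) ≤ K * #Q) {t₁ t₂ t₃ : ℕ}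
    (h₁ : 0 < t₁) (h₂ : 0 < t₂) (h₃ : 0 < t₃) :
    (t₁ * t₂ * t₃ * #(cyclicTriples B (popularDifferences S t₁) (popularDifferences S t₂)
      (popularDifferences S t₃)) : ℝ) ^ 6 ≤
        2 ^ 96 * K ^ 24 * (#Q : ℝ) ^ 14 * (#B : ℝ) ^ 12 * (harmonic #B : ℝ) ^ 3 := by
  have of_le {s₁ s₂ s₃ : ℕ} (hs : 0 < s₁) (h₂ : s₁ ≤ s₂) (h₃ : s₁ ≤ s₃) :=
    mul_card_cyclicTriples_pow_six_le_of_le (B := B) hQ0 hQ hK hS hs h₂ h₃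
  have hmin : (t₁ ≤ t₂ ∧ t₁ ≤ t₃) ∨ (t₂ ≤ t₃ ∧ t₂ ≤ t₁) ∨ (t₃ ≤ t₁ ∧ t₃ ≤ t₂) := by omega
  rcases hmin with ⟨h₁₂, h₁₃⟩ | ⟨h₂₃, h₂₁⟩ | ⟨h₃₁, h₃₂⟩
  · exact of_le h₁ h₁₂ h₁₃
  · convert of_le h₂ h₂₃ h₂₁ using 2
    rw [card_cyclicTriples_rotate, card_cyclicTriples_rotate]
    ring
  · convert of_le h₃ h₃₁ h₃₂ using 2
    rw [card_cyclicTriples_rotate]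
    ring

lemma sum_pow_le_mul_sum_pow {ι : Type*} {s : Finset ι} {f w : ι → ℝ} {c : ℝ} {k : ℕ}
    (hk : k ≠ 0) (hc : 0 ≤ c) (hf : ∀ i ∈ s, 0 ≤ f i) (hw : ∀ i ∈ s, 0 ≤ w i)
    (h : ∀ i ∈ s, f i ^ k ≤ c * w i ^ k) : (∑ i ∈ s, f i) ^ k ≤ c * (∑ i ∈ s, w i) ^ k := by
  obtain ⟨r, hr0, rfl⟩ : ∃ r : ℝ, 0 ≤ r ∧ r ^ k = c :=
    ⟨c ^ (k⁻¹ : ℝ), by positivity, Real.rpow_inv_natCast_pow hc hk⟩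
  rw [← mul_pow, mul_sum]
  gcongr with i hi
  · exact sum_nonneg hf
  · have := h i hi
    rw [← mul_pow] at this
    exact le_of_pow_le_pow_left₀ hk (mul_nonneg hr0 (hw i hi)) this

section RepresentationMatrix

open Matrix

lemma one_dotProduct_mulVec_one_eq_sum {ι R : Type*} [Fintype ι] [NonAssocSemiring R]
    (N : Matrix ι ι R) :
    1 ⬝ᵥ N *ᵥ 1 = ∑ i, ∑ j, N i j := by
  simp only [dotProduct, mulVec, Pi.one_apply, one_mul, mul_one]

variable {G : Type*} [AddCommGroup G] [DecidableEq G] {A B : Finset G}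

/-- The number of representations of `b - b'` as a difference of two elements of `A`, as a matrix
indexed by `B` whose diagonal is set to zero. -/
def representationMatrix (A B : Finset G) : Matrix B B ℝ :=
  .of fun b b' => if b = b' then 0 else (differenceCount A (b - b') : ℝ)

/-- The indicator matrix of the pairs `b ∈ B`, `z ∈ A - B` with `z + b ∈ A`. -/
def translateMatrix (A B : Finset G) : Matrix B ↥(A - B) ℝ :=
  .of fun b z => if (z + b : G) ∈ A then 1 else 0

lemma representationMatrix_nonneg (A B : Finset G) (b b' : B) :
    0 ≤ representationMatrix A B b b' := by
  simp only [representationMatrix, of_apply]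
  positivity

lemma representationMatrix_isSymm (A B : Finset G) : (representationMatrix A B).IsSymm := by
  ext b b'
  simp only [representationMatrix, transpose_apply, of_apply, differenceCount, eq_comm (a := b)]
  rw [← neg_sub (b : G), addConvolution_neg, neg_neg]

lemma representationMatrix_eq_sum (A B : Finset G) :
    representationMatrix A B = ∑ t ∈ Icc 1 #A, differenceMatrix B (popularDifferences A t) := by
  ext b b'
  simp only [representationMatrix, differenceMatrix, Matrix.sum_apply, of_apply]
  have hlayer : ∀ t ∈ Icc 1 #A, ((b - b' : G) ∈ popularDifferences A t ↔
      b ≠ b' ∧ t ≤ differenceCount A (b - b')) := fun t ht => by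
    rw [mem_popularDifferences (mem_Icc.1 ht).1, sub_ne_zero, Ne, Subtype.coe_inj]
  have hle : differenceCount A (b - b' : G) ≤ #A := addConvolution_le_card_left
  rw [sum_boole, filter_congr hlayer]
  split_ifs with hbb'
  · simp [hbb']
  · have : {t ∈ Icc 1 #A | b ≠ b' ∧ t ≤ differenceCount A (b - b' : G)} =
        Icc 1 (differenceCount A (b - b' : G)) := by
      ext t
      simp only [mem_filter, mem_Icc]
      grind
    rw [this, Nat.card_Icc, Nat.add_sub_cancel]

lemma translateMatrix_mul_transpose_apply (b b' : B) :
    (translateMatrix A B * (translateMatrix A B)ᵀ) b b' = differenceCount A (b - b' : G) := by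
  simp only [mul_apply, transpose_apply, translateMatrix, of_apply, ← ite_and, mul_ite, mul_one,
    mul_zero]
  rw [sum_coe_sort (A - B) fun z => if z + (b' : G) ∈ A ∧ z + (b : G) ∈ A then (1 : ℝ) else 0,
    sum_boole, differenceCount, ← card_sub_eq, Nat.cast_inj]
  convert card_vadd_inter_vadd A A (-b : G) (-b') using 2
  · ext z
    simp only [mem_filter, mem_inter, mem_neg_vadd_finset_iff, vadd_eq_add, add_comm z]
    refine ⟨fun h => h.2.symm, fun h => ⟨?_, h.symm⟩⟩
    simpa using sub_mem_sub h.1 b.2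
  · rw [neg_neg, ← sub_eq_add_neg, card_sub_eq]

lemma translateMatrix_mul_transpose (A B : Finset G) :
    translateMatrix A B * (translateMatrix A B)ᵀ = representationMatrix A B + (#A : ℝ) • 1 := by
  ext b b'
  rw [translateMatrix_mul_transpose_apply]
  rcases eq_or_ne b b' with rfl | hne
  · simp [representationMatrix, differenceCount, ← card_inter_vadd]
  · simp [representationMatrix, hne]

lemma addEnergy_eq_sum_differenceCount (A B : Finset G) :
    A.addEnergy B = ∑ b ∈ B, ∑ b' ∈ B, differenceCount A (b - b') := by
  rw [addEnergy, card_filter, sum_product_right, sum_product_right]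
  refine sum_congr rfl fun b _ => sum_congr rfl fun b' _ => ?_
  rw [← card_filter, differenceCount, ← card_sub_eq]
  exact congrArg card (filter_congr fun p _ => by grind)

lemma one_dotProduct_translateMatrix_mul_transpose (A B : Finset G) :
    1 ⬝ᵥ (translateMatrix A B * (translateMatrix A B)ᵀ) *ᵥ 1 = (A.addEnergy B : ℝ) := by
  simp only [one_dotProduct_mulVec_one_eq_sum, translateMatrix_mul_transpose_apply,
    addEnergy_eq_sum_differenceCount, Nat.cast_sum, ← sum_coe_sort B]

lemma addEnergy_eq_one_dotProduct_add (A B : Finset G) :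
    (A.addEnergy B : ℝ) = 1 ⬝ᵥ representationMatrix A B *ᵥ 1 + #A * #B := by
  rw [← one_dotProduct_translateMatrix_mul_transpose, translateMatrix_mul_transpose, add_mulVec,
    dotProduct_add, smul_mulVec, one_mulVec, dotProduct_smul, one_dotProduct_one, smul_eq_mul,
    Fintype.card_coe]

theorem one_dotProduct_representationMatrix_pow_four_le (A B : Finset G) :
    (1 ⬝ᵥ representationMatrix A B *ᵥ 1) ^ 4 ≤ (#B : ℝ) ^ 3 * A.addEnergy B *
      ((representationMatrix A B * representationMatrix A B * representationMatrix A B).trace +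
        #A * (representationMatrix A B * representationMatrix A B).trace) := by
  have hle : ∀ b b', representationMatrix A B b b' ≤
      (translateMatrix A B * (translateMatrix A B)ᵀ) b b' := fun b b' => by
    rw [translateMatrix_mul_transpose_apply, representationMatrix, of_apply]
    split_ifs <;> simp
  have h := one_dotProduct_mulVec_one_pow_four_le _ (representationMatrix_isSymm A B)
    (representationMatrix_nonneg A B) hle
  rwa [one_dotProduct_translateMatrix_mul_transpose, Fintype.card_coe,
    translateMatrix_mul_transpose, mul_add, add_mul, trace_add, mul_smul_comm, mul_one,
    smul_mul_assoc, trace_smul, smul_eq_mul] at h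

lemma trace_representationMatrix_pow_three (A B : Finset G) :
    (representationMatrix A B * representationMatrix A B * representationMatrix A B).trace =
      ∑ t ∈ Icc 1 #A ×ˢ Icc 1 #A ×ˢ Icc 1 #A, (#(cyclicTriples B (popularDifferences A t.1)
        (popularDifferences A t.2.1) (popularDifferences A t.2.2)) : ℝ) := by
  simp only [representationMatrix_eq_sum, sum_mul_sum]
  simp only [sum_mul, trace_sum, sum_product, trace_differenceMatrix_mul_mul]
  refine sum_congr rfl fun t₁ _ => ?_
  rw [sum_comm]

lemma addEnergy_pow_three_le_of_lt (hE : 2 * (#A * #B) < A.addEnergy B) :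
    (A.addEnergy B : ℝ) ^ 3 ≤ 16 * (#B : ℝ) ^ 3 *
      ((representationMatrix A B * representationMatrix A B * representationMatrix A B).trace +
        #A * (representationMatrix A B * representationMatrix A B).trace) := by
  have hpos : (0 : ℝ) < A.addEnergy B := mod_cast (Nat.zero_le _).trans_lt hE
  have hhalf : (A.addEnergy B : ℝ) / 2 ≤ 1 ⬝ᵥ representationMatrix A B *ᵥ 1 := by
    have : (2 * (#A * #B) : ℝ) < A.addEnergy B := mod_cast hE
    linarith [addEnergy_eq_one_dotProduct_add A B]
  refine le_of_mul_le_mul_left ?_ hpos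
  calc (A.addEnergy B : ℝ) * (A.addEnergy B : ℝ) ^ 3
      = 16 * ((A.addEnergy B : ℝ) / 2) ^ 4 := by ring
    _ ≤ 16 * (1 ⬝ᵥ representationMatrix A B *ᵥ 1) ^ 4 := by gcongr
    _ ≤ 16 * ((#B : ℝ) ^ 3 * A.addEnergy B *
          ((representationMatrix A B * representationMatrix A B * representationMatrix A B).trace +
            #A * (representationMatrix A B * representationMatrix A B).trace)) := by
        gcongr
        exact one_dotProduct_representationMatrix_pow_four_le A B
    _ = _ := by ring

end RepresentationMatrix

lemma sum_inv_mul_inv_mul_inv (n : ℕ) :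
    ∑ t ∈ Icc 1 n ×ˢ Icc 1 n ×ˢ Icc 1 n, ((t.1 : ℝ)⁻¹ * ((t.2.1 : ℝ)⁻¹ * (t.2.2 : ℝ)⁻¹)) =
      (harmonic n : ℝ) ^ 3 := by
  simp only [sum_product, ← mul_sum, ← sum_mul, harmonic_eq_sum_Icc, Rat.cast_sum, Rat.cast_inv,
    Rat.cast_natCast, pow_three]

section EnergyBounds

open Matrix

variable {F : Type*} [Field F] [LinearOrder F] [IsStrictOrderedRing F] {A B Q : Finset F} {K : ℝ}

theorem trace_representationMatrix_pow_two_le (hQ0 : (0 : F) ∉ Q) (hQ : Q.Nonempty) (hK : 1 ≤ K)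
    (hQA : (#(Q * A) : ℝ) ≤ K * #Q) (hQQA : (#(Q * (Q * A)) : ℝ) ≤ K * #Q) :
    (representationMatrix A B * representationMatrix A B).trace ^ 3 ≤
      512 * K ^ 4 * (#Q : ℝ) ^ 2 * (1 ⬝ᵥ representationMatrix A B *ᵥ 1) ^ 3 := by
  have hnonneg := representationMatrix_nonneg A B
  rw [one_dotProduct_mulVec_one_eq_sum, ← Fintype.sum_prod_type' (representationMatrix A B)]
  simp only [trace, diag_apply, mul_apply, ← Fintype.sum_prod_type']
  refine sum_pow_le_mul_sum_pow three_ne_zero (by positivity)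
    (fun p _ => mul_nonneg (hnonneg _ _) (hnonneg _ _)) (fun p _ => hnonneg _ _) fun p _ => ?_
  rw [(representationMatrix_isSymm A B).apply p.1 p.2, mul_pow]
  refine mul_le_mul_of_nonneg_right ?_ (pow_nonneg (hnonneg _ _) 3)
  rw [representationMatrix, of_apply]
  split_ifs with hp
  · rw [zero_pow three_ne_zero]; positivity
  · exact differenceCount_pow_three_le hQ0 hQ hK hQA hQQA (sub_ne_zero.2 (Subtype.coe_ne_coe.2 hp))

theorem trace_representationMatrix_pow_three_le (hQ0 : (0 : F) ∉ Q) (hQ : Q.Nonempty)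
    (hK : 1 ≤ K) (hA : ∀ k ≤ 3, (#(Q ^ k * A) : ℝ) ≤ K * #Q) :
    (representationMatrix A B * representationMatrix A B * representationMatrix A B).trace ^ 6 ≤
      2 ^ 96 * K ^ 24 * (#Q : ℝ) ^ 14 * (#B : ℝ) ^ 12 * (harmonic #B : ℝ) ^ 3 *
        (harmonic #A : ℝ) ^ 18 := by
  have hharmonic : (0 : ℝ) ≤ harmonic #B := mod_cast sum_nonneg fun _ _ => by positivity
  rw [trace_representationMatrix_pow_three, show 18 = 3 * 6 by rfl, pow_mul _ 3 6,
    ← sum_inv_mul_inv_mul_inv #A]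
  refine sum_pow_le_mul_sum_pow (by norm_num) (by positivity) (fun t _ => by positivity)
    (fun t _ => by positivity) fun t ht => ?_
  simp only [mem_product, mem_Icc] at ht
  obtain ⟨⟨h₁, -⟩, ⟨h₂, -⟩, ⟨h₃, -⟩⟩ := ht
  have h := mul_card_cyclicTriples_pow_six_le (B := B) hQ0 hQ hK hA h₁ h₂ h₃
  rw [← mul_inv, ← mul_inv, inv_pow, ← div_eq_mul_inv, le_div_iff₀ (by positivity), ← mul_pow]
  exact h.trans_eq' (by ring)

lemma addEnergy_pow_eighteen_le_of_pow_three_le (hQ0 : (0 : F) ∉ Q) (hQ : Q.Nonempty)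
    (hK : 1 ≤ K) (hA : ∀ k ≤ 3, (#(Q ^ k * A) : ℝ) ≤ K * #Q)
    (h : (A.addEnergy B : ℝ) ^ 3 ≤ 32 * (#B : ℝ) ^ 3 *
      (representationMatrix A B * representationMatrix A B * representationMatrix A B).trace) :
    (A.addEnergy B : ℝ) ^ 18 ≤ 2 ^ 126 * K ^ 24 * (#B : ℝ) ^ 30 * (#Q : ℝ) ^ 14 *
      (harmonic #B : ℝ) ^ 3 * (harmonic #A : ℝ) ^ 18 := by
  calc (A.addEnergy B : ℝ) ^ 18 = ((A.addEnergy B : ℝ) ^ 3) ^ 6 := by ring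
    _ ≤ (32 * (#B : ℝ) ^ 3 * (representationMatrix A B * representationMatrix A B *
          representationMatrix A B).trace) ^ 6 := by gcongr
    _ = 2 ^ 30 * (#B : ℝ) ^ 18 * (representationMatrix A B * representationMatrix A B *
          representationMatrix A B).trace ^ 6 := by ring
    _ ≤ 2 ^ 30 * (#B : ℝ) ^ 18 * (2 ^ 96 * K ^ 24 * (#Q : ℝ) ^ 14 * (#B : ℝ) ^ 12 *
          (harmonic #B : ℝ) ^ 3 * (harmonic #A : ℝ) ^ 18) := by
        gcongr
        exact trace_representationMatrix_pow_three_le hQ0 hQ hK hA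
    _ = _ := by ring

lemma addEnergy_pow_six_le_of_pow_three_le (hQ0 : (0 : F) ∉ Q) (hQ : Q.Nonempty)
    (hK : 1 ≤ K) (hQA : (#(Q * A) : ℝ) ≤ K * #Q) (hQQA : (#(Q * (Q * A)) : ℝ) ≤ K * #Q)
    (h : (A.addEnergy B : ℝ) ^ 3 ≤ 32 * (#B : ℝ) ^ 3 *
      (#A * (representationMatrix A B * representationMatrix A B).trace)) :
    (A.addEnergy B : ℝ) ^ 6 ≤ 2 ^ 24 * K ^ 4 * (#B : ℝ) ^ 9 * (#A : ℝ) ^ 3 * (#Q : ℝ) ^ 2 := by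
  rcases (A.addEnergy B).eq_zero_or_pos with hzero | hpos
  · rw [hzero, Nat.cast_zero, zero_pow (by norm_num)]
    positivity
  have hsum : 1 ⬝ᵥ representationMatrix A B *ᵥ 1 ≤ (A.addEnergy B : ℝ) := by
    rw [addEnergy_eq_one_dotProduct_add]
    exact le_add_of_nonneg_right (by positivity)
  have hsum0 : 0 ≤ 1 ⬝ᵥ representationMatrix A B *ᵥ 1 := by
    rw [one_dotProduct_mulVec_one_eq_sum]
    exact sum_nonneg fun _ _ => sum_nonneg fun _ _ => representationMatrix_nonneg ..
  refine le_of_mul_le_mul_left ?_ (pow_pos (Nat.cast_pos (α := ℝ).2 hpos) 3)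
  calc (A.addEnergy B : ℝ) ^ 3 * (A.addEnergy B : ℝ) ^ 6 = ((A.addEnergy B : ℝ) ^ 3) ^ 3 := by ring
    _ ≤ (32 * (#B : ℝ) ^ 3 *
          (#A * (representationMatrix A B * representationMatrix A B).trace)) ^ 3 := by gcongr
    _ = 2 ^ 15 * (#B : ℝ) ^ 9 * (#A : ℝ) ^ 3 *
          (representationMatrix A B * representationMatrix A B).trace ^ 3 := by ring
    _ ≤ 2 ^ 15 * (#B : ℝ) ^ 9 * (#A : ℝ) ^ 3 *
          (512 * K ^ 4 * (#Q : ℝ) ^ 2 * (A.addEnergy B : ℝ) ^ 3) := by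
        gcongr
        exact (trace_representationMatrix_pow_two_le hQ0 hQ hK hQA hQQA).trans (by gcongr)
    _ = _ := by ring

theorem addEnergy_trichotomy (hQ0 : (0 : F) ∉ Q) (hQ : Q.Nonempty) (hK : 1 ≤ K)
    (hA : ∀ k ≤ 3, (#(Q ^ k * A) : ℝ) ≤ K * #Q) :
    A.addEnergy B ≤ 2 * (#A * #B) ∨
    (A.addEnergy B : ℝ) ^ 18 ≤ 2 ^ 126 * K ^ 24 * (#B : ℝ) ^ 30 * (#Q : ℝ) ^ 14 *
      (harmonic #B : ℝ) ^ 3 * (harmonic #A : ℝ) ^ 18 ∨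
    (A.addEnergy B : ℝ) ^ 6 ≤ 2 ^ 24 * K ^ 4 * (#B : ℝ) ^ 9 * (#A : ℝ) ^ 3 * (#Q : ℝ) ^ 2 := by
  refine (le_or_gt _ _).imp_right fun hE => ?_
  have hcube := addEnergy_pow_three_le_of_lt hE
  rcases le_total (#A * (representationMatrix A B * representationMatrix A B).trace)
    (representationMatrix A B * representationMatrix A B * representationMatrix A B).trace
    with htrace | htrace
  · refine .inl (addEnergy_pow_eighteen_le_of_pow_three_le hQ0 hQ hK hA (hcube.trans ?_))
    linarith [mul_le_mul_of_nonneg_left htrace (by positivity : 0 ≤ 16 * (#B : ℝ) ^ 3)]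
  · refine .inr (addEnergy_pow_six_le_of_pow_three_le hQ0 hQ hK ?_ ?_ (hcube.trans ?_))
    · simpa only [pow_one] using hA 1 (by norm_num)
    · simpa only [sq, mul_assoc] using hA 2 (by norm_num)
    · linarith [mul_le_mul_of_nonneg_left htrace (by positivity : 0 ≤ 16 * (#B : ℝ) ^ 3)]

end EnergyBounds

lemma harmonic_pow_le {j : ℕ} (hj : j ≠ 0) (k : ℕ) :
    (harmonic k : ℝ) ^ j ≤ ((j : ℝ) + 1) ^ j * k := by
  rcases k.eq_zero_or_pos with rfl | hk
  · simp [hj]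
  have hk' : (0 : ℝ) < k := Nat.cast_pos.2 hk
  have hj' : (1 : ℝ) ≤ j := Nat.one_le_cast.2 (Nat.one_le_iff_ne_zero.2 hj)
  have hlog : 0 ≤ Real.log k := Real.log_natCast_nonneg k
  have hharmonic : (harmonic k : ℝ) ≤ (j + 1) * Real.exp (Real.log k / j) := by
    calc (harmonic k : ℝ) ≤ 1 + Real.log k := harmonic_le_one_add_log k
      _ ≤ (j + 1) * (Real.log k / j + 1) := by
          field_simp
          nlinarith [hj', hlog]
      _ ≤ (j + 1) * Real.exp (Real.log k / j) := by
          gcongr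
          exact Real.add_one_le_exp _
  calc (harmonic k : ℝ) ^ j ≤ ((j + 1) * Real.exp (Real.log k / j)) ^ j := by
        gcongr
        exact_mod_cast sum_nonneg fun i _ => by positivity
    _ = ((j : ℝ) + 1) ^ j * k := by
        rw [mul_pow, ← Real.exp_nat_mul, mul_div_cancel₀ _ (by positivity), Real.exp_log hk']

lemma harmonic_pow_six_mul_harmonic_pow_thirty_six_le {m n : ℕ} (h : m ≤ n ^ 2) :
    (harmonic m : ℝ) ^ 6 * (harmonic n : ℝ) ^ 36 ≤ 49 ^ 42 * n := by
  refine le_of_pow_le_pow_left₀ (n := 8) (by norm_num) (by positivity) ?_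
  calc ((harmonic m : ℝ) ^ 6 * (harmonic n : ℝ) ^ 36) ^ 8
      = (harmonic m : ℝ) ^ 48 * ((harmonic n : ℝ) ^ 48) ^ 6 := by ring
    _ ≤ (49 ^ 48 * (m : ℝ)) * (49 ^ 48 * (n : ℝ)) ^ 6 := by
        gcongr ?_ * ?_ ^ 6
        · exact (harmonic_pow_le (by norm_num) m).trans (by norm_num)
        · exact (harmonic_pow_le (by norm_num) n).trans (by norm_num)
    _ ≤ (49 ^ 48 * (n : ℝ) ^ 2) * (49 ^ 48 * n) ^ 6 := by
        gcongr
        exact_mod_cast h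
    _ = (49 ^ 42 * n) ^ 8 := by ring

section SmallProductSet

variable {G₀ : Type*} [CommGroupWithZero G₀] [DecidableEq G₀] {A : Finset G₀}

lemma card_pow_le_of_zero_notMem (hA0 : (0 : G₀) ∉ A) (hA : A.Nonempty) (k : ℕ) :
    (#(A ^ k) : ℝ) ≤ ((#(A * A) : ℝ) / #A) ^ k * #A := by
  classical
  obtain ⟨U, rfl⟩ : ∃ U : Finset G₀ˣ, U.image (Units.coeHom G₀) = A :=
    CanLift.prf A fun a ha => isUnit_iff_ne_zero.2 (ne_of_mem_of_not_mem ha hA0)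
  have hinj : Function.Injective (Units.coeHom G₀) := Units.val_injective
  rw [← image_mul, ← image_pow, card_image_of_injective _ hinj, card_image_of_injective _ hinj,
    card_image_of_injective _ hinj]
  simpa only [NNRat.cast_natCast, NNRat.cast_mul, NNRat.cast_pow, NNRat.cast_div] using
    (NNRat.cast_le (K := ℝ)).2
      (pluennecke_ruzsa_inequality_pow_mul (image_nonempty.1 hA) U k)

lemma card_pow_mul_le_card_pow_erase_add_one (k : ℕ) :
    #((A.erase 0) ^ k * A) ≤ #((A.erase 0) ^ (k + 1)) + 1 := by
  refine (card_le_card fun x hx => ?_).trans (card_insert_le 0 _)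
  obtain ⟨y, hy, a, ha, rfl⟩ := mem_mul.1 hx
  rcases eq_or_ne a 0 with rfl | ha0
  · simp
  · rw [pow_succ]
    exact mem_insert_of_mem (mul_mem_mul hy (mem_erase.2 ⟨ha0, ha⟩))

lemma card_pow_erase_zero_mul_le {M : ℝ} (hM : 1 ≤ M) (hA : A.Nontrivial)
    (hAA : (#(A * A) : ℝ) ≤ M * #A) {k : ℕ} (hk : k ≤ 3) :
    (#((A.erase 0) ^ k * A) : ℝ) ≤ 32 * M ^ 4 * #(A.erase 0) := by
  have hne : (A.erase 0).Nonempty := hA.erase_nonempty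
  have hpos : (1 : ℝ) ≤ #(A.erase 0) := Nat.one_le_cast.2 hne.card_pos
  have hcard : (#A : ℝ) ≤ 2 * #(A.erase 0) := by
    have : (#A : ℝ) ≤ #(A.erase 0) + 1 :=
      mod_cast Nat.sub_le_iff_le_add.1 pred_card_le_card_erase
    linarith
  have hdoubling : (#(A.erase 0 * A.erase 0) : ℝ) / #(A.erase 0) ≤ 2 * M := by
    rw [div_le_iff₀ (by linarith)]
    calc (#(A.erase 0 * A.erase 0) : ℝ) ≤ #(A * A) := by gcongr <;> exact erase_subset 0 A
      _ ≤ M * (2 * #(A.erase 0)) := hAA.trans (by gcongr)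
      _ = 2 * M * #(A.erase 0) := by ring
  calc (#((A.erase 0) ^ k * A) : ℝ) ≤ #((A.erase 0) ^ (k + 1)) + 1 :=
        mod_cast card_pow_mul_le_card_pow_erase_add_one k
    _ ≤ (2 * M) ^ (k + 1) * #(A.erase 0) + 1 := by
        gcongr
        exact (card_pow_le_of_zero_notMem (notMem_erase 0 A) hne (k + 1)).trans (by gcongr)
    _ ≤ (2 * M) ^ 4 * #(A.erase 0) + (2 * M) ^ 4 * #(A.erase 0) := by
        have hM' : 1 ≤ 2 * M := by linarith
        gcongr
        · omega
        · exact one_le_mul_of_one_le_of_one_le (one_le_pow₀ hM') hpos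
    _ = 32 * M ^ 4 * #(A.erase 0) := by ring

end SmallProductSet

lemma pow_thirty_six_le_of_le_two_mul {x m n : ℝ} (hx : 0 ≤ x) (hn : 0 ≤ n) (hm : 1 ≤ m)
    (hnm : n ≤ m ^ 2) (h : x ≤ 2 * (n * m)) : x ^ 36 ≤ 2 ^ 36 * (m ^ 60 * n ^ 29) := by
  have hpow : n ^ 7 ≤ m ^ 24 :=
    calc n ^ 7 ≤ (m ^ 2) ^ 7 := by gcongr
      _ = m ^ 14 := by ring
      _ ≤ m ^ 24 := pow_le_pow_right₀ hm (by norm_num)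
  calc x ^ 36 ≤ (2 * (n * m)) ^ 36 := by gcongr
    _ = 2 ^ 36 * (n ^ 7 * (m ^ 36 * n ^ 29)) := by ring
    _ ≤ 2 ^ 36 * (m ^ 24 * (m ^ 36 * n ^ 29)) := by gcongr
    _ = 2 ^ 36 * (m ^ 60 * n ^ 29) := by ring

lemma pow_thirty_six_le_of_pow_eighteen_le {x k : ℝ} {m n q : ℕ} (hqn : q ≤ n) (hmn : m ≤ n ^ 2)
    (h : x ^ 18 ≤ 2 ^ 126 * k ^ 24 * (m : ℝ) ^ 30 * (q : ℝ) ^ 14 *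
      (harmonic m : ℝ) ^ 3 * (harmonic n : ℝ) ^ 18) :
    x ^ 36 ≤ 2 ^ 252 * 49 ^ 42 * k ^ 48 * ((m : ℝ) ^ 60 * (n : ℝ) ^ 29) := by
  calc x ^ 36 = (x ^ 18) ^ 2 := by ring
    _ ≤ (2 ^ 126 * k ^ 24 * (m : ℝ) ^ 30 * (q : ℝ) ^ 14 *
          (harmonic m : ℝ) ^ 3 * (harmonic n : ℝ) ^ 18) ^ 2 := by gcongr
    _ = 2 ^ 252 * k ^ 48 * (m : ℝ) ^ 60 * (q : ℝ) ^ 28 *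
          ((harmonic m : ℝ) ^ 6 * (harmonic n : ℝ) ^ 36) := by ring
    _ ≤ 2 ^ 252 * k ^ 48 * (m : ℝ) ^ 60 * (n : ℝ) ^ 28 * (49 ^ 42 * n) := by
        have hharmonic := harmonic_pow_six_mul_harmonic_pow_thirty_six_le hmn
        -- `gcongr` would try to match `h` against the side goals.
        clear h
        gcongr
    _ = 2 ^ 252 * 49 ^ 42 * k ^ 48 * ((m : ℝ) ^ 60 * (n : ℝ) ^ 29) := by ring

lemma pow_thirty_six_le_of_pow_six_le {x m n q k : ℝ} (hq : 0 ≤ q) (hqn : q ≤ n)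
    (hm : 1 ≤ m) (hnm : n ≤ m ^ 2)
    (h : x ^ 6 ≤ 2 ^ 24 * k ^ 4 * m ^ 9 * n ^ 3 * q ^ 2) :
    x ^ 36 ≤ 2 ^ 144 * k ^ 24 * (m ^ 60 * n ^ 29) := by
  have hn : 0 ≤ n := hq.trans hqn
  have hpow : n ≤ m ^ 6 := hnm.trans (pow_le_pow_right₀ hm (by norm_num))
  calc x ^ 36 = (x ^ 6) ^ 6 := by ring
    _ ≤ (2 ^ 24 * k ^ 4 * m ^ 9 * n ^ 3 * n ^ 2) ^ 6 := by
        gcongr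
        exact h.trans (by gcongr)
    _ = 2 ^ 144 * k ^ 24 * (m ^ 54 * n * n ^ 29) := by ring
    _ ≤ 2 ^ 144 * k ^ 24 * (m ^ 54 * m ^ 6 * n ^ 29) := by gcongr
    _ = 2 ^ 144 * k ^ 24 * (m ^ 60 * n ^ 29) := by ring

section TrivialBound

variable {G : Type*} [Add G] [IsLeftCancelAdd G] [DecidableEq G] {A B : Finset G}

lemma addEnergy_le_card_sq_mul_card (A B : Finset G) : A.addEnergy B ≤ #A ^ 2 * #B := by
  rw [addEnergy, sq, ← card_product, ← card_product]
  refine card_le_card_of_injOn (fun x => (x.1, x.2.1)) (fun x hx => ?_) (fun x hx y hy h => ?_)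
  · simp only [coe_filter, mem_product, Set.mem_ofPred_eq] at hx
    exact mem_product.2 ⟨mem_product.2 hx.1.1, hx.1.2.1⟩
  · have hx' := (mem_filter.1 hx).2
    have hy' := (mem_filter.1 hy).2
    obtain ⟨⟨a₁, a₂⟩, b₁, b₂⟩ := x
    obtain ⟨⟨a₁', a₂'⟩, b₁', b₂'⟩ := y
    simp only [Prod.mk.injEq] at h
    obtain ⟨⟨rfl, rfl⟩, rfl⟩ := h
    obtain rfl : b₂ = b₂' := add_left_cancel (hx'.symm.trans hy')
    rfl

lemma addEnergy_pow_thirty_six_le_of_sq_le (h : #A ^ 2 ≤ #B) :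
    A.addEnergy B ^ 36 ≤ #B ^ 60 * #A ^ 29 := by
  rcases A.eq_empty_or_nonempty with rfl | hA
  · simp
  have hcard : #A ^ 43 ≤ #B ^ 24 :=
    calc #A ^ 43 ≤ (#A ^ 2) ^ 24 := by
          rw [← pow_mul]
          exact Nat.pow_le_pow_right hA.card_pos (by norm_num)
      _ ≤ #B ^ 24 := by gcongr
  calc A.addEnergy B ^ 36 ≤ (#A ^ 2 * #B) ^ 36 := by
        gcongr
        exact addEnergy_le_card_sq_mul_card A B
    _ = #A ^ 43 * (#B ^ 36 * #A ^ 29) := by ring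
    _ ≤ #B ^ 24 * (#B ^ 36 * #A ^ 29) := by gcongr
    _ = #B ^ 60 * #A ^ 29 := by ring

end TrivialBound

theorem addEnergy_pow_thirty_six_le {F : Type*} [Field F] [LinearOrder F]
    [IsStrictOrderedRing F] {A B Q : Finset F} {K : ℝ} (hQ0 : (0 : F) ∉ Q) (hQ : Q.Nonempty)
    (hQA : #Q ≤ #A) (hK : 1 ≤ K) (hA : ∀ k ≤ 3, (#(Q ^ k * A) : ℝ) ≤ K * #Q)
    (hAB : #A ≤ #B ^ 2) (hBA : #B ≤ #A ^ 2) :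
    (A.addEnergy B : ℝ) ^ 36 ≤ 16384 ^ 36 * K ^ 48 * ((#B : ℝ) ^ 60 * (#A : ℝ) ^ 29) := by
  have hB : (1 : ℝ) ≤ #B := by
    rw [Nat.one_le_cast, Nat.one_le_iff_ne_zero]
    intro h
    rw [h] at hAB
    exact absurd (hQ.card_pos.trans_le (hQA.trans hAB)) (by norm_num)
  have hconst {a : ℝ} {i : ℕ} (ha : a ≤ 16384 ^ 36) (hi : i ≤ 48) :
      a * K ^ i * ((#B : ℝ) ^ 60 * (#A : ℝ) ^ 29) ≤
        16384 ^ 36 * K ^ 48 * ((#B : ℝ) ^ 60 * (#A : ℝ) ^ 29) := by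
    gcongr
  rcases addEnergy_trichotomy (B := B) hQ0 hQ hK hA with hE | hE | hE
  · refine le_trans ?_ (hconst (a := 2 ^ 36) (by norm_num) (Nat.zero_le 48))
    rw [pow_zero, mul_one]
    exact pow_thirty_six_le_of_le_two_mul (by positivity) (by positivity) hB (mod_cast hAB)
      (mod_cast hE)
  · refine le_trans ?_ (hconst (a := 2 ^ 252 * 49 ^ 42) (by norm_num) le_rfl)
    exact pow_thirty_six_le_of_pow_eighteen_le hQA hBA hE
  · refine le_trans ?_ (hconst (a := 2 ^ 144) (by norm_num) (by norm_num : 24 ≤ 48))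
    exact pow_thirty_six_le_of_pow_six_le (by positivity) (mod_cast hQA) hB (mod_cast hAB) hE

lemma le_mul_rpow_mul_rpow_of_pow_le {x c b a : ℝ} (hc : 0 ≤ c) (hb : 0 ≤ b) (ha : 0 ≤ a)
    (h : x ^ 36 ≤ c ^ 36 * (b ^ 60 * a ^ 29)) :
    x ≤ c * b ^ ((5 : ℝ) / 3) * a ^ ((5 : ℝ) / 6 - 1 / 36) := by
  refine le_of_pow_le_pow_left₀ (n := 36) (by norm_num) (by positivity) (h.trans_eq ?_)
  rw [mul_pow, mul_pow, ← Real.rpow_mul_natCast hb, ← Real.rpow_mul_natCast ha, mul_assoc,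
    ← Real.rpow_natCast b, ← Real.rpow_natCast a]
  norm_num

theorem asymmetric_additive_energy_general {F : Type*} [Field F] [LinearOrder F]
    [IsStrictOrderedRing F] {M : ℝ} (hM : 1 ≤ M) {A B : Finset F}
    (hAA : (#(A * A) : ℝ) ≤ M * #A) (hAB : #A ≤ #B ^ 2) :
    (A.addEnergy B : ℝ) ≤
      2 ^ 21 * M ^ 6 * (#B : ℝ) ^ ((5 : ℝ) / 3) * (#A : ℝ) ^ ((5 : ℝ) / 6 - 1 / 36) := by
  refine le_mul_rpow_mul_rpow_of_pow_le (by positivity) (by positivity) (by positivity) ?_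
  rcases le_or_gt (#A ^ 2) #B with hBA | hBA
  · calc (A.addEnergy B : ℝ) ^ 36 ≤ 1 * ((#B : ℝ) ^ 60 * (#A : ℝ) ^ 29) := by
          rw [one_mul]
          exact_mod_cast addEnergy_pow_thirty_six_le_of_sq_le hBA
      _ ≤ (2 ^ 21 * M ^ 6) ^ 36 * ((#B : ℝ) ^ 60 * (#A : ℝ) ^ 29) := by
          gcongr
          exact one_le_pow₀ (one_le_mul_of_one_le_of_one_le (by norm_num) (one_le_pow₀ hM))
  · have hA : A.Nontrivial := by
      rw [← one_lt_card_iff_nontrivial]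
      by_contra! h
      interval_cases #A
      · omega
      · have hm : #B = 0 := by omega
        simp [hm] at hAB
    calc (A.addEnergy B : ℝ) ^ 36
        ≤ 16384 ^ 36 * (32 * M ^ 4) ^ 48 * ((#B : ℝ) ^ 60 * (#A : ℝ) ^ 29) :=
          addEnergy_pow_thirty_six_le (notMem_erase 0 A) hA.erase_nonempty card_erase_le
            (one_le_mul_of_one_le_of_one_le (by norm_num) (one_le_pow₀ hM))
            (fun _ => card_pow_erase_zero_mul_le hM hA hAA) hAB hBA.le
      _ = 16384 ^ 36 * 32 ^ 48 * M ^ 192 * ((#B : ℝ) ^ 60 * (#A : ℝ) ^ 29) := by ring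
      _ ≤ (2 ^ 21) ^ 36 * M ^ 216 * ((#B : ℝ) ^ 60 * (#A : ℝ) ^ 29) := by
          gcongr ?_ * ?_ * _
          · norm_num
          · exact pow_le_pow_right₀ hM (by norm_num)
      _ = (2 ^ 21 * M ^ 6) ^ 36 * ((#B : ℝ) ^ 60 * (#A : ℝ) ^ 29) := by ring

end

lemma addE_eq_addEnergy (A B : Finset ℝ) : addE A B = A.addEnergy B := by
  rw [Finset.addEnergy, ← Set.ncard_coe_finset, addE]
  refine Set.ncard_congr (fun x _ => ((x.1, x.2.1), (x.2.2.2, x.2.2.1))) ?_ ?_ ?_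
  · rintro ⟨a, a', b, b'⟩ ⟨ha, ha', hb, hb', h⟩
    simp only [Finset.coe_filter, Finset.mem_product, Set.mem_ofPred_eq]
    exact ⟨⟨⟨ha, ha'⟩, hb', hb⟩, sub_eq_sub_iff_add_eq_add.1 h⟩
  · rintro ⟨a, a', b, b'⟩ ⟨c, c', d, d'⟩ _ _ h
    grind
  · rintro ⟨⟨a, a'⟩, b', b⟩ h
    obtain ⟨hmem, h⟩ := Finset.mem_filter.1 h
    simp only [Finset.mem_product] at hmem
    exact ⟨(a, a', b, b'), ⟨hmem.1.1, hmem.1.2, hmem.2.2, hmem.2.1,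
      sub_eq_sub_iff_add_eq_add.2 h⟩, rfl⟩

/-- **Theorem 1.11** (asymmetric additive energy under few products): there are absolute
constants `c > 0` and `C ≥ 1` such that for all `M ≥ 1` and all finite nonempty
`A, B ⊆ ℝ` with `|AA| ≤ M|A|` and `|A| ≤ |B|²`, one has
`E⁺(A,B) ≤ C·M^C·|B|^{5/3}·|A|^{5/6−c}`. -/
theorem asymmetric_additive_energy :
    ∃ c C : ℝ, 0 < c ∧ 1 ≤ C ∧
      ∀ M : ℝ, 1 ≤ M →
        ∀ A B : Finset ℝ, A.Nonempty → B.Nonempty →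
          ((A * A).card : ℝ) ≤ M * (A.card : ℝ) →
          A.card ≤ B.card ^ 2 →
          (addE A B : ℝ) ≤
            C * M ^ C * (B.card : ℝ) ^ ((5 : ℝ) / 3) *
              (A.card : ℝ) ^ ((5 : ℝ) / 6 - c) := by
  refine ⟨1 / 36, 2 ^ 21, by norm_num, by norm_num, fun M hM A B _ _ hAA hAB => ?_⟩
  rw [addE_eq_addEnergy]
  refine (asymmetric_additive_energy_general hM hAA hAB).trans ?_
  gcongr
  rw [← Real.rpow_natCast]
  exact Real.rpow_le_rpow_of_exponent_le hM (by norm_num)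
end
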